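/- Let α, h ∈ ℝ with α > −2. Assume there is an open set U ⊆ ℝ² containing (α,h), a continuously differentiable map u* : U → (0,1) such that for every (a,b) ∈ U the point u*(a,b) is the unique maximizer over [0,1] of u ↦ (a/6)u³ + (h????) -/

import Mathlib

/-!
Write `p = u*(α, h)` and `λ = 1 - 2 α p² (1 - p)`. The critical equation is
`p = σ(h + α p²)` with `σ` the logistic function; differentiating it in `α` gives
`λ ∂_α u* = p³ (1 - p)`, and since the maximizer is nondecreasing in `α`, this forces `λ > 0`
(`TriCLT.crit_facts`). The limiting variance is therefore `3 p⁵ (1 - p) / λ`.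

The bulk of the argument concerns the edge-triangle model `H = (α / n) T + h E`. The input is
collected in `TriCLT.Iface`: observables with small discrete derivatives have small variance
compared with `n² + Var E`, and degrees and codegrees concentrate at `p n` and `p² n` with
probability `1 - o(n⁻²)`.
* For `α ≥ 0` (`TriCLT.iface_nonneg`) the model satisfies the FKG inequality, which gives the
  variance bound. The Gibbs variational principle, FKG and smearing in `h` yield the mean-field
  formula for the free energy; convexity in `h` transfers it to edge and cherry densities, and
  comparing the field `h` with `h ± t` gives exponential tails.
* For `-2 < α < 0` (`TriCLT.iface_neg`) Dobrushin's condition holds. It bounds covariances and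
  sixth moments, and the mean edge density is close to the fixed point because
  `u ↦ σ(h + α u²)` is decreasing on `[0, ∞)`.

Let `σ_e` be the conditional probability of the edge `e` given the others. The Glauber identity
`⟨(X_e - σ_e) g⟩ = ⟨σ_e (1 - σ_e) ∂_e g⟩` plays the role of Gaussian integration by parts.
Linearizing `∑ σ_e` around the constant codegree shows that `E - ∑ σ_e` equals
`λ (E - ⟨E⟩)` up to an error that is `o(n)` in `L²`. Hence `Var E = O(n²)`, and the characteristic
function of `(E - ⟨E⟩) / n` asymptotically solves the Gaussian ODE
`φ' = - p (1 - p) / (2 λ) t φ` (`TriCLT.tendsto_cf`). In the same way `T / n - p² E` has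
standard deviation `o(n)` (`TriCLT.vr_tri`), so `T` inherits the limit law of `E`.

The passage to `Ĥ = H - α {T / n}` uses that `{T / n}` becomes uniform and independent of the
edge fluctuation (`TriCLT.tendsto_ww` and Weyl's criterion). To see that
`⟨e^{it (E - ⟨E⟩) / n + i m T / n}⟩ → 0` for `m ≠ 0`, note that adding one edge multiplies the
character by about `ζ = e^{i m p²}`. If `ζ ≠ 1`, the Glauber response of `E` would be of order
`n²` instead of `n`. If `ζ = 1`, the same argument is run with `∑ (X_e - σ_e) b_e`, where `b_e`
is the centred relative codegree: its response is of order `∑ b_e²`, which is bounded below by a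
multiple of `n` (`TriCLT.exists_bb_sq`). Consequently the bounded density `e^{-α {T / n}}`
asymptotically does not affect the law of the edge fluctuation, and Lévy's continuity theorem
concludes.
-/

open MeasureTheory Filter ProbabilityTheory Topology

noncomputable section

/-- The edge set of the complete graph on `n` vertices: unordered pairs of distinct vertices. -/
abbrev Edge (n : ℕ) := {e : Sym2 (Fin n) // ¬ e.IsDiag}

/-- A configuration `x ∈ {0,1}^{E_n}`, i.e. a simple graph on `[n]`. -/
abbrev Config (n : ℕ) := Edge n → Bool

/-- `E(x)`: the number of edges of the configuration `x`. -/
def edgeCount (n : ℕ) (x : Config n) : ℕ :=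
  (Finset.univ.filter fun e : Edge n => x e).card

/-- `T(x)`: the number of triangles of the configuration `x` (one for each 3-element
set of vertices all of whose connecting edges are present). -/
def triangleCount (n : ℕ) (x : Config n) : ℕ :=
  ((Finset.powersetCard 3 (Finset.univ : Finset (Fin n))).filter
    (fun s => ∀ e : Edge n, (∀ v ∈ (e : Sym2 (Fin n)), v ∈ s) → x e)).card

/-- `⌊T(x)/n⌋` as a real number (natural division is floor division). -/
def floorTn (n : ℕ) (x : Config n) : ℝ := ((triangleCount n x / n : ℕ) : ℝ)

/-- `{T(x)/n}`: the fractional part of `T(x)/n`. -/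
def fracTn (n : ℕ) (x : Config n) : ℝ :=
  (triangleCount n x : ℝ) / n - floorTn n x

/-- The modified Hamiltonian `Ĥ_{n;α,h}(x) = α⌊T(x)/n⌋ + h E(x)`. -/
def hamHat (n : ℕ) (α h : ℝ) (x : Config n) : ℝ :=
  α * floorTn n x + h * (edgeCount n x : ℝ)

/-- The edge-triangle Hamiltonian `H_{n;α,h}(x) = (α/n) T(x) + h E(x)`. -/
def ham (n : ℕ) (α h : ℝ) (x : Config n) : ℝ :=
  (α / n) * (triangleCount n x : ℝ) + h * (edgeCount n x : ℝ)

/-- The partition function `Ẑ_{n;α,h}`. -/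
def Zhat (n : ℕ) (α h : ℝ) : ℝ := ∑ x : Config n, Real.exp (hamHat n α h x)

/-- The partition function `Z_{n;α,h}`. -/
def Zet (n : ℕ) (α h : ℝ) : ℝ := ∑ x : Config n, Real.exp (ham n α h x)

/-- Expectation `Ê_{n;α,h}` with respect to the Gibbs measure of `Ĥ`. -/
def expHat (n : ℕ) (α h : ℝ) (f : Config n → ℝ) : ℝ :=
  (∑ x : Config n, f x * Real.exp (hamHat n α h x)) / Zhat n α h

/-- Expectation `E_{n;α,h}` with respect to the Gibbs measure of `H`. -/
def expEt (n : ℕ) (α h : ℝ) (f : Config n → ℝ) : ℝ :=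
  (∑ x : Config n, f x * Real.exp (ham n α h x)) / Zet n α h

/-- Variance `V̂ar_{n;α,h}` with respect to the Gibbs measure of `Ĥ`. -/
def varHat (n : ℕ) (α h : ℝ) (f : Config n → ℝ) : ℝ :=
  expHat n α h (fun x => (f x - expHat n α h f) ^ 2)

/-- Probability of an event under the Gibbs measure of `Ĥ`. -/
def probHat (n : ℕ) (α h : ℝ) (A : Config n → Prop) : ℝ :=
  expHat n α h (fun x => Set.indicator {y | A y} (fun _ => (1 : ℝ)) x)

/-- `I(u) = u ln u + (1-u) ln (1-u)` (with the convention `ln 0 = 0`, so `I(0)=I(1)=0`). -/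
def Ifun (u : ℝ) : ℝ := u * Real.log u + (1 - u) * Real.log (1 - u)

/-- The variational functional `u ↦ (a/6)u³ + (b/2)u − (1/2)I(u)`. -/
def phiET (a b u : ℝ) : ℝ := a / 6 * u ^ 3 + b / 2 * u - 1 / 2 * Ifun u

/-- The limiting free energy `f_{a,b} = sup_{u∈[0,1]} φ_{a,b}(u)`. -/
def freeEnergy (a b : ℝ) : ℝ := sSup (phiET a b '' Set.Icc 0 1)

/-- `W_n` built from the integer part of the normalized triangle count. -/
def Wfl (n : ℕ) (α h : ℝ) (x : Config n) : ℝ :=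
  Real.sqrt 6 * (floorTn n x - expHat n α h (floorTn n)) / n

/-- `√6 (T(x)/n − Ê(T/n))/n`, the normalized fluctuation of the triangle density. -/
def Wre (n : ℕ) (α h : ℝ) (x : Config n) : ℝ :=
  Real.sqrt 6 * ((triangleCount n x : ℝ) / n
    - expHat n α h (fun y => (triangleCount n y : ℝ) / n)) / n

/-- The scaled cumulant generating function of `⌊T/n⌋`. -/
def cgf (n : ℕ) (α h : ℝ) (t : ℝ) : ℝ :=
  6 / (n : ℝ) ^ 2 * Real.log (expHat n α h (fun x => Real.exp (t * floorTn n x)))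

set_option linter.unusedSectionVars false

namespace TriCLT

/-! ### Gibbs measures on the discrete cube -/

section Gibbs

variable {I : Type*} [Fintype I] [DecidableEq I]
variable {F : Type*} [NormedAddCommGroup F] [NormedSpace ℝ F]

/-- The partition function of a Hamiltonian on the cube `I → Bool`. -/
def pf (H : (I → Bool) → ℝ) : ℝ := ∑ x, Real.exp (H x)

/-- The Gibbs average of a vector-valued observable. -/
def av (H : (I → Bool) → ℝ) (f : (I → Bool) → F) : F :=
  (pf H)⁻¹ • ∑ x, Real.exp (H x) • f x

/-- The configuration `x` with the coordinate `i` switched on. -/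
def up (i : I) (x : I → Bool) : I → Bool := Function.update x i true

/-- The configuration `x` with the coordinate `i` switched off. -/
def dn (i : I) (x : I → Bool) : I → Bool := Function.update x i false

/-- The discrete derivative in the coordinate `i`; the result does not depend on `x i`. -/
def dd (i : I) (f : (I → Bool) → F) (x : I → Bool) : F := f (up i x) - f (dn i x)

/-- The indicator that the coordinate `i` is on. -/
def ind (i : I) (x : I → Bool) : ℝ := if x i then 1 else 0

/-- The conditional probability that the coordinate `i` is on, given all the others. -/
def sg (H : (I → Bool) → ℝ) (i : I) (x : I → Bool) : ℝ := Real.sigmoid (dd i H x)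

/-- The number of coordinates that are on. -/
def tot (x : I → Bool) : ℝ := ∑ i, ind i x

/-- Covariance under the Gibbs measure. -/
def cov (H : (I → Bool) → ℝ) (f g : (I → Bool) → ℝ) : ℝ :=
  av H (fun x => f x * g x) - av H f * av H g

/-- Variance under the Gibbs measure. -/
def vr (H : (I → Bool) → ℝ) (f : (I → Bool) → ℝ) : ℝ := cov H f f

@[simp] lemma up_up (i : I) (x) : up i (up i x) = up i x := by simp [up]
@[simp] lemma up_dn (i : I) (x) : up i (dn i x) = up i x := by simp [up, dn]
@[simp] lemma dn_up (i : I) (x) : dn i (up i x) = dn i x := by simp [up, dn]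
@[simp] lemma dn_dn (i : I) (x) : dn i (dn i x) = dn i x := by simp [dn]
@[simp] lemma dd_up (i : I) (f : (I → Bool) → F) (x) : dd i f (up i x) = dd i f x := by simp [dd]
@[simp] lemma dd_dn (i : I) (f : (I → Bool) → F) (x) : dd i f (dn i x) = dd i f x := by simp [dd]
@[simp] lemma ind_up (i : I) (x) : ind i (up i x) = 1 := by simp [ind, up]
@[simp] lemma ind_dn (i : I) (x) : ind i (dn i x) = 0 := by simp [ind, dn]
@[simp] lemma sg_up (H : (I → Bool) → ℝ) (i : I) (x) : sg H i (up i x) = sg H i x := by simp [sg]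
@[simp] lemma sg_dn (H : (I → Bool) → ℝ) (i : I) (x) : sg H i (dn i x) = sg H i x := by simp [sg]

lemma ind_up_ne {i j : I} (h : i ≠ j) (x) : ind i (up j x) = ind i x := by simp [ind, up, h]
lemma ind_dn_ne {i j : I} (h : i ≠ j) (x) : ind i (dn j x) = ind i x := by simp [ind, dn, h]
lemma ind_nonneg (i : I) (x) : 0 ≤ ind i x := by unfold ind; split_ifs <;> norm_num
lemma ind_le_one (i : I) (x) : ind i x ≤ 1 := by unfold ind; split_ifs <;> norm_num
lemma ind_sq (i : I) (x) : ind i x * ind i x = ind i x := by unfold ind; split_ifs <;> norm_num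

lemma up_or_dn (i : I) (x : I → Bool) :
    (ind i x = 1 ∧ up i x = x) ∨ (ind i x = 0 ∧ dn i x = x) := by
  rcases hx : x i with _ | _
  · right; refine ⟨by simp [ind, hx], ?_⟩
    rw [dn, ← hx, Function.update_eq_self]
  · left; refine ⟨by simp [ind, hx], ?_⟩
    rw [up, ← hx, Function.update_eq_self]

lemma eq_ind (i : I) (f : (I → Bool) → F) (x) : f x = f (dn i x) + ind i x • dd i f x := by
  rcases up_or_dn i x with ⟨h1, h2⟩ | ⟨h1, h2⟩
  · rw [h1, dd, h2]; simp
  · rw [h1, h2]; simp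

lemma up_comm {i j : I} (h : i ≠ j) (x) : up i (up j x) = up j (up i x) := by
  simp only [up]; rw [Function.update_comm h]
lemma dn_comm {i j : I} (h : i ≠ j) (x) : dn i (dn j x) = dn j (dn i x) := by
  simp only [dn]; rw [Function.update_comm h]
lemma up_dn_comm {i j : I} (h : i ≠ j) (x) : up i (dn j x) = dn j (up i x) := by
  simp only [up, dn]; rw [Function.update_comm h]

lemma dd_comm (i j : I) (f : (I → Bool) → F) (x) : dd i (dd j f) x = dd j (dd i f) x := by
  by_cases h : i = j
  · subst h; rfl
  · simp only [dd, up_comm h, dn_comm h, up_dn_comm h, up_dn_comm (Ne.symm h)]; abel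

@[simp] lemma dd_dd_self (i : I) (f : (I → Bool) → F) (x) : dd i (dd i f) x = 0 := by
  simp [dd]

lemma dd_ind (i j : I) (x) : dd i (ind j) x = if i = j then 1 else 0 := by
  by_cases h : i = j
  · subst h; simp [dd]
  · simp [dd, ind_up_ne (Ne.symm h), ind_dn_ne (Ne.symm h), h]

lemma dd_sum {K : Type*} (s : Finset K) (f : K → (I → Bool) → F) (i : I) (x) :
    dd i (fun y => ∑ k ∈ s, f k y) x = ∑ k ∈ s, dd i (f k) x := by
  simp [dd]

lemma dd_tot (i : I) (x) : dd i (tot : (I → Bool) → ℝ) x = 1 := by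
  unfold tot; rw [dd_sum]; simp [dd_ind]

lemma tot_nonneg (x : I → Bool) : 0 ≤ tot x := Finset.sum_nonneg fun i _ => ind_nonneg i x
lemma tot_le (x : I → Bool) : tot x ≤ Fintype.card I :=
  (Finset.sum_le_sum fun i _ => ind_le_one i x).trans (by simp)

lemma sg_pos (H : (I → Bool) → ℝ) (i x) : 0 < sg H i x := Real.sigmoid_pos _
lemma sg_lt_one (H : (I → Bool) → ℝ) (i x) : sg H i x < 1 := Real.sigmoid_lt_one _
lemma sg_var_nonneg (H : (I → Bool) → ℝ) (i x) : 0 ≤ sg H i x * (1 - sg H i x) :=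
  mul_nonneg (sg_pos H i x).le (by linarith [sg_lt_one H i x])
lemma sg_var_le (H : (I → Bool) → ℝ) (i x) : sg H i x * (1 - sg H i x) ≤ 1 / 4 := by
  nlinarith [sq_nonneg (sg H i x - 1 / 2)]

/-! ### Averages -/

variable (H : (I → Bool) → ℝ)

lemma pf_pos : 0 < pf H := Finset.sum_pos (fun _ _ => Real.exp_pos _) Finset.univ_nonempty

lemma av_add (f g : (I → Bool) → F) : av H (fun x => f x + g x) = av H f + av H g := by
  simp [av, Finset.sum_add_distrib]

lemma av_neg (f : (I → Bool) → F) : av H (fun x => - f x) = - av H f := by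
  simp [av]

lemma av_sub (f g : (I → Bool) → F) : av H (fun x => f x - g x) = av H f - av H g := by
  simp [av, smul_sub]

lemma av_sum {K : Type*} (s : Finset K) (f : K → (I → Bool) → F) :
    av H (fun x => ∑ k ∈ s, f k x) = ∑ k ∈ s, av H (f k) := by
  simp only [av, Finset.smul_sum]
  rw [Finset.sum_comm]

lemma av_const (c : F) : av H (fun _ => c) = c := by
  rw [av, ← Finset.sum_smul, smul_smul]
  change ((pf H)⁻¹ * pf H) • c = c
  rw [inv_mul_cancel₀ (pf_pos H).ne', one_smul]

lemma av_smul (c : ℝ) (f : (I → Bool) → F) : av H (fun x => c • f x) = c • av H f := by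
  simp only [av, Finset.smul_sum]
  refine Finset.sum_congr rfl fun x _ => ?_
  rw [smul_comm (Real.exp _) c, smul_comm _ c]

lemma av_mul (c : ℝ) (f : (I → Bool) → ℝ) : av H (fun x => c * f x) = c * av H f :=
  av_smul H c f

lemma av_mulc (c : ℂ) (f : (I → Bool) → ℂ) : av H (fun x => c * f x) = c * av H f := by
  simp only [av, Finset.smul_sum, Finset.mul_sum]
  refine Finset.sum_congr rfl fun x _ => ?_
  simp only [Complex.real_smul]; ring

lemma av_congr {f g : (I → Bool) → F} (h : ∀ x, f x = g x) : av H f = av H g := by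
  rw [show f = g from funext h]

lemma av_mono {f g : (I → Bool) → ℝ} (h : ∀ x, f x ≤ g x) : av H f ≤ av H g := by
  simp only [av, smul_eq_mul]
  have := pf_pos H
  gcongr with x
  exact h x

lemma av_nonneg {f : (I → Bool) → ℝ} (h : ∀ x, 0 ≤ f x) : 0 ≤ av H f := by
  have := av_mono H h; rwa [av_const] at this

lemma av_le_const {f : (I → Bool) → ℝ} {c : ℝ} (h : ∀ x, f x ≤ c) : av H f ≤ c := by
  have := av_mono H h; rwa [av_const] at this

lemma const_le_av {f : (I → Bool) → ℝ} {c : ℝ} (h : ∀ x, c ≤ f x) : c ≤ av H f := by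
  have := av_mono H h; rwa [av_const] at this

lemma norm_av_le (f : (I → Bool) → F) : ‖av H f‖ ≤ av H (fun x => ‖f x‖) := by
  simp only [av, smul_eq_mul]
  rw [norm_smul, Real.norm_of_nonneg (inv_nonneg.2 (pf_pos H).le)]
  have := pf_pos H
  gcongr
  refine (norm_sum_le _ _).trans (Finset.sum_le_sum fun x _ => ?_)
  rw [norm_smul, Real.norm_of_nonneg (Real.exp_pos _).le]

lemma norm_av_le_of {f : (I → Bool) → F} {g : (I → Bool) → ℝ} (h : ∀ x, ‖f x‖ ≤ g x) :
    ‖av H f‖ ≤ av H g := (norm_av_le H f).trans (av_mono H h)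

lemma abs_av_le (f : (I → Bool) → ℝ) : |av H f| ≤ av H (fun x => |f x|) := norm_av_le H f

lemma av_cs (f g : (I → Bool) → ℝ) :
    (av H (fun x => f x * g x)) ^ 2 ≤ av H (fun x => f x ^ 2) * av H (fun x => g x ^ 2) := by
  simp only [av, smul_eq_mul]
  have h := Finset.sum_mul_sq_le_sq_mul_sq Finset.univ
    (fun x => Real.sqrt (Real.exp (H x)) * f x) (fun x => Real.sqrt (Real.exp (H x)) * g x)
  have e : ∀ x : I → Bool, Real.sqrt (Real.exp (H x)) ^ 2 = Real.exp (H x) := fun x =>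
    Real.sq_sqrt (Real.exp_pos _).le
  have e1 : ∀ x : I → Bool, Real.sqrt (Real.exp (H x)) * f x * (Real.sqrt (Real.exp (H x)) * g x)
      = Real.exp (H x) * (f x * g x) := fun x => by rw [← e x]; ring_nf; simp
  simp only [mul_pow, e, e1] at h
  have := pf_pos H
  rw [mul_pow]
  have h3 := mul_le_mul_of_nonneg_left h (sq_nonneg (pf H)⁻¹)
  refine h3.trans (le_of_eq (by ring))

lemma av_abs_le_sqrt (f : (I → Bool) → ℝ) :
    av H (fun x => |f x|) ≤ Real.sqrt (av H (fun x => f x ^ 2)) := by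
  apply Real.le_sqrt_of_sq_le
  have := av_cs H (fun x => |f x|) (fun _ => 1)
  simpa [av_const] using this

lemma vr_eq (f : (I → Bool) → ℝ) : vr H f = av H (fun x => (f x - av H f) ^ 2) := by
  have : ∀ x, (f x - av H f) ^ 2 = f x * f x - 2 * av H f * f x + av H f ^ 2 := fun x => by ring
  rw [av_congr H this, av_add, av_sub, av_mul, av_const, vr, cov]; ring

lemma vr_nonneg (f : (I → Bool) → ℝ) : 0 ≤ vr H f := by
  rw [vr_eq]; exact av_nonneg H fun x => sq_nonneg _

lemma vr_le (f : (I → Bool) → ℝ) (c : ℝ) : vr H f ≤ av H (fun x => (f x - c) ^ 2) := by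
  have : ∀ x, (f x - c) ^ 2 = f x * f x - 2 * c * f x + c ^ 2 := fun x => by ring
  rw [av_congr H this, av_add, av_sub, av_mul, av_const, vr, cov]
  nlinarith [sq_nonneg (av H f - c)]

lemma vr_le_sq (f : (I → Bool) → ℝ) : vr H f ≤ av H (fun x => f x ^ 2) := by
  simpa using vr_le H f 0

lemma vr_add_const (f : (I → Bool) → ℝ) (c : ℝ) : vr H (fun x => f x + c) = vr H f := by
  rw [vr_eq, vr_eq, av_add, av_const]; congr 1; funext x; ring

lemma vr_mul (f : (I → Bool) → ℝ) (c : ℝ) : vr H (fun x => c * f x) = c ^ 2 * vr H f := by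
  rw [vr_eq, vr_eq, ← av_mul, av_mul]; congr 1; funext x; ring

lemma vr_add_le (f g : (I → Bool) → ℝ) :
    vr H (fun x => f x + g x) ≤ 2 * vr H f + 2 * vr H g := by
  rw [vr_eq, vr_eq, vr_eq, ← av_mul, ← av_mul, ← av_add, av_add H f g]
  exact av_mono H fun x => by nlinarith [sq_nonneg ((f x - av H f) - (g x - av H g))]

lemma cov_comm (f g : (I → Bool) → ℝ) : cov H f g = cov H g f := by
  unfold cov; rw [mul_comm (av H f)]; congr 1; exact av_congr H fun x => mul_comm _ _

lemma cov_add_left (f f' g : (I → Bool) → ℝ) :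
    cov H (fun x => f x + f' x) g = cov H f g + cov H f' g := by
  simp only [cov, add_mul, av_add]; ring

lemma cov_sub_left (f f' g : (I → Bool) → ℝ) :
    cov H (fun x => f x - f' x) g = cov H f g - cov H f' g := by
  simp only [cov, sub_mul, av_sub]; ring

lemma cov_sub_right (f g g' : (I → Bool) → ℝ) :
    cov H f (fun x => g x - g' x) = cov H f g - cov H f g' := by
  rw [cov_comm, cov_sub_left, cov_comm, cov_comm H g']

lemma cov_add_right (f g g' : (I → Bool) → ℝ) :
    cov H f (fun x => g x + g' x) = cov H f g + cov H f g' := by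
  rw [cov_comm, cov_add_left, cov_comm, cov_comm H g']

lemma cov_mul_left (c : ℝ) (f g : (I → Bool) → ℝ) :
    cov H (fun x => c * f x) g = c * cov H f g := by
  simp only [cov, mul_assoc, av_mul]; ring

lemma cov_sum_left {K : Type*} (s : Finset K) (f : K → (I → Bool) → ℝ) (g : (I → Bool) → ℝ) :
    cov H (fun x => ∑ k ∈ s, f k x) g = ∑ k ∈ s, cov H (f k) g := by
  simp only [cov, Finset.sum_mul, av_sum, Finset.sum_sub_distrib]

lemma cov_center (f g : (I → Bool) → ℝ) :
    cov H f g = av H (fun x => (f x - av H f) * (g x - av H g)) := by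
  have : ∀ x, (f x - av H f) * (g x - av H g)
      = f x * g x - av H g * f x - av H f * g x + av H f * av H g := fun x => by ring
  rw [av_congr H this, av_add, av_sub, av_sub, av_mul, av_mul, av_const, cov]; ring

lemma cov_sq_le (f g : (I → Bool) → ℝ) : cov H f g ^ 2 ≤ vr H f * vr H g := by
  rw [cov_center, vr_eq, vr_eq]; exact av_cs H _ _

/-- Chebyshev's inequality in the form used for indicator functions. -/
lemma av_indicator_le {P : (I → Bool) → Prop} [DecidablePred P] {g : (I → Bool) → ℝ} {c : ℝ}
    (hc : 0 < c) (hg : ∀ x, 0 ≤ g x) (h : ∀ x, P x → c ≤ g x) :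
    av H (fun x => if P x then (1 : ℝ) else 0) ≤ av H g / c := by
  rw [le_div_iff₀ hc, mul_comm, ← av_mul]
  refine av_mono H fun x => ?_
  split_ifs with hx
  · simpa using h x hx
  · simpa using hg x

/-! ### Conditioning on one coordinate -/

lemma sum_pair (i : I) (G : (I → Bool) → F) :
    (2 : ℝ) • ∑ x, G x = ∑ x, (G (up i x) + G (dn i x)) := by
  have hinv : Function.Involutive (fun x : I → Bool => Function.update x i (!(x i))) := by
    intro x; simp
  have h1 : ∑ x, G (Function.update x i (!(x i))) = ∑ x, G x :=
    Equiv.sum_comp hinv.toPerm G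
  rw [two_smul]
  nth_rw 2 [← h1]
  rw [← Finset.sum_add_distrib]
  refine Finset.sum_congr rfl fun x _ => ?_
  rcases hx : x i with _ | _
  · have : dn i x = x := by rw [dn, ← hx, Function.update_eq_self]
    rw [this, add_comm]; simp [up]
  · have : up i x = x := by rw [up, ← hx, Function.update_eq_self]
    rw [this]; simp [dn]

lemma sum_congr_pair (i : I) {G G' : (I → Bool) → F}
    (h : ∀ x, G (up i x) + G (dn i x) = G' (up i x) + G' (dn i x)) :
    ∑ x, G x = ∑ x, G' x := by
  have : (2 : ℝ) • ∑ x, G x = (2 : ℝ) • ∑ x, G' x := by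
    rw [sum_pair i, sum_pair i]; exact Finset.sum_congr rfl fun x _ => h x
  exact smul_right_injective F (two_ne_zero (α := ℝ)) this

lemma exp_up_dn (i : I) (x : I → Bool) :
    Real.exp (H (up i x)) * (1 - sg H i x) = Real.exp (H (dn i x)) * sg H i x := by
  have h := Real.sigmoid_mul_rexp_neg (dd i H x)
  rw [Real.sigmoid_neg] at h
  rw [sg, ← h, mul_left_comm, ← Real.exp_add, mul_comm]
  congr 2; simp [dd]

/-- The integration-by-parts (Glauber) identity: the discrete analogue of Gaussian integration by
parts for a single coordinate. -/
lemma glauber (i : I) (g : (I → Bool) → F) :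
    av H (fun x => (ind i x - sg H i x) • g x)
      = av H (fun x => (sg H i x * (1 - sg H i x)) • dd i g x) := by
  unfold av
  congr 1
  refine sum_congr_pair i fun x => ?_
  simp only [ind_up, ind_dn, sg_up, sg_dn, dd_up, dd_dn, smul_smul]
  rw [← add_smul, dd, smul_sub]
  have h := exp_up_dn H i x
  have h1 : Real.exp (H (up i x)) * (sg H i x * (1 - sg H i x))
      + Real.exp (H (dn i x)) * (sg H i x * (1 - sg H i x))
      = Real.exp (H (up i x)) * (1 - sg H i x) := by
    linear_combination (-(1 - sg H i x)) * h
  have h2 : Real.exp (H (up i x)) * (1 - sg H i x) = - (Real.exp (H (dn i x)) * (0 - sg H i x)) := by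
    linear_combination h
  rw [h1]
  nth_rw 3 [h2]
  rw [neg_smul, sub_neg_eq_add]

lemma glauber_mul (i : I) (g : (I → Bool) → ℝ) :
    av H (fun x => (ind i x - sg H i x) * g x)
      = av H (fun x => sg H i x * (1 - sg H i x) * dd i g x) := glauber H i g

lemma av_ind_eq (i : I) : av H (ind i) = av H (sg H i) := by
  have := glauber_mul H i (fun _ => 1)
  simp only [mul_one, dd, sub_self, mul_zero, av_const, av_sub] at this
  linarith

/-- `Σ_i (X_i - σ_i)` tested against `g`. -/
lemma glauber_sum (g : (I → Bool) → F) :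
    av H (fun x => (tot x - ∑ i, sg H i x) • g x)
      = ∑ i, av H (fun x => (sg H i x * (1 - sg H i x)) • dd i g x) := by
  rw [← Finset.sum_congr rfl fun i _ => glauber H i g, ← av_sum]
  refine av_congr H fun x => ?_
  rw [← Finset.sum_smul, Finset.sum_sub_distrib]; rfl

/-! ### The Gibbs variational inequality -/

/-- Jensen's inequality for the partition function. -/
lemma log_pf_ge (H' : (I → Bool) → ℝ) :
    Real.log (pf H) + av H (fun x => H' x - H x) ≤ Real.log (pf H') := by
  set m := av H (fun x => H' x - H x)
  have h1 : pf H' = pf H * av H (fun x => Real.exp (H' x - H x)) := by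
    simp only [av, smul_eq_mul, ← Real.exp_add]
    rw [← mul_assoc, mul_inv_cancel₀ (pf_pos H).ne', one_mul]
    simp [pf]
  have h2 : Real.exp m ≤ av H (fun x => Real.exp (H' x - H x)) := by
    have : av H (fun x => Real.exp m * ((H' x - H x) - m + 1)) ≤
        av H (fun x => Real.exp (H' x - H x)) := by
      refine av_mono H fun x => ?_
      have := Real.add_one_le_exp ((H' x - H x) - m)
      calc _ ≤ Real.exp m * Real.exp ((H' x - H x) - m) := by gcongr
        _ = _ := by rw [← Real.exp_add]; ring_nf
    rw [av_mul, av_add, av_sub, av_const, av_const] at this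
    simpa [m] using this
  rw [h1, Real.log_mul (pf_pos H).ne' (lt_of_lt_of_le (Real.exp_pos _) h2).ne']
  gcongr
  rw [Real.le_log_iff_exp_le (lt_of_lt_of_le (Real.exp_pos _) h2)]
  exact h2

/-- A change of measure: the average for `H + w` in terms of that for `H`. -/
lemma av_tilt (w : (I → Bool) → ℝ) (f : (I → Bool) → F) :
    av (fun x => H x + w x) f
      = (av H (fun x => Real.exp (w x)))⁻¹ • av H (fun x => Real.exp (w x) • f x) := by
  have h1 : pf (fun x => H x + w x) = pf H * av H (fun x => Real.exp (w x)) := by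
    simp only [av, smul_eq_mul, ← Real.exp_add]
    rw [← mul_assoc, mul_inv_cancel₀ (pf_pos H).ne', one_mul]
    simp [pf]
  have h0 := (pf_pos H).ne'
  simp only [av, smul_smul, ← Real.exp_add] at h1 ⊢
  rw [h1]
  congr 1
  rw [mul_inv]
  field_simp

lemma av_exp_pos (w : (I → Bool) → ℝ) : 0 < av H (fun x => Real.exp (w x)) := by
  have h : 0 < pf H := pf_pos H
  simp only [av, smul_eq_mul]
  exact mul_pos (inv_pos.2 h) (Finset.sum_pos (fun x _ => by positivity) Finset.univ_nonempty)

/-- The exponential moment is controlled by the mean of the tilted measure. -/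
lemma av_exp_le (w : (I → Bool) → ℝ) :
    av H (fun x => Real.exp (w x)) ≤ Real.exp (av (fun x => H x + w x) w) := by
  have h1 : pf (fun x => H x + w x) = pf H * av H (fun x => Real.exp (w x)) := by
    simp only [av, smul_eq_mul, ← Real.exp_add]
    rw [← mul_assoc, mul_inv_cancel₀ (pf_pos H).ne', one_mul]
    simp [pf]
  have h := log_pf_ge (fun x => H x + w x) H
  rw [h1, Real.log_mul (pf_pos H).ne' (av_exp_pos H w).ne'] at h
  have h2 : av (fun x => H x + w x) (fun x => H x - (H x + w x))
      = - av (fun x => H x + w x) w := by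
    rw [← av_neg]; exact av_congr _ fun x => by ring
  rw [h2] at h
  rw [← Real.log_le_iff_le_exp (av_exp_pos H w)]
  linarith

end Gibbs

section Correlation

variable {I : Type*} [Fintype I] [DecidableEq I]
variable (H : (I → Bool) → ℝ)

/-! ### Positive correlation -/

lemma monotone_of_dd {f : (I → Bool) → ℝ} (h : ∀ i x, 0 ≤ dd i f x) : Monotone f := by
  intro x y hxy
  have key : ∀ s : Finset I, f x ≤ f (s.piecewise y x) := by
    intro s
    induction s using Finset.induction_on with
    | empty => simp
    | insert i s his ih =>
      refine ih.trans ?_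
      rw [Finset.piecewise_insert]
      set z := s.piecewise y x
      have hz : z i = x i := by simp [z, his]
      have h1 := h i z
      rcases hyi : y i with _ | _
      · have : x i = false := by
          have := hxy i; rw [hyi] at this; exact le_bot_iff.1 this
        rw [show Function.update z i false = z by rw [← this, ← hz, Function.update_eq_self]]
      · change _ ≤ f (up i z)
        rcases up_or_dn i z with ⟨_, h2⟩ | ⟨_, h2⟩
        · rw [h2]
        · rw [dd, h2] at h1; linarith
  simpa using key Finset.univ

lemma monotone_tot_sub {f : (I → Bool) → ℝ} {D : ℝ} (h : ∀ i x, dd i f x ≤ D) :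
    Monotone fun x => D * tot x - f x := monotone_of_dd fun i x => by
  have h1 := dd_tot i x
  have h2 := h i x
  simp only [dd] at h1 h2 ⊢
  linear_combination h2 - D * h1

lemma monotone_tot_add {f : (I → Bool) → ℝ} {D : ℝ} (h : ∀ i x, -D ≤ dd i f x) :
    Monotone fun x => D * tot x + f x := monotone_of_dd fun i x => by
  have h1 := dd_tot i x
  have h2 := h i x
  simp only [dd] at h1 h2 ⊢
  linear_combination h2 - D * h1

lemma osc_le {f : (I → Bool) → ℝ} {D : ℝ} (h : ∀ i x, |dd i f x| ≤ D) (x : I → Bool) :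
    |f x - f ⊥| ≤ D * Fintype.card I := by
  have hD : ∀ i : I, 0 ≤ D := fun i => (abs_nonneg _).trans (h i ⊥)
  have hDt : D * tot x ≤ D * Fintype.card I := by
    rcases isEmpty_or_nonempty I with _ | ⟨⟨i⟩⟩
    · simp [tot]
    · exact mul_le_mul_of_nonneg_left (tot_le x) (hD i)
  have h0 : tot (⊥ : I → Bool) = 0 := by simp [tot, ind]
  have m1 : Monotone fun x => D * tot x - f x :=
    monotone_tot_sub fun i x => (abs_le.1 (h i x)).2
  have m2 : Monotone fun x => D * tot x + f x :=
    monotone_tot_add fun i x => (abs_le.1 (h i x)).1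
  have h1 := m1 (bot_le : ⊥ ≤ x)
  have h2 := m2 (bot_le : ⊥ ≤ x)
  simp only [h0] at h1 h2
  rw [abs_le]; constructor <;> linarith

/-- Supermodularity, i.e. log-supermodularity of the Gibbs weight. -/
def Supermod (H : (I → Bool) → ℝ) : Prop := ∀ a b, H a + H b ≤ H (a ⊓ b) + H (a ⊔ b)

variable {H}

/-- The FKG inequality. -/
lemma cov_nonneg (hH : Supermod H) {f g : (I → Bool) → ℝ} (hf : Monotone f) (hg : Monotone g) :
    0 ≤ cov H f g := by
  have h := fkg (μ := fun x => Real.exp (H x)) (f := fun x => f x - f ⊥) (g := fun x => g x - g ⊥)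
    (fun x => (Real.exp_pos _).le) (fun x => sub_nonneg.2 (hf bot_le))
    (fun x => sub_nonneg.2 (hg bot_le)) (fun a b hab => sub_le_sub_right (hf hab) _)
    (fun a b hab => sub_le_sub_right (hg hab) _)
    (fun a b => by rw [← Real.exp_add, ← Real.exp_add]; exact Real.exp_le_exp.2 (hH a b))
  have hp := pf_pos H
  have e : ∀ k : (I → Bool) → ℝ, ∑ x, Real.exp (H x) * k x = pf H * av H k := fun k => by
    simp only [av, smul_eq_mul]; rw [← mul_assoc, mul_inv_cancel₀ hp.ne', one_mul]
  rw [e, e, e] at h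
  have h2 : cov H f g = cov H (fun x => f x - f ⊥) (fun x => g x - g ⊥) := by
    rw [cov_center, cov_center]; simp only [av_sub, av_const]; congr 1; funext x; ring
  rw [h2, cov]
  have h3 : 0 < pf H * pf H := by positivity
  change pf H * _ * (pf H * _) ≤ pf H * (pf H * _) at h
  nlinarith

lemma av_mul_ge (hH : Supermod H) {f g : (I → Bool) → ℝ} (hf : Monotone f) (hg : Monotone g) :
    av H f * av H g ≤ av H (fun x => f x * g x) := by
  have := cov_nonneg hH hf hg; unfold cov at this; linarith

/-- Among observables whose discrete derivatives are at most `ε`, the multiple `ε · tot` has the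
largest variance. -/
lemma vr_le_of_fkg (hH : Supermod H) {f : (I → Bool) → ℝ} {ε : ℝ} (h : ∀ i x, |dd i f x| ≤ ε) :
    vr H f ≤ ε ^ 2 * vr H tot := by
  have m1 : Monotone fun x => ε * tot x - f x :=
    monotone_tot_sub fun i x => (abs_le.1 (h i x)).2
  have m2 : Monotone fun x => ε * tot x + f x :=
    monotone_tot_add fun i x => (abs_le.1 (h i x)).1
  have := cov_nonneg hH m2 m1
  rw [cov_add_left, cov_sub_right, cov_sub_right, cov_comm H f (fun x => ε * tot x)] at this
  have h3 : cov H (fun x => ε * tot x) (fun x => ε * tot x) = ε ^ 2 * vr H tot := vr_mul H tot ε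
  unfold vr at *; linarith

/-- Tilting by an increasing function raises the averages of increasing observables. -/
lemma av_le_tilt (hH : Supermod H) {f w : (I → Bool) → ℝ} (hf : Monotone f) (hw : Monotone w) :
    av H f ≤ av (fun x => H x + w x) f := by
  rw [av_tilt, smul_eq_mul, inv_mul_eq_div, le_div_iff₀ (av_exp_pos H w)]
  have := av_mul_ge hH hf (g := fun x => Real.exp (w x)) fun a b hab => Real.exp_le_exp.2 (hw hab)
  simpa [mul_comm] using this

lemma tilt_le_av (hH : Supermod H) {f w : (I → Bool) → ℝ} (hf : Monotone f) (hw : Antitone w) :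
    av (fun x => H x + w x) f ≤ av H f := by
  rw [av_tilt, smul_eq_mul, inv_mul_eq_div, div_le_iff₀ (av_exp_pos H w)]
  have := av_mul_ge hH hf (g := fun x => - Real.exp (w x))
    fun a b hab => neg_le_neg (Real.exp_le_exp.2 (hw hab))
  simp only [av_neg, mul_neg] at this
  simp only [smul_eq_mul]
  rw [show av H (fun x => Real.exp (w x) * f x) = av H (fun x => f x * Real.exp (w x)) from
    av_congr H fun x => mul_comm _ _]
  linarith

/-! ### Weak dependence -/

variable (H)

/-- One step of the heat-bath dynamics at the coordinate `i`. -/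
def hb (i : I) (f : (I → Bool) → ℝ) (x : I → Bool) : ℝ :=
  f (dn i x) + sg H i x * dd i f x

lemma sub_hb (i : I) (f : (I → Bool) → ℝ) (x) :
    f x - hb H i f x = (ind i x - sg H i x) * dd i f x := by
  have := eq_ind i f x
  rw [smul_eq_mul] at this
  rw [hb]; linarith

lemma av_sub_hb (i : I) (f g : (I → Bool) → ℝ) :
    av H (fun x => (f x - hb H i f x) * g x)
      = av H (fun x => sg H i x * (1 - sg H i x) * (dd i f x * dd i g x)) := by
  have h := glauber_mul H i (fun x => dd i f x * g x)
  rw [show av H (fun x => (f x - hb H i f x) * g x)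
    = av H (fun x => (ind i x - sg H i x) * (dd i f x * g x)) from
    av_congr H fun x => by rw [sub_hb]; ring, h]
  refine av_congr H fun x => ?_
  have : dd i (fun x => dd i f x * g x) x = dd i f x * dd i g x := by
    rw [dd, dd_up, dd_dn]; simp only [dd]; ring
  rw [this]

lemma av_hb (i : I) (f : (I → Bool) → ℝ) : av H (hb H i f) = av H f := by
  have := av_sub_hb H i f (fun _ => 1)
  simp only [mul_one, dd, sub_self, mul_zero, av_const, av_sub] at this
  linarith

lemma sigmoid_lip (a b : ℝ) : |Real.sigmoid a - Real.sigmoid b| ≤ 1 / 4 * |a - b| := by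
  have := Convex.norm_image_sub_le_of_norm_deriv_le (f := Real.sigmoid) (C := 1 / 4)
    (s := Set.univ) (x := b) (y := a) (fun x _ => differentiable_sigmoid x) (fun x _ => by
      rw [Real.deriv_sigmoid, Real.norm_eq_abs, abs_of_nonneg]
      · nlinarith [sq_nonneg (Real.sigmoid x - 1 / 2)]
      · exact mul_nonneg (Real.sigmoid_nonneg x) (by linarith [Real.sigmoid_le_one x]))
      convex_univ trivial trivial
  simpa using this

lemma dd_sg_le (i j : I) (x) : |dd j (sg H i) x| ≤ 1 / 4 * |dd j (dd i H) x| := sigmoid_lip _ _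

lemma dd_hb_le {f : (I → Bool) → ℝ} {D : ℝ} (h : ∀ i x, |dd i f x| ≤ D) (i j : I) (x) :
    |dd j (hb H i f) x| ≤ (if i = j then 0 else D) + D * (1 / 4 * |dd j (dd i H) x|) := by
  by_cases hij : i = j
  · subst hij
    simp [dd, hb]
  · rw [if_neg hij]
    have e : dd j (hb H i f) x = ((1 - sg H i (up j x)) * dd j f (dn i x)
        + sg H i (up j x) * dd j f (up i x)) + dd j (sg H i) x * dd i f (dn j x) := by
      simp only [dd, hb, up_comm (Ne.symm hij), dn_comm (Ne.symm hij), up_dn_comm hij,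
        up_dn_comm (Ne.symm hij)]
      ring
    rw [e]
    have h1 := h j (dn i x)
    have h2 := h j (up i x)
    have s1 := (sg_pos H i (up j x)).le
    have s2 : 0 ≤ 1 - sg H i (up j x) := by linarith [sg_lt_one H i (up j x)]
    have h0 : 0 ≤ D := (abs_nonneg _).trans h1
    refine (abs_add_le _ _).trans (add_le_add ?_ ?_)
    · refine (abs_add_le _ _).trans ?_
      rw [abs_mul, abs_mul, abs_of_nonneg s1, abs_of_nonneg s2]
      nlinarith
    · rw [abs_mul, mul_comm D]
      exact mul_le_mul (dd_sg_le H i j x) (h i _) (abs_nonneg _) (by positivity)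

/-- A covariance bound under Dobrushin's uniqueness condition. -/
lemma cov_le_dobrushin {c : ℝ} (hc0 : 0 ≤ c) (hc : c < 1)
    (hH : ∀ j x, ∑ i, |dd j (dd i H) x| ≤ 4 * c)
    {f g : (I → Bool) → ℝ} {D : ℝ} (hD : 0 ≤ D) (hf : ∀ i x, |dd i f x| ≤ D) :
    |cov H f g| ≤ D / (4 * (1 - c)) * ∑ i, av H (fun x => |dd i g x|) := by
  set A := ∑ i, av H (fun x => |dd i g x|) with hA
  have hA0 : 0 ≤ A := Finset.sum_nonneg fun i _ => av_nonneg H fun x => abs_nonneg _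
  set N : ℝ := (Fintype.card I : ℝ) with hN
  set G := av H (fun x => |g x|) with hG
  have hG0 : 0 ≤ G := av_nonneg H fun x => abs_nonneg _
  have hN0 : 0 ≤ N := Nat.cast_nonneg _
  rcases hN0.eq_or_lt with hN1 | hNpos
  · -- without coordinates every observable is constant
    have : IsEmpty I := Fintype.card_eq_zero_iff.1 (by rw [hN] at hN1; exact_mod_cast hN1.symm)
    have h0 : cov H f g = 0 := by
      have e1 : f = fun _ => f ⊥ := funext fun x => by rw [Subsingleton.elim x ⊥]
      rw [cov_center, e1]; simp [av_const]
    rw [h0]; simp only [abs_zero]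
    have : 0 < 1 - c := by linarith
    positivity
  have hN1' : 1 ≤ N := by
    rw [hN] at hNpos ⊢; exact_mod_cast hNpos
  set r := 1 - (1 - c) / N with hr
  have hr1 : r < 1 := by
    have : 0 < (1 - c) / N := div_pos (by linarith) hNpos
    linarith
  have hr0 : 0 ≤ r := by
    have : (1 - c) / N ≤ 1 := by rw [div_le_one hNpos]; linarith
    linarith
  -- the one-step estimate, iterated along the averaged heat-bath semigroup
  have step : ∀ k : ℕ, ∀ (f : (I → Bool) → ℝ) (D : ℝ), 0 ≤ D → (∀ i x, |dd i f x| ≤ D) →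
      |cov H f g| ≤ D * (r ^ k * (2 * N * G) + A / (4 * (1 - c))) := by
    intro k
    induction k with
    | zero =>
      intro f D hD hf
      have h1 : cov H f g = av H (fun x => (f x - f ⊥) * g x) - av H (fun x => f x - f ⊥) * av H g := by
        simp only [sub_mul, av_sub, av_const, av_mul, cov]; ring
      have h2 : |av H (fun x => (f x - f ⊥) * g x)| ≤ D * N * G := by
        rw [hG, ← av_mul]
        refine (abs_av_le H _).trans (av_mono H fun x => ?_)
        rw [abs_mul]; gcongr; exact osc_le hf x
      have h3 : |av H (fun x => f x - f ⊥)| ≤ D * N :=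
        (abs_av_le H _).trans (av_le_const H fun x => osc_le hf x)
      have h4 : |av H g| ≤ G := abs_av_le H g
      have h5 : 0 ≤ A / (4 * (1 - c)) := div_nonneg hA0 (by linarith)
      rw [h1]
      calc _ ≤ D * N * G + D * N * G := by
            refine (abs_sub _ _).trans (add_le_add h2 ?_)
            rw [abs_mul]; gcongr
        _ ≤ _ := by
          have := mul_nonneg hD h5
          nlinarith
    | succ k ih =>
      intro f D hD hf
      set Pf : (I → Bool) → ℝ := fun x => N⁻¹ * ∑ i, hb H i f x with hPf
      have hP1 : ∀ j x, |dd j Pf x| ≤ D * r := by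
        intro j x
        have e : dd j Pf x = N⁻¹ * ∑ i, dd j (hb H i f) x := by
          simp only [hPf, dd, Finset.sum_sub_distrib]; ring
        rw [e, abs_mul, abs_of_nonneg (inv_nonneg.2 hN0)]
        have h1 : |∑ i, dd j (hb H i f) x| ≤ (N - 1) * D + D * (1 / 4 * (4 * c)) := by
          refine (Finset.abs_sum_le_sum_abs _ _).trans
            ((Finset.sum_le_sum fun i _ => dd_hb_le H hf i j x).trans ?_)
          rw [Finset.sum_add_distrib, ← Finset.mul_sum, ← Finset.mul_sum]
          refine add_le_add (le_of_eq ?_) ?_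
          · have : ∀ i, (if i = j then 0 else D) = D - if i = j then D else 0 := fun i => by
              split_ifs <;> simp
            simp only [this, Finset.sum_sub_distrib]
            simp; ring
          · have := hH j x
            gcongr
        calc N⁻¹ * |∑ i, dd j (hb H i f) x| ≤ N⁻¹ * ((N - 1) * D + D * (1 / 4 * (4 * c))) := by gcongr
          _ = D * r := by rw [hr]; field_simp; ring
      have hP2 : av H Pf = av H f := by
        rw [hPf, av_mul, av_sum, Finset.sum_congr rfl fun i _ => av_hb H i f]
        simp only [Finset.sum_const, Finset.card_univ, nsmul_eq_mul, ← hN]; field_simp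
      have hP3 : |av H (fun x => (f x - Pf x) * g x)| ≤ D * (N⁻¹ * (A / 4)) := by
        have e : ∀ x, (f x - Pf x) * g x = N⁻¹ * ∑ i, (f x - hb H i f x) * g x := fun x => by
          rw [← Finset.sum_mul, Finset.sum_sub_distrib]
          simp only [Finset.sum_const, Finset.card_univ, nsmul_eq_mul, hPf, ← hN]; field_simp
        rw [av_congr H e, av_mul, av_sum, abs_mul, abs_of_nonneg (inv_nonneg.2 hN0)]
        have : |∑ i, av H (fun x => (f x - hb H i f x) * g x)| ≤ D * (A / 4) := by
          refine (Finset.abs_sum_le_sum_abs _ _).trans ?_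
          rw [hA, Finset.sum_div, Finset.mul_sum]
          refine Finset.sum_le_sum fun i _ => ?_
          rw [av_sub_hb, show D * (av H (fun x => |dd i g x|) / 4)
            = (1 / 4 * D) * av H (fun x => |dd i g x|) by ring, ← av_mul]
          refine (abs_av_le H _).trans (av_mono H fun x => ?_)
          rw [abs_mul, abs_of_nonneg (sg_var_nonneg H i x), abs_mul, ← mul_assoc]
          have := sg_var_le H i x
          have := hf i x
          gcongr
        calc _ ≤ N⁻¹ * (D * (A / 4)) := by gcongr
          _ = _ := by ring
      have e : cov H f g = av H (fun x => (f x - Pf x) * g x) + cov H Pf g := by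
        simp only [cov, sub_mul, av_sub, hP2]; ring
      rw [e]
      refine (abs_add_le _ _).trans ((add_le_add hP3 (ih Pf (D * r) (by positivity) hP1)).trans
        (le_of_eq ?_))
      have : 1 - c ≠ 0 := by linarith
      rw [pow_succ]
      have e2 : N⁻¹ * (A / 4) + r * (A / (4 * (1 - c))) = A / (4 * (1 - c)) := by
        rw [hr]; field_simp; ring
      linear_combination D * e2
  have lim : Tendsto (fun k : ℕ => D * (r ^ k * (2 * N * G) + A / (4 * (1 - c)))) atTop
      (𝓝 (D * (0 * (2 * N * G) + A / (4 * (1 - c))))) :=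
    (((tendsto_pow_atTop_nhds_zero_of_lt_one hr0 hr1).mul_const _).add_const _).const_mul _
  have := ge_of_tendsto' lim fun k => step k f D hD hf
  calc _ ≤ _ := this
    _ = _ := by ring

/-- The sixth central moment is of the order of the cube of the total influence, whenever the
covariances of `f` are controlled by influences. -/
lemma sixth_moment {f : (I → Bool) → ℝ} {δ : I → ℝ} {K L : ℝ} (hK : 0 ≤ K) (hL : 1 ≤ L)
    (hδ1 : ∀ i, δ i ≤ 1) (hδ : ∀ i x, |dd i f x| ≤ δ i) (hδL : ∑ i, δ i ≤ L)
    (hcov : ∀ g, |cov H f g| ≤ K * ∑ i, av H (fun x => |dd i g x|)) :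
    vr H f ≤ K * L ∧ av H (fun x => (f x - av H f) ^ 6) ≤ 40 * K * (6 * K * (K + 1) + 1) * L ^ 3 := by
  set m := av H f with hm
  have hδ0 : ∀ i, 0 ≤ δ i := fun i => (abs_nonneg _).trans (hδ i ⊥)
  have gen : ∀ (g : (I → Bool) → ℝ) (w : (I → Bool) → ℝ), (∀ x, 0 ≤ w x) →
      (∀ i x, |dd i g x| ≤ δ i * w x) → |cov H f g| ≤ K * L * av H w := by
    intro g w hw0 hw
    refine (hcov g).trans ?_
    rw [mul_assoc]
    refine mul_le_mul_of_nonneg_left ?_ hK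
    calc _ ≤ ∑ i, δ i * av H w := Finset.sum_le_sum fun i _ => by
            rw [← av_mul]; exact av_mono H (hw i)
      _ = (∑ i, δ i) * av H w := by rw [Finset.sum_mul]
      _ ≤ _ := mul_le_mul_of_nonneg_right hδL (av_nonneg H hw0)
  have e2 : ∀ k : ℕ, av H (fun x => (f x - m) ^ (k + 1)) = cov H f (fun x => (f x - m) ^ k) := by
    intro k
    rw [cov_center, ← hm]
    have : ∀ x, (f x - m) * ((f x - m) ^ k - av H (fun x => (f x - m) ^ k))
      = (f x - m) ^ (k + 1) - av H (fun x => (f x - m) ^ k) * (f x - m) := fun x => by ring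
    rw [av_congr H this, av_sub, av_mul, av_sub, av_const, ← hm]; ring
  have near : ∀ i x, |f (up i x) - m| ≤ |f x - m| + 1 ∧ |f (dn i x) - m| ≤ |f x - m| + 1 := by
    intro i x
    have h1 := (hδ i x).trans (hδ1 i)
    rw [dd, abs_le] at h1
    rcases up_or_dn i x with ⟨_, h⟩ | ⟨_, h⟩
    · rw [h] at h1 ⊢
      refine ⟨by linarith, ?_⟩
      have := abs_sub_abs_le_abs_sub (f (dn i x) - m) (f x - m)
      have h3 : |f (dn i x) - m - (f x - m)| ≤ 1 := by rw [abs_le]; constructor <;> linarith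
      linarith
    · rw [h] at h1 ⊢
      refine ⟨?_, by linarith⟩
      have := abs_sub_abs_le_abs_sub (f (up i x) - m) (f x - m)
      have h3 : |f (up i x) - m - (f x - m)| ≤ 1 := by rw [abs_le]; constructor <;> linarith
      linarith
  have pw : ∀ (a b c : ℝ), |a| ≤ c → |b| ≤ c → |a ^ 3 - b ^ 3| ≤ |a - b| * (3 * c ^ 2)
      ∧ |a ^ 5 - b ^ 5| ≤ |a - b| * (5 * c ^ 4) := by
    intro a b c ha hb
    have t : ∀ k l : ℕ, |a ^ k * b ^ l| ≤ c ^ (k + l) := fun k l => by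
      rw [abs_mul, abs_pow, abs_pow, pow_add]
      have : 0 ≤ c := (abs_nonneg a).trans ha
      gcongr
    constructor
    · rw [show a ^ 3 - b ^ 3 = (a - b) * (a ^ 2 * b ^ 0 + a ^ 1 * b ^ 1 + a ^ 0 * b ^ 2) by ring, abs_mul]
      gcongr
      have h1 := t 2 0
      have h2 := t 1 1
      have h3 := t 0 2
      refine (abs_add_three _ _ _).trans ?_
      norm_num at h1 h2 h3 ⊢; linarith
    · rw [show a ^ 5 - b ^ 5 = (a - b) * ((a ^ 4 * b ^ 0 + a ^ 3 * b ^ 1 + a ^ 2 * b ^ 2)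
        + (a ^ 1 * b ^ 3 + a ^ 0 * b ^ 4)) by ring, abs_mul]
      gcongr
      have h1 := t 4 0
      have h2 := t 3 1
      have h3 := t 2 2
      have h4 := t 1 3
      have h5 := t 0 4
      have k1 := abs_add_le (a ^ 4 * b ^ 0 + a ^ 3 * b ^ 1 + a ^ 2 * b ^ 2) (a ^ 1 * b ^ 3 + a ^ 0 * b ^ 4)
      have k2 := abs_add_three (a ^ 4 * b ^ 0) (a ^ 3 * b ^ 1) (a ^ 2 * b ^ 2)
      have k3 := abs_add_le (a ^ 1 * b ^ 3) (a ^ 0 * b ^ 4)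
      norm_num at h1 h2 h3 h4 h5 k1 k2 k3 ⊢; linarith
  have m2 : vr H f ≤ K * L := by
    have := gen f (fun _ => 1) (fun _ => zero_le_one) (fun i x => by simpa using hδ i x)
    rw [av_const, mul_one] at this
    exact (le_abs_self _).trans this
  have ev : vr H f = av H (fun x => (f x - m) ^ 2) := vr_eq H f
  have m4 : av H (fun x => (f x - m) ^ 4) ≤ K * L * (3 * (2 * vr H f + 2)) := by
    have := gen (fun x => (f x - m) ^ 3) (fun x => 3 * (2 * (f x - m) ^ 2 + 2))
      (fun x => by positivity) (fun i x => by
        have h1 := (pw _ _ _ (near i x).1 (near i x).2).1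
        have h2 := hδ i x
        simp only [dd] at h2 ⊢
        refine h1.trans ?_
        rw [show f (up i x) - m - (f (dn i x) - m) = f (up i x) - f (dn i x) by ring]
        refine mul_le_mul h2 ?_ (by positivity) (hδ0 i)
        nlinarith [sq_nonneg (|f x - m| - 1), sq_abs (f x - m)])
    rw [← e2, av_mul, av_add, av_mul, av_const, ← ev] at this
    exact (le_abs_self _).trans this
  have m6 : av H (fun x => (f x - m) ^ 6) ≤ K * L * (40 * (av H (fun x => (f x - m) ^ 4) + 1)) := by
    have := gen (fun x => (f x - m) ^ 5) (fun x => 40 * ((f x - m) ^ 4 + 1))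
      (fun x => by positivity) (fun i x => by
        have h1 := (pw _ _ _ (near i x).1 (near i x).2).2
        have h2 := hδ i x
        simp only [dd] at h2 ⊢
        refine h1.trans ?_
        rw [show f (up i x) - m - (f (dn i x) - m) = f (up i x) - f (dn i x) by ring]
        refine mul_le_mul h2 ?_ (by positivity) (hδ0 i)
        have hq : (|f x - m| + 1) ^ 2 ≤ 2 * (f x - m) ^ 2 + 2 := by
          nlinarith [sq_nonneg (|f x - m| - 1), sq_abs (f x - m)]
        have hq2 : (|f x - m| + 1) ^ 4 ≤ (2 * (f x - m) ^ 2 + 2) ^ 2 := by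
          rw [show (|f x - m| + 1) ^ 4 = ((|f x - m| + 1) ^ 2) ^ 2 by ring]
          gcongr
        nlinarith [sq_nonneg ((f x - m) ^ 2 - 1)])
    rw [← e2, av_mul, av_add, av_const] at this
    exact (le_abs_self _).trans this
  refine ⟨m2, m6.trans ?_⟩
  have hKL : 0 ≤ K * L := by positivity
  have h4 : av H (fun x => (f x - m) ^ 4) ≤ 6 * K * (K + 1) * L ^ 2 := by
    refine m4.trans ?_
    have : 3 * (2 * vr H f + 2) ≤ 6 * (K + 1) * L := by nlinarith
    calc _ ≤ K * L * (6 * (K + 1) * L) := by gcongr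
      _ = _ := by ring
  have : 40 * (av H (fun x => (f x - m) ^ 4) + 1) ≤ 40 * ((6 * K * (K + 1) + 1) * L ^ 2) := by
    nlinarith [one_le_pow₀ hL (n := 2)]
  calc _ ≤ K * L * (40 * ((6 * K * (K + 1) + 1) * L ^ 2)) := by gcongr
    _ = _ := by ring

end Correlation

section Graph

variable {n : ℕ}

/-! ### Edges, degrees and codegrees -/

/-- The edge joining two distinct vertices. -/
def mkE (u v : Fin n) (h : u ≠ v) : Edge n := ⟨s(u, v), by simpa using h⟩

/-- The adjacency matrix of a configuration, with real entries. -/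
def adj (x : Config n) (u v : Fin n) : ℝ := if h : u ≠ v then ind (mkE u v h) x else 0

/-- The indicator that the edge `f` joins `u` and `v`. -/
def hit (f : Edge n) (u v : Fin n) : ℝ := if s(u, v) = f.1 then 1 else 0

/-- The number of triangles, as a real-valued observable. -/
def Tr (x : Config n) : ℝ := triangleCount n x

/-- The degree of a vertex. -/
def deg (v : Fin n) (x : Config n) : ℝ := ∑ u, adj x v u

/-- The number of common neighbours of `u` and `v`. -/
def cod (u v : Fin n) (x : Config n) : ℝ := ∑ w, adj x u w * adj x v w

lemma exists_mkE (e : Edge n) : ∃ u v, ∃ h : u ≠ v, e = mkE u v h := by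
  obtain ⟨e, he⟩ := e
  induction e using Sym2.ind with
  | _ u v => exact ⟨u, v, by simpa using he, rfl⟩

lemma mkE_symm (u v : Fin n) (h : u ≠ v) : mkE u v h = mkE v u h.symm :=
  Subtype.ext Sym2.eq_swap

lemma adj_symm (x : Config n) (u v : Fin n) : adj x u v = adj x v u := by
  unfold adj
  by_cases h : u = v
  · simp [h]
  · rw [dif_pos h, dif_pos (Ne.symm h), mkE_symm]

@[simp] lemma adj_self (x : Config n) (u : Fin n) : adj x u u = 0 := by simp [adj]

lemma adj_mkE (x : Config n) (u v : Fin n) (h : u ≠ v) : adj x u v = ind (mkE u v h) x := by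
  simp [adj, h]

lemma adj_nonneg (x : Config n) (u v) : 0 ≤ adj x u v := by
  unfold adj; split_ifs; exacts [ind_nonneg _ _, le_rfl]

lemma adj_le_one (x : Config n) (u v) : adj x u v ≤ 1 := by
  unfold adj; split_ifs; exacts [ind_le_one _ _, zero_le_one]

lemma adj_sq (x : Config n) (u v) : adj x u v * adj x u v = adj x u v := by
  unfold adj; split_ifs; exacts [ind_sq _ _, by simp]

lemma hit_nonneg (f : Edge n) (u v) : 0 ≤ hit f u v := by unfold hit; split_ifs <;> norm_num
lemma hit_symm (f : Edge n) (u v) : hit f u v = hit f v u := by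
  unfold hit; rw [Sym2.eq_swap]
@[simp] lemma hit_self (f : Edge n) (u) : hit f u u = 0 := by
  unfold hit; rw [if_neg]; intro h; exact f.2 (by rw [← h]; simp)

lemma hit_mkE (f : Edge n) (u v) (h : u ≠ v) : hit f u v = if f = mkE u v h then 1 else 0 := by
  unfold hit mkE
  congr 1
  rw [eq_iff_iff, Subtype.ext_iff, eq_comm]

lemma adj_up (f : Edge n) (x : Config n) (u v) :
    adj (up f x) u v = adj (dn f x) u v + hit f u v := by
  by_cases h : u = v
  · simp [h]
  · rw [adj_mkE _ _ _ h, adj_mkE _ _ _ h, hit_mkE _ _ _ h]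
    by_cases hf : f = mkE u v h
    · simp [← hf]
    · rw [ind_up_ne (Ne.symm hf), ind_dn_ne (Ne.symm hf)]; simp [hf]

lemma adj_dn_mkE (x : Config n) (u v) (h : u ≠ v) : adj (dn (mkE u v h) x) u v = 0 := by
  rw [adj_mkE _ _ _ h, ind_dn]

/-- Summing over ordered pairs of vertices counts every edge twice. -/
lemma sum_edge (φ : Edge n → ℝ) :
    ∑ u : Fin n, ∑ v : Fin n, (if h : u ≠ v then φ (mkE u v h) else 0) = 2 * ∑ e, φ e := by
  classical
  have h1 : ∑ u : Fin n, ∑ v : Fin n, (if h : u ≠ v then φ (mkE u v h) else 0)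
      = ∑ u : Fin n, ∑ v : Fin n, ∑ e, hit e u v * φ e := by
    refine Finset.sum_congr rfl fun u _ => Finset.sum_congr rfl fun v _ => ?_
    by_cases h : u = v
    · simp [h]
    · rw [dif_pos h]
      simp [hit_mkE _ _ _ h]
  have h2 : ∀ e : Edge n, ∑ u : Fin n, ∑ v : Fin n, hit e u v = 2 := by
    intro e
    obtain ⟨a, b, hab, rfl⟩ := exists_mkE e
    have : ∀ u v : Fin n, hit (mkE a b hab) u v
        = (if u = a then (if v = b then 1 else 0) else 0)
          + (if u = b then (if v = a then 1 else 0) else 0) := by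
      intro u v
      have hba := hab.symm
      simp only [hit, mkE, Sym2.eq_iff]
      by_cases h1 : u = a
      · subst h1; simp [hab]
      · simp [h1, ite_and]
    simp only [this, Finset.sum_add_distrib]
    simp only [Finset.sum_ite_eq', Finset.mem_univ, if_true, Finset.sum_ite_irrel,
      Finset.sum_const_zero]
    norm_num
  rw [h1]
  simp_rw [Finset.sum_comm (s := Finset.univ (α := Fin n)) (t := Finset.univ (α := Edge n))]
  rw [Finset.mul_sum]
  refine Finset.sum_congr rfl fun e _ => ?_
  simp_rw [← Finset.sum_mul]
  rw [h2]

lemma sum_hit_vertices (e : Edge n) : ∑ u : Fin n, ∑ v : Fin n, hit e u v = 2 := by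
  have := sum_edge (fun f => if e = f then 1 else 0)
  rw [Finset.sum_ite_eq, if_pos (Finset.mem_univ _), mul_one] at this
  rw [← this]
  refine Finset.sum_congr rfl fun u _ => Finset.sum_congr rfl fun v _ => ?_
  by_cases h : u = v
  · simp [h]
  · rw [dif_pos h, hit_mkE _ _ _ h]

lemma sum_hit_edges (u v : Fin n) : ∑ f : Edge n, hit f u v ≤ 1 := by
  by_cases h : u = v
  · simp [h]
  · simp [hit_mkE _ _ _ h]

lemma sum_hit_vertex (f : Edge n) (u : Fin n) : ∑ w, hit f u w ≤ 1 := by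
  obtain ⟨a, b, hab, rfl⟩ := exists_mkE f
  by_cases h : u = a
  · subst h
    have : ∀ w, hit (mkE u b hab) u w = if w = b then 1 else 0 := fun w => by
      simp only [hit, mkE, Sym2.eq_iff]; simp [hab]
    simp [this]
  · have : ∀ w, hit (mkE a b hab) u w ≤ if w = a then 1 else 0 := fun w => by
      simp only [hit, mkE, Sym2.eq_iff, h, false_and, false_or]
      by_cases hw : w = a <;> by_cases hu : u = b <;> simp [hw, hu]
    exact (Finset.sum_le_sum fun w _ => this w).trans (by simp)

lemma card_edge : (Fintype.card (Edge n) : ℝ) = n * (n - 1) / 2 := by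
  have := sum_edge (n := n) (fun _ => 1)
  simp only [Finset.sum_const, Finset.card_univ, nsmul_eq_mul, mul_one] at this
  have h2 : ∑ u : Fin n, ∑ v : Fin n, (if h : u ≠ v then (1 : ℝ) else 0) = n * (n - 1) := by
    have : ∀ u v : Fin n, (if h : u ≠ v then (1 : ℝ) else 0) = 1 - if u = v then 1 else 0 := by
      intro u v; by_cases h : u = v <;> simp [h]
    simp only [this, Finset.sum_sub_distrib]
    simp; ring
  rw [h2] at this; linarith

lemma tot_eq (x : Config n) : tot x = (edgeCount n x : ℝ) := by
  simp only [tot, ind, edgeCount, Finset.card_filter]; push_cast; rfl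

lemma sum_adj (x : Config n) : ∑ u, ∑ v, adj x u v = 2 * tot x := sum_edge (fun e => ind e x)

lemma sum_deg (x : Config n) : ∑ v, deg v x = 2 * tot x := sum_adj x

/-! ### Triangles -/

/-- The indicator that the vertex set `s` spans a complete graph. -/
def full (s : Finset (Fin n)) (x : Config n) : ℝ :=
  open Classical in if ∀ e : Edge n, (∀ v ∈ (e : Sym2 (Fin n)), v ∈ s) → x e then 1 else 0

lemma Tr_eq_sum (x : Config n) : Tr x = ∑ s ∈ Finset.powersetCard 3 Finset.univ, full s x := by
  simp only [Tr, triangleCount, Finset.card_filter, full]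
  push_cast
  refine Finset.sum_congr rfl fun s _ => ?_
  congr 1

lemma adj_mul_three (x : Config n) (u v w : Fin n) (h1 : u ≠ v) (h2 : v ≠ w) (h3 : w ≠ u) :
    adj x u v * adj x v w * adj x w u = full {u, v, w} x := by
  rw [adj_mkE _ _ _ h1, adj_mkE _ _ _ h2, adj_mkE _ _ _ h3]
  have : (∀ e : Edge n, (∀ a ∈ (e : Sym2 (Fin n)), a ∈ ({u, v, w} : Finset (Fin n))) → x e)
      ↔ x (mkE u v h1) ∧ x (mkE v w h2) ∧ x (mkE w u h3) := by
    constructor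
    · intro h
      refine ⟨h _ ?_, h _ ?_, h _ ?_⟩ <;>
      · intro a ha
        simp only [mkE, Sym2.mem_iff] at ha
        rcases ha with rfl | rfl <;> simp
    · rintro ⟨e1, e2, e3⟩ e he
      obtain ⟨a, b, hab, rfl⟩ := exists_mkE e
      have ha := he a (by simp [mkE])
      have hb := he b (by simp [mkE])
      simp only [Finset.mem_insert, Finset.mem_singleton] at ha hb
      rcases ha with rfl | rfl | rfl <;> rcases hb with rfl | rfl | rfl <;>
        first
        | exact absurd rfl hab
        | assumption
        | (rw [mkE_symm]; assumption)
  simp only [full, this, ind]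
  by_cases a : x (mkE u v h1) <;> by_cases b : x (mkE v w h2) <;> by_cases c : x (mkE w u h3) <;>
    simp [a, b, c]

/-- Every triangle is counted six times by the ordered triples of vertices. -/
lemma six_Tr (x : Config n) : ∑ u, ∑ v, ∑ w, adj x u v * adj x v w * adj x w u = 6 * Tr x := by
  classical
  set S : Finset (Fin n × Fin n × Fin n) :=
    Finset.univ.filter fun t => t.1 ≠ t.2.1 ∧ t.2.1 ≠ t.2.2 ∧ t.2.2 ≠ t.1 with hS
  have h1 : ∑ u, ∑ v, ∑ w, adj x u v * adj x v w * adj x w u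
      = ∑ t ∈ S, full {t.1, t.2.1, t.2.2} x := by
    rw [hS, Finset.sum_filter, Fintype.sum_prod_type]
    refine Finset.sum_congr rfl fun u _ => ?_
    rw [Fintype.sum_prod_type]
    refine Finset.sum_congr rfl fun v _ => Finset.sum_congr rfl fun w _ => ?_
    split_ifs with h
    · exact adj_mul_three x u v w h.1 h.2.1 h.2.2
    · simp only at h
      by_cases a : u = v
      · subst a; simp
      · by_cases b : v = w
        · subst b; simp
        · by_cases c : w = u
          · subst c; simp
          · exact absurd ⟨a, b, c⟩ h
  have hmaps : ∀ t ∈ S, ({t.1, t.2.1, t.2.2} : Finset (Fin n)) ∈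
      Finset.powersetCard 3 (Finset.univ : Finset (Fin n)) := by
    rintro ⟨a, b, c⟩ h
    simp only [hS, Finset.mem_filter, Finset.mem_univ, true_and] at h
    simp only [Finset.mem_powersetCard_univ]
    exact Finset.card_eq_three.2 ⟨a, b, c, h.1, h.2.2.symm, h.2.1, rfl⟩
  rw [h1, ← Finset.sum_fiberwise_of_maps_to hmaps, Tr_eq_sum, Finset.mul_sum]
  refine Finset.sum_congr rfl fun s hs => ?_
  rw [Finset.sum_congr rfl (g := fun _ => full s x) (fun t ht => by
    rw [(Finset.mem_filter.1 ht).2])]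
  rw [Finset.sum_const, nsmul_eq_mul]
  congr 1
  obtain ⟨a, b, c, hab, hac, hbc, rfl⟩ := Finset.card_eq_three.1 (Finset.mem_powersetCard_univ.1 hs)
  have : S.filter (fun t => ({t.1, t.2.1, t.2.2} : Finset (Fin n)) = {a, b, c})
      = {(a, b, c), (a, c, b), (b, a, c), (b, c, a), (c, a, b), (c, b, a)} := by
    ext ⟨u, v, w⟩
    simp only [hS, Finset.mem_filter, Finset.mem_univ, true_and, Finset.mem_insert,
      Finset.mem_singleton, Prod.mk.injEq]
    constructor
    · rintro ⟨⟨h1, h2, h3⟩, h⟩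
      have hu : u ∈ ({a, b, c} : Finset (Fin n)) := by rw [← h]; simp
      have hv : v ∈ ({a, b, c} : Finset (Fin n)) := by rw [← h]; simp
      have hw : w ∈ ({a, b, c} : Finset (Fin n)) := by rw [← h]; simp
      simp only [Finset.mem_insert, Finset.mem_singleton] at hu hv hw
      grind
    · intro h
      refine ⟨by grind, ?_⟩
      rcases h with ⟨rfl, rfl, rfl⟩ | ⟨rfl, rfl, rfl⟩ | ⟨rfl, rfl, rfl⟩ | ⟨rfl, rfl, rfl⟩ |
        ⟨rfl, rfl, rfl⟩ | ⟨rfl, rfl, rfl⟩ <;> ext z <;> simp <;> tauto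
  rw [this]
  have : ({(a, b, c), (a, c, b), (b, a, c), (b, c, a), (c, a, b), (c, b, a)} :
      Finset (Fin n × Fin n × Fin n)).card = 6 := by
    simp [Finset.card_insert_of_notMem, hab, hac, hbc, hab.symm, hac.symm, hbc.symm]
  rw [this]; norm_num

end Graph

/-! ### Discrete derivatives of degrees and of the triangle count -/

section Graph2

variable {n : ℕ}

lemma hit_eq (a b : Fin n) (hab : a ≠ b) (u v : Fin n) : hit (mkE a b hab) u v
    = (if u = a then (if v = b then 1 else 0) else 0)
      + (if u = b then (if v = a then 1 else 0) else 0) := by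
  have hba := hab.symm
  simp only [hit, mkE, Sym2.eq_iff]
  by_cases h1 : u = a
  · subst h1; simp [hab]
  · simp [h1, ite_and]

lemma sum_hit_left (a b : Fin n) (hab : a ≠ b) (φ : Fin n → ℝ) :
    ∑ w, hit (mkE a b hab) a w * φ w = φ b := by
  simp [hit_eq, hab]

lemma sum_hit_right (a b : Fin n) (hab : a ≠ b) (φ : Fin n → ℝ) :
    ∑ w, hit (mkE a b hab) b w * φ w = φ a := by
  simp [hit_eq, hab.symm]

lemma sum_hit_mul (a b : Fin n) (hab : a ≠ b) (φ : Fin n → Fin n → ℝ) :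
    ∑ u, ∑ v, hit (mkE a b hab) u v * φ u v = φ a b + φ b a := by
  simp only [hit_eq, add_mul, Finset.sum_add_distrib, ite_mul, one_mul, zero_mul,
    Finset.sum_ite_irrel, Finset.sum_const_zero, Finset.sum_ite_eq', Finset.mem_univ, if_true]

lemma cyc (f : Fin n → Fin n → Fin n → ℝ) :
    ∑ a, ∑ b, ∑ c, f a b c = ∑ b, ∑ c, ∑ a, f a b c := by
  rw [Finset.sum_comm]
  exact Finset.sum_congr rfl fun b _ => Finset.sum_comm

lemma cyc2 (f : Fin n → Fin n → Fin n → ℝ) :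
    ∑ c, ∑ a, ∑ b, f c a b = ∑ a, ∑ b, ∑ c, f c a b := cyc f

/-- The number of triangles created by switching on the edge `e`. -/
def cc (e : Edge n) (x : Config n) : ℝ := dd e Tr x

lemma cod_up (f : Edge n) (x : Config n) {u v : Fin n} (h : u ≠ v) :
    cod u v (up f x) = cod u v (dn f x)
      + ∑ w, (hit f u w * adj (dn f x) v w + hit f v w * adj (dn f x) u w) := by
  simp only [cod, ← Finset.sum_add_distrib, adj_up]
  refine Finset.sum_congr rfl fun w _ => ?_
  have : hit f u w * hit f v w = 0 := by
    unfold hit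
    split_ifs with h1 h2
    · rw [← h2] at h1
      exact absurd (by simpa [Sym2.eq_iff] using h1) (by
        rintro (h3 | h3)
        · exact h h3
        · exact h (h3.1.trans h3.2))
    all_goals simp
  linear_combination this

lemma cod_self (x : Config n) {u v : Fin n} (h : u ≠ v) :
    cod u v x = cod u v (dn (mkE u v h) x) := by
  have e := cod_up (mkE u v h) x h
  rw [Finset.sum_add_distrib, sum_hit_left, sum_hit_right] at e
  rcases up_or_dn (mkE u v h) x with ⟨_, h2⟩ | ⟨_, h2⟩
  · rw [h2] at e; simpa using e
  · rw [h2]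

lemma cc_mkE (u v : Fin n) (h : u ≠ v) (x : Config n) : cc (mkE u v h) x = cod u v x := by
  have h6 : ∀ y : Config n, Tr y = 1 / 6 * ∑ u, ∑ v, ∑ w, adj y u v * adj y v w * adj y w u :=
    fun y => by rw [six_Tr]; ring
  rw [cod_self x h, cc, dd, h6, h6]
  set A := adj (dn (mkE u v h) x) with hA
  set B := hit (mkE u v h) with hB
  have As : ∀ a b, A a b = A b a := fun a b => adj_symm _ _ _
  have A0 : ∀ a, A a a = 0 := fun a => adj_self _ _
  have expand : ∑ a, ∑ b, ∑ c, adj (up (mkE u v h) x) a b * adj (up (mkE u v h) x) b c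
        * adj (up (mkE u v h) x) c a
      = ∑ a, ∑ b, ∑ c, A a b * A b c * A c a
        + (∑ a, ∑ b, B a b * ∑ c, A b c * A c a)
        + (∑ b, ∑ c, B b c * ∑ a, A a b * A c a)
        + (∑ c, ∑ a, B c a * ∑ b, A a b * A b c)
        + (∑ a, ∑ b, B a b * ∑ c, B b c * A c a)
        + (∑ b, ∑ c, B b c * ∑ a, B c a * A a b)
        + (∑ c, ∑ a, B c a * ∑ b, B a b * A b c)
        + (∑ a, ∑ b, B a b * ∑ c, B b c * B c a) := by
    simp only [Finset.mul_sum]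
    have e1 := cyc (fun a b c => B b c * (A a b * A c a))
    have e2 := cyc2 (fun c a b => B c a * (A a b * A b c))
    have e3 := cyc (fun a b c => B b c * (B c a * A a b))
    have e4 := cyc2 (fun c a b => B c a * (B a b * A b c))
    have E : ∑ a, ∑ b, ∑ c, adj (up (mkE u v h) x) a b * adj (up (mkE u v h) x) b c
        * adj (up (mkE u v h) x) c a
      = ∑ a, ∑ b, ∑ c, A a b * A b c * A c a + (∑ a, ∑ b, ∑ c, B a b * (A b c * A c a))
        + (∑ a, ∑ b, ∑ c, B b c * (A a b * A c a)) + (∑ a, ∑ b, ∑ c, B c a * (A a b * A b c))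
        + (∑ a, ∑ b, ∑ c, B a b * (B b c * A c a)) + (∑ a, ∑ b, ∑ c, B b c * (B c a * A a b))
        + (∑ a, ∑ b, ∑ c, B c a * (B a b * A b c))
        + (∑ a, ∑ b, ∑ c, B a b * (B b c * B c a)) := by
      simp only [← Finset.sum_add_distrib]
      refine Finset.sum_congr rfl fun a _ => Finset.sum_congr rfl fun b _ =>
        Finset.sum_congr rfl fun c _ => ?_
      simp only [adj_up]; ring
    rw [E, e1, ← e2, e3, ← e4]
  rw [expand]
  simp only [hB, sum_hit_mul, sum_hit_left, sum_hit_right, A0, hit_self]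
  have e1 : cod u v (dn (mkE u v h) x) = ∑ w, A u w * A v w := rfl
  have k : ∀ a b, ∑ w, A a w * A w b = ∑ w, A a w * A b w := fun a b =>
    Finset.sum_congr rfl fun w _ => by rw [As w b]
  have k2 : ∀ a b, ∑ w, A w a * A b w = ∑ w, A a w * A b w := fun a b =>
    Finset.sum_congr rfl fun w _ => by rw [As w a]
  have k3 : ∑ w, A v w * A u w = ∑ w, A u w * A v w :=
    Finset.sum_congr rfl fun w _ => mul_comm _ _
  rw [e1]
  simp only [k, k2, k3]
  ring

lemma cod_nonneg (u v : Fin n) (x) : 0 ≤ cod u v x :=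
  Finset.sum_nonneg fun w _ => mul_nonneg (adj_nonneg _ _ _) (adj_nonneg _ _ _)

lemma cod_le (u v : Fin n) (x) : cod u v x ≤ n := by
  refine (Finset.sum_le_sum (g := fun _ => (1 : ℝ)) fun _ _ => ?_).trans (by simp)
  exact mul_le_one₀ (adj_le_one _ _ _) (adj_nonneg _ _ _) (adj_le_one _ _ _)

lemma cc_nonneg (e : Edge n) (x) : 0 ≤ cc e x := by
  obtain ⟨u, v, h, rfl⟩ := exists_mkE e
  rw [cc_mkE]; exact cod_nonneg _ _ _

lemma cc_le (e : Edge n) (x) : cc e x ≤ n := by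
  obtain ⟨u, v, h, rfl⟩ := exists_mkE e
  rw [cc_mkE]; exact cod_le _ _ _

/-- A configuration-free bound for the influence of the edge `f` on the codegree along `e`. -/
def infl (e f : Edge n) : ℝ :=
  ∑ w : Fin n, ∑ u : Fin n, if u ∈ e.1 then hit f u w else 0

lemma infl_mkE (u v : Fin n) (h : u ≠ v) (f : Edge n) :
    infl (mkE u v h) f = ∑ w, (hit f u w + hit f v w) := by
  refine Finset.sum_congr rfl fun w _ => ?_
  have : ∀ a, (if a ∈ (mkE u v h).1 then hit f a w else 0)
      = (if a = u then hit f a w else 0) + (if a = v then hit f a w else 0) := by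
    intro a
    simp only [mkE, Sym2.mem_iff]
    by_cases h1 : a = u
    · subst h1; simp [h]
    · simp [h1]
  simp only [this, Finset.sum_add_distrib]; simp

lemma dd_cc_mkE (u v : Fin n) (h : u ≠ v) (f : Edge n) (x) : dd f (cc (mkE u v h)) x
    = ∑ w, (hit f u w * adj (dn f x) v w + hit f v w * adj (dn f x) u w) := by
  rw [dd, cc_mkE, cc_mkE, cod_up f x h]; ring

lemma dd_cc_nonneg (e f : Edge n) (x) : 0 ≤ dd f (cc e) x := by
  obtain ⟨u, v, h, rfl⟩ := exists_mkE e
  rw [dd_cc_mkE]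
  exact Finset.sum_nonneg fun w _ => add_nonneg (mul_nonneg (hit_nonneg _ _ _) (adj_nonneg _ _ _))
    (mul_nonneg (hit_nonneg _ _ _) (adj_nonneg _ _ _))

lemma dd_cc_le (e f : Edge n) (x) : |dd f (cc e) x| ≤ infl e f := by
  rw [abs_of_nonneg (dd_cc_nonneg e f x)]
  obtain ⟨u, v, h, rfl⟩ := exists_mkE e
  rw [dd_cc_mkE, infl_mkE]
  refine Finset.sum_le_sum fun w _ => add_le_add ?_ ?_
  · exact mul_le_of_le_one_right (hit_nonneg _ _ _) (adj_le_one _ _ _)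
  · exact mul_le_of_le_one_right (hit_nonneg _ _ _) (adj_le_one _ _ _)

lemma infl_le_two (e f : Edge n) : infl e f ≤ 2 := by
  obtain ⟨u, v, h, rfl⟩ := exists_mkE e
  rw [infl_mkE, Finset.sum_add_distrib]
  linarith [sum_hit_vertex f u, sum_hit_vertex f v]

lemma sum_infl (e : Edge n) : ∑ f, infl e f ≤ 2 * n := by
  obtain ⟨u, v, h, rfl⟩ := exists_mkE e
  simp only [infl_mkE]
  rw [Finset.sum_comm]
  simp only [Finset.sum_add_distrib]
  have : ∀ a : Fin n, ∑ w : Fin n, ∑ f : Edge n, hit f a w ≤ n := fun a =>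
    (Finset.sum_le_sum fun w _ => sum_hit_edges a w).trans (by simp)
  linarith [this u, this v]

lemma dd_cc_le_two (e f : Edge n) (x) : |dd f (cc e) x| ≤ 2 := (dd_cc_le e f x).trans (infl_le_two e f)

lemma sum_dd_cc (e : Edge n) (x) : ∑ f, |dd f (cc e) x| ≤ 2 * n :=
  (Finset.sum_le_sum fun f _ => dd_cc_le e f x).trans (sum_infl e)

lemma sum_dd_cc' (f : Edge n) (x) : ∑ e, |dd f (cc e) x| ≤ 2 * n := by
  have : ∀ e, |dd f (cc e) x| = |dd e (cc f) x| := fun e => by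
    unfold cc; rw [show dd f (fun x => dd e Tr x) x = dd e (fun x => dd f Tr x) x from dd_comm f e Tr x]
  simp only [this]; exact sum_dd_cc f x

@[simp] lemma dd_cc_self (e : Edge n) (x) : dd e (cc e) x = 0 := dd_dd_self e Tr x

lemma cc_up_self (e : Edge n) (x) : cc e (up e x) = cc e x := dd_up e Tr x
lemma cc_dn_self (e : Edge n) (x) : cc e (dn e x) = cc e x := dd_dn e Tr x

lemma dd_deg (f : Edge n) (v : Fin n) (x) : dd f (deg v) x = ∑ u, hit f v u := by
  simp only [dd, deg, adj_up, Finset.sum_add_distrib]; ring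

lemma dd_deg_nonneg (f : Edge n) (v : Fin n) (x) : 0 ≤ dd f (deg v) x := by
  rw [dd_deg]; exact Finset.sum_nonneg fun u _ => hit_nonneg _ _ _

lemma dd_deg_le (f : Edge n) (v : Fin n) (x) : dd f (deg v) x ≤ 1 := by
  rw [dd_deg]; exact sum_hit_vertex f v

lemma sum_dd_deg (f : Edge n) (x) : ∑ v, |dd f (deg v) x| = 2 := by
  rw [← sum_hit_vertices f]
  exact Finset.sum_congr rfl fun v _ => by rw [abs_of_nonneg (dd_deg_nonneg f v x), dd_deg]

lemma sum_dd_deg' (v : Fin n) : ∑ f : Edge n, ∑ u, hit f v u ≤ n := by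
  rw [Finset.sum_comm]
  exact (Finset.sum_le_sum fun w _ => sum_hit_edges v w).trans (by simp)

lemma deg_nonneg (v : Fin n) (x) : 0 ≤ deg v x := Finset.sum_nonneg fun u _ => adj_nonneg _ _ _
lemma deg_le (v : Fin n) (x) : deg v x ≤ n :=
  (Finset.sum_le_sum fun u _ => adj_le_one x v u).trans (by simp)

lemma Tr_nonneg (x : Config n) : 0 ≤ Tr x := Nat.cast_nonneg _

/-- Counting paths of length two by their midpoints. -/
lemma sum_cc (x : Config n) : ∑ e, cc e x = 1 / 2 * ∑ v, (deg v x ^ 2 - deg v x) := by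
  have h := sum_edge (fun e => cc e x)
  have h1 : ∀ u v : Fin n, (if h : u ≠ v then cc (mkE u v h) x else 0)
      = cod u v x - if u = v then deg u x else 0 := by
    intro u v
    by_cases h : u = v
    · subst h; simp [cod, deg, adj_sq]
    · simp [h, cc_mkE]
  have h2 : ∑ u, ∑ v, cod u v x = ∑ w, deg w x ^ 2 := by
    simp only [cod]
    have : ∀ w, deg w x ^ 2 = ∑ u, ∑ v, adj x u w * adj x v w := fun w => by
      rw [sq, deg, Finset.sum_mul_sum]
      exact Finset.sum_congr rfl fun u _ => Finset.sum_congr rfl fun v _ => by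
        rw [adj_symm x w u, adj_symm x w v]
    simp only [this]
    exact (cyc fun w u v => adj x u w * adj x v w).symm
  simp only [h1, Finset.sum_sub_distrib, h2] at h
  simp only [Finset.sum_ite_eq, Finset.mem_univ, if_true] at h
  rw [Finset.sum_sub_distrib]; linarith

/-- Counting triangles by their edges. -/
lemma sum_ind_cc (x : Config n) : ∑ e, ind e x * cc e x = 3 * Tr x := by
  have h := sum_edge (fun e => ind e x * cc e x)
  have h1 : ∀ u v : Fin n, (if h : u ≠ v then ind (mkE u v h) x * cc (mkE u v h) x else 0)
      = ∑ w, adj x u v * adj x v w * adj x w u := by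
    intro u v
    by_cases h : u = v
    · subst h; simp
    · rw [dif_pos h, cc_mkE, ← adj_mkE _ _ _ h, cod, Finset.mul_sum]
      exact Finset.sum_congr rfl fun w _ => by rw [adj_symm x w u]; ring
  simp only [h1, six_Tr] at h
  linarith

/-! ### The Hamiltonian -/

lemma ham_eq (n : ℕ) (α h : ℝ) (x : Config n) : ham n α h x = α / n * Tr x + h * tot x := by
  rw [ham, tot_eq]; rfl

lemma dd_ham (α h : ℝ) (e : Edge n) (x) : dd e (ham n α h) x = h + α * (cc e x / n) := by
  have h1 := dd_tot e x
  simp only [dd, ham_eq, cc] at h1 ⊢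
  linear_combination h * h1

lemma sg_ham (α h : ℝ) (e : Edge n) (x) :
    sg (ham n α h) e x = Real.sigmoid (h + α * (cc e x / n)) := by rw [sg, dd_ham]

lemma dd_dd_ham (α h : ℝ) (e f : Edge n) (x) :
    dd f (dd e (ham n α h)) x = α * (dd f (cc e) x / n) := by
  have : dd e (ham n α h) = fun x => h + α * (cc e x / n) := funext (dd_ham α h e)
  rw [this]; simp only [dd]; ring

lemma sum_dd_dd_ham (α h : ℝ) (f : Edge n) (x) :
    ∑ e, |dd f (dd e (ham n α h)) x| ≤ 4 * (|α| / 2) := by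
  simp only [dd_dd_ham, abs_mul, abs_div, Nat.abs_cast, ← Finset.mul_sum, ← Finset.sum_div]
  rcases Nat.eq_zero_or_pos n with rfl | hn
  · simp only [Nat.cast_zero, div_zero, mul_zero]; positivity
  · have hn' : (0 : ℝ) < n := by exact_mod_cast hn
    have := sum_dd_cc' f x
    have : (∑ e, |dd f (cc e) x|) / n ≤ 2 := by rw [div_le_iff₀ hn']; exact this
    nlinarith [abs_nonneg α]

lemma full_supermod (s : Finset (Fin n)) : Supermod (full (n := n) s) := by
  classical
  intro a b
  unfold full
  by_cases ha : ∀ e : Edge n, (∀ v ∈ (e : Sym2 (Fin n)), v ∈ s) → a e <;>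
  by_cases hb : ∀ e : Edge n, (∀ v ∈ (e : Sym2 (Fin n)), v ∈ s) → b e
  · have h1 : ∀ e : Edge n, (∀ v ∈ (e : Sym2 (Fin n)), v ∈ s) → (a ⊓ b) e := fun e he => by
      simp [ha e he, hb e he]
    have h2 : ∀ e : Edge n, (∀ v ∈ (e : Sym2 (Fin n)), v ∈ s) → (a ⊔ b) e := fun e he => by
      simp [ha e he]
    rw [if_pos ha, if_pos hb, if_pos h1, if_pos h2]
  · have h2 : ∀ e : Edge n, (∀ v ∈ (e : Sym2 (Fin n)), v ∈ s) → (a ⊔ b) e := fun e he => by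
      simp [ha e he]
    rw [if_pos ha, if_neg hb, if_pos h2]; split_ifs <;> norm_num
  · have h2 : ∀ e : Edge n, (∀ v ∈ (e : Sym2 (Fin n)), v ∈ s) → (a ⊔ b) e := fun e he => by
      simp [hb e he]
    rw [if_neg ha, if_pos hb, if_pos h2]; split_ifs <;> norm_num
  · rw [if_neg ha, if_neg hb]; split_ifs <;> norm_num

lemma ind_supermod (e : Edge n) (a b : Config n) :
    ind e a + ind e b = ind e (a ⊓ b) + ind e (a ⊔ b) := by
  have key : ∀ p q : Bool, ((if p = true then 1 else 0) + (if q = true then 1 else 0) : ℝ)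
      = (if p ⊓ q = true then 1 else 0) + (if p ⊔ q = true then 1 else 0) := by
    intro p q; cases p <;> cases q <;> simp
  exact key (a e) (b e)

lemma ham_supermod {α : ℝ} (hα : 0 ≤ α) (h : ℝ) : Supermod (ham n α h) := by
  intro a b
  have h1 : Tr a + Tr b ≤ Tr (a ⊓ b) + Tr (a ⊔ b) := by
    simp only [Tr_eq_sum, ← Finset.sum_add_distrib]
    exact Finset.sum_le_sum fun s _ => full_supermod s a b
  have h2 : tot a + tot b = tot (a ⊓ b) + tot (a ⊔ b) := by
    simp only [tot, ← Finset.sum_add_distrib]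
    exact Finset.sum_congr rfl fun e _ => ind_supermod e a b
  simp only [ham_eq]
  have h3 : 0 ≤ α / n := by positivity
  linear_combination mul_le_mul_of_nonneg_left h1 h3 + h * h2

/-! ### Relabelling the vertices -/

/-- The permutation of the edges induced by a permutation of the vertices. -/
def permE (π : Equiv.Perm (Fin n)) : Edge n ≃ Edge n :=
  Equiv.subtypeEquiv
    { toFun := Sym2.map π
      invFun := Sym2.map π.symm
      left_inv := fun e => by simp [Sym2.map_map]
      right_inv := fun e => by simp [Sym2.map_map] }
    fun e => by
      induction e using Sym2.ind with
      | _ u v => simp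

lemma permE_mkE (π : Equiv.Perm (Fin n)) (u v : Fin n) (h : u ≠ v) :
    permE π (mkE u v h) = mkE (π u) (π v) (π.injective.ne h) := by
  apply Subtype.ext; simp [permE, mkE]

lemma adj_perm (π : Equiv.Perm (Fin n)) (x : Config n) (u v : Fin n) :
    adj (x ∘ permE π) u v = adj x (π u) (π v) := by
  by_cases h : u = v
  · simp [h]
  · rw [adj_mkE _ _ _ h, adj_mkE _ _ _ (π.injective.ne h), ← permE_mkE]; rfl

lemma av_perm (α h : ℝ) (π : Equiv.Perm (Fin n)) (f : Config n → ℝ) :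
    av (ham n α h) (fun x => f (x ∘ permE π)) = av (ham n α h) f := by
  have hH : ∀ x, ham n α h (x ∘ permE π) = ham n α h x := by
    intro x
    have h1 : 6 * Tr (x ∘ permE π) = 6 * Tr x := by
      rw [← six_Tr, ← six_Tr]
      simp only [adj_perm]
      rw [← Equiv.sum_comp π (fun u => ∑ v, ∑ w, adj x u v * adj x v w * adj x w u)]
      refine Finset.sum_congr rfl fun u _ => ?_
      rw [← Equiv.sum_comp π (fun v => ∑ w, adj x (π u) v * adj x v w * adj x w (π u))]
      refine Finset.sum_congr rfl fun v _ => ?_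
      rw [← Equiv.sum_comp π (fun w => adj x (π u) (π v) * adj x (π v) w * adj x w (π u))]
    have h2 : tot (x ∘ permE π) = tot x := Equiv.sum_comp (permE π) (fun e => ind e x)
    rw [ham_eq, ham_eq, h2]; congr 2; linarith
  unfold av
  congr 1
  rw [← Equiv.sum_comp (Equiv.arrowCongr (permE π).symm (Equiv.refl Bool))
    (fun x => Real.exp (ham n α h x) • f x)]
  refine Finset.sum_congr rfl fun x _ => ?_
  have : (Equiv.arrowCongr (permE π).symm (Equiv.refl Bool)) x = x ∘ permE π := rfl
  rw [this, hH]

lemma av_adj_eq (α h : ℝ) {u v u' v' : Fin n} (h1 : u ≠ v) (h2 : u' ≠ v') :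
    av (ham n α h) (fun x => adj x u v) = av (ham n α h) (fun x => adj x u' v') := by
  obtain ⟨π, e1, e2⟩ : ∃ π : Equiv.Perm (Fin n), π u' = u ∧ π v' = v := by
    refine ⟨Equiv.swap (Equiv.swap u' u v') v * Equiv.swap u' u, ?_, ?_⟩
    · simp only [Equiv.Perm.mul_apply, Equiv.swap_apply_left]
      refine Equiv.swap_apply_of_ne_of_ne ?_ h1
      intro h3
      have := congrArg (Equiv.swap u' u) h3
      simp at this; exact h2 this
    · simp
  have := av_perm α h π (fun x => adj x u' v')
  simp only [adj_perm, e1, e2] at this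
  exact this

lemma av_cherry_eq (α h : ℝ) {u v w u' v' w' : Fin n} (h1 : u ≠ v) (h2 : v ≠ w) (h3 : u ≠ w)
    (h1' : u' ≠ v') (h2' : v' ≠ w') (h3' : u' ≠ w') :
    av (ham n α h) (fun x => adj x u w * adj x v w)
      = av (ham n α h) (fun x => adj x u' w' * adj x v' w') := by
  obtain ⟨π, e1, e2, e3⟩ : ∃ π : Equiv.Perm (Fin n), π u' = u ∧ π v' = v ∧ π w' = w := by
    have := Equiv.Perm.isMultiplyPretransitive (Fin n) 3
    have i1 : Function.Injective ![u', v', w'] := by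
      intro i j hij; fin_cases i <;> fin_cases j <;> simp_all
    have i2 : Function.Injective ![u, v, w] := by
      intro i j hij; fin_cases i <;> fin_cases j <;> simp_all
    obtain ⟨π, hπ⟩ := MulAction.exists_smul_eq (Equiv.Perm (Fin n))
      (⟨_, i1⟩ : Fin 3 ↪ Fin n) (⟨_, i2⟩ : Fin 3 ↪ Fin n)
    have k : ∀ i, π (![u', v', w'] i) = ![u, v, w] i := fun i => by
      have := congrArg (fun φ : Fin 3 ↪ Fin n => φ i) hπ
      simpa using this
    exact ⟨π, by simpa using k 0, by simpa using k 1, by simpa using k 2⟩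
  have := av_perm α h π (fun x => adj x u' w' * adj x v' w')
  simp only [adj_perm, e1, e2, e3] at this
  exact this

end Graph2

section Crit

/-! ### The variational problem -/

lemma hasDerivAt_phiET (a b : ℝ) {u : ℝ} (h0 : 0 < u) (h1 : u < 1) :
    HasDerivAt (phiET a b) ((a * u ^ 2 + b - (Real.log u - Real.log (1 - u))) / 2) u := by
  have hu : u ≠ 0 := h0.ne'
  have hu' : 1 - u ≠ 0 := by linarith
  have e1 : HasDerivAt (fun u : ℝ => u * Real.log u) (Real.log u + 1) u := by
    refine ((hasDerivAt_id u).mul (Real.hasDerivAt_log hu)).congr_deriv ?_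
    simp [hu]
  have e3 : HasDerivAt (fun u : ℝ => 1 - u) (-1) u := by
    simpa using (hasDerivAt_id u).const_sub 1
  have e2 : HasDerivAt (fun u : ℝ => (1 - u) * Real.log (1 - u)) (-Real.log (1 - u) - 1) u := by
    refine (e3.mul (e3.log hu')).congr_deriv ?_
    field_simp
    ring
  have e4 : HasDerivAt Ifun (Real.log u - Real.log (1 - u)) u := by
    refine (e1.add e2).congr_deriv ?_
    ring
  have e5 := (((hasDerivAt_pow 3 u).const_mul (a / 6)).add
    ((hasDerivAt_id u).const_mul (b / 2))).sub (e4.const_mul (1 / 2))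
  refine e5.congr_deriv ?_
  norm_num
  ring

lemma crit_eq {a b u : ℝ} (h0 : 0 < u) (h1 : u < 1)
    (hmax : ∀ w ∈ Set.Icc (0 : ℝ) 1, phiET a b w ≤ phiET a b u) :
    a * u ^ 2 + b = Real.log u - Real.log (1 - u) := by
  have : IsLocalMax (phiET a b) u := by
    filter_upwards [Icc_mem_nhds h0 h1] with w hw using hmax w hw
  have := this.hasDerivAt_eq_zero (hasDerivAt_phiET a b h0 h1)
  linarith

lemma sigmoid_logit {u y : ℝ} (h0 : 0 < u) (h1 : u < 1) (h : y = Real.log u - Real.log (1 - u)) :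
    Real.sigmoid y = u := by
  have h1' : 0 < 1 - u := by linarith
  rw [Real.sigmoid_def, h, ← Real.log_div h0.ne' h1'.ne', Real.exp_neg,
    Real.exp_log (by positivity)]
  field_simp
  ring

/-- Differentiating the critical equation in `a`, together with the monotonicity of the maximizer
in `a`, yields the strict second-order condition at the maximizer. -/
lemma crit_facts {α h : ℝ} {U : Set (ℝ × ℝ)} (hUopen : IsOpen U) (hmemU : (α, h) ∈ U)
    {ustar : ℝ × ℝ → ℝ} (hC1 : ContDiffOn ℝ 1 ustar U)
    (hrange : ∀ p ∈ U, ustar p ∈ Set.Ioo (0 : ℝ) 1)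
    (hmax : ∀ p ∈ U, ∀ u ∈ Set.Icc (0 : ℝ) 1, phiET p.1 p.2 u ≤ phiET p.1 p.2 (ustar p)) :
    ustar (α, h) = Real.sigmoid (h + α * ustar (α, h) ^ 2) ∧
    0 < 1 - 2 * α * ustar (α, h) ^ 2 * (1 - ustar (α, h)) ∧
    (1 - 2 * α * ustar (α, h) ^ 2 * (1 - ustar (α, h))) * deriv (fun a => ustar (a, h)) α
      = ustar (α, h) ^ 3 * (1 - ustar (α, h)) := by
  have key : ∀ q ∈ U, q.1 * ustar q ^ 2 + q.2 = Real.log (ustar q) - Real.log (1 - ustar q) :=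
    fun q hq => crit_eq (hrange q hq).1 (hrange q hq).2 (hmax q hq)
  obtain ⟨p0, p1⟩ := hrange _ hmemU
  have hcr := key _ hmemU
  set p := ustar (α, h) with hp
  have hcont : Continuous fun a : ℝ => (a, h) := by fun_prop
  have hnear : ∀ᶠ a in 𝓝 α, (a, h) ∈ U := hcont.continuousAt.eventually_mem (hUopen.mem_nhds hmemU)
  have hdiff : DifferentiableAt ℝ (fun a => ustar (a, h)) α := by
    have h1 : DifferentiableAt ℝ ustar (α, h) :=
      ((hC1.differentiableOn (by norm_num)) _ hmemU).differentiableAt (hUopen.mem_nhds hmemU)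
    exact h1.comp α (by fun_prop)
  set D := deriv (fun a => ustar (a, h)) α with hD
  have hd : HasDerivAt (fun a => ustar (a, h)) D α := hdiff.hasDerivAt
  have q1 : (1 - p) ≠ 0 := by linarith
  have hd2 : HasDerivAt (fun a => a * ustar (a, h) ^ 2 + h
      - (Real.log (ustar (a, h)) - Real.log (1 - ustar (a, h))))
      (1 * p ^ 2 + α * (2 * p ^ 1 * D) - (D / p - (-D) / (1 - p))) α := by
    have e1 := (hasDerivAt_id α).mul (hd.pow 2)
    have e2 := (hd.log (by rw [← hp]; exact p0.ne')).sub
      ((hd.const_sub 1).log (by rw [← hp]; exact q1))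
    exact (e1.add_const h).sub e2
  have hz : (fun a => a * ustar (a, h) ^ 2 + h
      - (Real.log (ustar (a, h)) - Real.log (1 - ustar (a, h)))) =ᶠ[𝓝 α] fun _ => 0 := by
    filter_upwards [hnear] with a ha
    have := key _ ha
    simp only at this
    linarith
  have hz' := (hd2.congr_of_eventuallyEq hz.symm).unique (hasDerivAt_const α (0 : ℝ))
  have hmain : (1 - 2 * α * p ^ 2 * (1 - p)) * D = p ^ 3 * (1 - p) := by
    field_simp at hz'
    linear_combination (-1 : ℝ) * hz'
  -- Comparing the two maximization problems shows that the maximizer increases with `a`.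
  have hmono : ∀ᶠ a in 𝓝[>] α, p ≤ ustar (a, h) := by
    filter_upwards [nhdsWithin_le_nhds hnear, self_mem_nhdsWithin] with a ha haα
    have haα' : α < a := haα
    obtain ⟨a0, a1⟩ := hrange _ ha
    have m1 := hmax _ ha p ⟨p0.le, p1.le⟩
    have m2 := hmax _ hmemU (ustar (a, h)) ⟨a0.le, a1.le⟩
    simp only [phiET, ← hp] at m1 m2
    by_contra hcon
    push Not at hcon
    have : ustar (a, h) ^ 3 < p ^ 3 := pow_lt_pow_left₀ hcon a0.le (by norm_num)
    nlinarith
  have hDnn : 0 ≤ D := by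
    have hs := hd.tendsto_slope.mono_left (nhdsWithin_mono α (fun a (ha : a ∈ Set.Ioi α) => ne_of_gt ha))
    refine ge_of_tendsto hs ?_
    filter_upwards [hmono, self_mem_nhdsWithin] with a ha haα
    have haα' : α < a := haα
    rw [slope_def_field]
    exact div_nonneg (by rw [← hp]; linarith) (by linarith)
  have hlam : 0 < 1 - 2 * α * p ^ 2 * (1 - p) := by
    have : 0 < p ^ 3 * (1 - p) := by have : 0 < 1 - p := by linarith
                                     positivity
    by_contra hc
    push Not at hc
    nlinarith
  refine ⟨(sigmoid_logit p0 p1 (by linarith)).symm, hlam, hmain⟩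

/-- The a priori estimates on the model that the fluctuation analysis relies on: a variance bound
for observables with bounded discrete derivatives, and concentration of degrees and codegrees. -/
structure Iface (α h p : ℝ) : Prop where
  pos : 0 < p
  lt_one : p < 1
  crit : p = Real.sigmoid (h + α * p ^ 2)
  lam : 0 < 1 - 2 * α * p ^ 2 * (1 - p)
  var : ∃ C : ℝ, 0 ≤ C ∧ ∀ᶠ n : ℕ in atTop, ∀ (f : Config n → ℝ) (ε : ℝ),
    (∀ i x, |dd i f x| ≤ ε) → vr (ham n α h) f ≤ ε ^ 2 * (C * n ^ 2 + vr (ham n α h) tot)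
  conc_deg : ∀ ε > 0, ∀ᶠ n : ℕ in atTop, ∀ v : Fin n, (n : ℝ) ^ 2 *
    av (ham n α h) (fun x => if ε * n < |deg v x - p * n| then (1 : ℝ) else 0) ≤ ε
  conc_cc : ∀ ε > 0, ∀ᶠ n : ℕ in atTop, ∀ e : Edge n, (n : ℝ) ^ 2 *
    av (ham n α h) (fun x => if ε * n < |cc e x - p ^ 2 * n| then (1 : ℝ) else 0) ≤ ε

end Crit

/-! ### External fields -/

section Generic

variable {I : Type*} [Fintype I] [DecidableEq I]

lemma av_pos (H : (I → Bool) → ℝ) {f : (I → Bool) → ℝ} (h : ∀ x, 0 < f x) : 0 < av H f := by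
  unfold av
  rw [smul_eq_mul]
  exact mul_pos (inv_pos.2 (pf_pos H))
    (Finset.sum_pos (fun x _ => mul_pos (Real.exp_pos _) (h x)) Finset.univ_nonempty)

lemma av_lt_one (H : (I → Bool) → ℝ) {f : (I → Bool) → ℝ} (h : ∀ x, f x < 1) : av H f < 1 := by
  have := av_pos H (f := fun x => 1 - f x) (fun x => by linarith [h x])
  rw [av_sub, av_const] at this
  linarith

lemma hasDerivAt_pf (G : (I → Bool) → ℝ) (W f : (I → Bool) → ℝ) (s : ℝ) :
    HasDerivAt (fun s => ∑ x, Real.exp (G x + s * W x) * f x)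
      (∑ x, Real.exp (G x + s * W x) * (f x * W x)) s := by
  refine HasDerivAt.fun_sum fun x _ => ?_
  have h1 : HasDerivAt (fun s : ℝ => G x + s * W x) (W x) s := by
    simpa using ((hasDerivAt_id s).mul_const (W x)).const_add (G x)
  refine (h1.exp.mul_const (f x)).congr_deriv ?_
  ring

/-- Differentiating an expectation in an external field gives a covariance. -/
lemma hasDerivAt_av (G : (I → Bool) → ℝ) (W f : (I → Bool) → ℝ) (s : ℝ) :
    HasDerivAt (fun s => av (fun x => G x + s * W x) f)
      (cov (fun x => G x + s * W x) f W) s := by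
  have h1 := hasDerivAt_pf G W f s
  have h2 := hasDerivAt_pf G W (fun _ => 1) s
  have hpos : (∑ x, Real.exp (G x + s * W x) * 1) ≠ 0 := by
    simpa [pf] using (pf_pos (fun x => G x + s * W x)).ne'
  have h3 := h1.div h2 hpos
  have e : (fun s => av (fun x => G x + s * W x) f)
      = (fun s => ∑ x, Real.exp (G x + s * W x) * f x) /
        (fun s => ∑ x, Real.exp (G x + s * W x) * 1) := by
    funext s
    simp only [av, pf, Pi.div_apply, smul_eq_mul, mul_one]
    rw [inv_mul_eq_div]
  rw [e]
  refine h3.congr_deriv ?_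
  simp only [cov, av, pf, smul_eq_mul, mul_one, one_mul] at hpos ⊢
  field_simp

lemma pf_tot (c : ℝ) : pf (fun x : I → Bool => c * tot x) = (1 + Real.exp c) ^ Fintype.card I := by
  have h1 : ∀ x : I → Bool, Real.exp (c * tot x) = ∏ i, (if x i then Real.exp c else 1) := by
    intro x
    rw [tot, Finset.mul_sum, Real.exp_sum]
    refine Finset.prod_congr rfl fun i _ => ?_
    unfold ind; split_ifs <;> simp
  simp only [pf, h1]
  have := Finset.prod_univ_sum (fun _ : I => (Finset.univ : Finset Bool))
    (fun _ b => if b then Real.exp c else (1 : ℝ))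
  simp only [Fintype.piFinset_univ, Fintype.sum_bool, if_true, Finset.prod_const,
    Finset.card_univ] at this
  rw [← this]; simp [add_comm]

lemma supermod_tot (c : ℝ) : Supermod (fun x : I → Bool => c * tot x) := by
  intro a b
  have key : ∀ p q : Bool, ((if p = true then 1 else 0) + (if q = true then 1 else 0) : ℝ)
      = (if p ⊓ q = true then 1 else 0) + (if p ⊔ q = true then 1 else 0) := by
    intro p q; cases p <;> cases q <;> simp
  have : (tot a + tot b : ℝ) = tot (a ⊓ b) + tot (a ⊔ b) := by
    simp only [tot, ← Finset.sum_add_distrib]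
    exact Finset.sum_congr rfl fun i _ => key (a i) (b i)
  simp only [← mul_add, this, le_refl]

lemma av_ind_tot (c : ℝ) (i : I) :
    av (fun x : I → Bool => c * tot x) (ind i) = Real.sigmoid c := by
  rw [av_ind_eq]
  have : ∀ x, sg (fun x : I → Bool => c * tot x) i x = Real.sigmoid c := by
    intro x
    have := dd_tot i x
    simp only [sg, dd] at this ⊢
    rw [← mul_sub, this, mul_one]
  simp only [funext this, av_const]

end Generic

/-! ### Edge and cherry densities for `α ≥ 0` -/

section Ferro

variable {n : ℕ}

lemma dd_adj (f : Edge n) (u v : Fin n) (x) : dd f (fun x => adj x u v) x = hit f u v := by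
  simp [dd, adj_up]

lemma adj_mono (u v : Fin n) : Monotone fun x : Config n => adj x u v :=
  monotone_of_dd fun f x => by rw [dd_adj]; exact hit_nonneg _ _ _

lemma adj_mul_mono (u v u' v' : Fin n) : Monotone fun x : Config n => adj x u v * adj x u' v' :=
  fun _ _ h => mul_le_mul (adj_mono u v h) (adj_mono u' v' h) (adj_nonneg _ _ _) (adj_nonneg _ _ _)

lemma deg_mono (v : Fin n) : Monotone (deg (n := n) v) :=
  monotone_of_dd fun f x => dd_deg_nonneg f v x

lemma cc_mono (e : Edge n) : Monotone (cc (n := n) e) :=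
  monotone_of_dd fun f x => dd_cc_nonneg e f x

lemma tot_mono : Monotone (tot : Config n → ℝ) :=
  monotone_of_dd fun f x => by rw [dd_tot]; exact zero_le_one

/-- The edge density. -/
def pn (n : ℕ) (α h : ℝ) : ℝ := av (ham n α h) tot * 2 / (n * (n - 1))

lemma sum_pairs (φ : Fin n → Fin n → ℝ) (c : ℝ) (h0 : ∀ u, φ u u = 0)
    (hφ : ∀ u v, u ≠ v → φ u v = c) : ∑ u, ∑ v, φ u v = n * (n - 1) * c := by
  have : ∀ u v, φ u v = c - if u = v then c else 0 := by
    intro u v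
    by_cases h : u = v
    · subst h; simp [h0]
    · simp [h, hφ u v h]
  simp only [this, Finset.sum_sub_distrib]
  simp; ring

lemma sum_triples (φ : Fin n → Fin n → Fin n → ℝ) (c : ℝ)
    (hφ : ∀ u v w, φ u v w = if u ≠ v ∧ v ≠ w ∧ w ≠ u then c else 0) :
    ∑ u, ∑ v, ∑ w, φ u v w = n * (n - 1) * (n - 2) * c := by
  have : ∀ u v w, φ u v w = c - (if u = v then c else 0) - (if v = w then c else 0)
      - (if w = u then c else 0) + (if u = v then (if v = w then 2 * c else 0) else 0) := by
    intro u v w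
    rw [hφ]
    by_cases h1 : u = v
    · subst h1
      by_cases h2 : u = w
      · subst h2; simp; ring
      · have h3 := Ne.symm h2
        simp [h2, h3]
    · by_cases h2 : v = w
      · subst h2; have h3 := Ne.symm h1; simp [h1, h3]
      · have h4 := Ne.symm h1
        by_cases h3 : w = u <;> simp [h1, h2, h3, h4]
  simp only [this, Finset.sum_sub_distrib, Finset.sum_add_distrib]
  simp; ring

lemma av_adj (α h : ℝ) {u v : Fin n} (huv : u ≠ v) : av (ham n α h) (fun x => adj x u v) = pn n α h := by
  have h1 : ∑ u' : Fin n, ∑ v' : Fin n, av (ham n α h) (fun x => adj x u' v')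
      = 2 * av (ham n α h) tot := by
    rw [← av_mul, ← funext sum_adj, av_sum]
    exact Finset.sum_congr rfl fun u _ => (av_sum _ _ _).symm
  rw [sum_pairs _ (av (ham n α h) (fun x => adj x u v)) (by simp [av_const])
    (fun u' v' h' => av_adj_eq α h h' huv)] at h1
  have hn : 2 ≤ n := by
    have := Fin.is_lt u; have := Fin.is_lt v
    have : (u : ℕ) ≠ v := fun h => huv (Fin.ext h)
    omega
  have hn' : (2 : ℝ) ≤ n := by exact_mod_cast hn
  have : (n : ℝ) * (n - 1) ≠ 0 := by
    have : (0 : ℝ) < n - 1 := by linarith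
    positivity
  rw [pn, eq_div_iff this]; linarith

lemma pn_mem (α h : ℝ) (hn : 2 ≤ n) : 0 < pn n α h ∧ pn n α h < 1 := by
  have huv : (⟨0, by omega⟩ : Fin n) ≠ ⟨1, by omega⟩ := by simp
  rw [← av_adj α h huv]
  simp only [adj_mkE _ _ _ huv]
  have := av_ind_eq (ham n α h) (mkE _ _ huv)
  rw [show av (ham n α h) (fun x => ind (mkE _ _ huv) x) = _ from this]
  exact ⟨av_pos _ (sg_pos _ _), av_lt_one _ (sg_lt_one _ _)⟩

lemma av_deg (α h : ℝ) (v : Fin n) : av (ham n α h) (deg v) = (n - 1) * pn n α h := by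
  unfold deg
  rw [av_sum]
  have : ∀ u, av (ham n α h) (fun x => adj x v u) = pn n α h - if v = u then pn n α h else 0 := by
    intro u
    by_cases h : v = u
    · subst h; simp [av_const]
    · simp [av_adj α _ h, h]
  simp only [this, Finset.sum_sub_distrib]; simp; ring

lemma av_cod (α h : ℝ) {u v : Fin n} (huv : u ≠ v) (q : ℝ)
    (hq : ∀ w, u ≠ w → v ≠ w → av (ham n α h) (fun x => adj x u w * adj x v w) = q) :
    av (ham n α h) (cod u v) = (n - 2) * q := by
  unfold cod
  rw [av_sum]
  have : ∀ w, av (ham n α h) (fun x => adj x u w * adj x v w)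
      = q - (if u = w then q else 0) - (if v = w then q else 0) := by
    intro w
    by_cases h1 : u = w
    · subst h1; have := huv.symm; simp [av_const, this]
    · by_cases h2 : v = w
      · subst h2; simp [av_const, huv]
      · simp [h1, h2, hq w h1 h2]
  simp only [this, Finset.sum_sub_distrib]; simp; ring

variable {α : ℝ}

/-- The lower bound for the cherry density is the FKG inequality for two edges. -/
lemma cherry_ge (hα : 0 ≤ α) (h : ℝ) {u v w : Fin n} (h2 : v ≠ w) (h3 : u ≠ w) :
    pn n α h ^ 2 ≤ av (ham n α h) (fun x => adj x u w * adj x v w) := by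
  have := av_mul_ge (ham_supermod hα h) (adj_mono u w) (adj_mono v w)
  rw [av_adj α h h3, av_adj α h h2] at this
  rw [sq]; exact this

/-- The variance of the edge count contains all covariances of adjacent edges; by FKG the remaining
covariances are nonnegative. -/
lemma cherry_le (hα : 0 ≤ α) (h : ℝ) {u v w : Fin n} (h1 : u ≠ v) (h2 : v ≠ w) (h3 : u ≠ w) :
    n * (n - 1) * (n - 2) * (av (ham n α h) (fun x => adj x u w * adj x v w) - pn n α h ^ 2)
      ≤ 4 * vr (ham n α h) tot := by
  set H := ham n α h
  set c := av H (fun x => adj x u w * adj x v w) - pn n α h ^ 2 with hc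
  have hS := ham_supermod (n := n) hα h
  have e1 : ∀ a : Fin n, cov H (deg a) (deg a) ≤ 2 * cov H (deg a) tot := by
    intro a
    have : 2 * cov H (deg a) tot = ∑ b, cov H (deg b) (deg a) := by
      rw [cov_comm, ← cov_mul_left, ← funext sum_deg, cov_sum_left]
    rw [this]
    exact Finset.single_le_sum (f := fun b => cov H (deg b) (deg a))
      (fun b _ => cov_nonneg hS (deg_mono b) (deg_mono a)) (Finset.mem_univ a)
  have e2 : 4 * vr H tot = ∑ a, 2 * cov H (deg a) tot := by
    rw [← Finset.mul_sum, ← cov_sum_left, funext sum_deg, cov_mul_left]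
    unfold vr; ring
  have e3 : ∀ a : Fin n, cov H (deg a) (deg a)
      = ∑ b, ∑ b', cov H (fun x => adj x a b) (fun x => adj x a b') := by
    intro a
    have : cov H (deg a) (deg a) = cov H (fun x => ∑ b, adj x a b) (deg a) := rfl
    rw [this, cov_sum_left]
    refine Finset.sum_congr rfl fun b _ => ?_
    have : cov H (fun x => adj x a b) (deg a) = cov H (fun x => adj x a b) (fun x => ∑ b, adj x a b) :=
      rfl
    rw [this, cov_comm, cov_sum_left]
    exact Finset.sum_congr rfl fun b' _ => cov_comm _ _ _
  have e4 : ∀ a b b' : Fin n, (if a ≠ b ∧ b ≠ b' ∧ b' ≠ a then c else 0)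
      ≤ cov H (fun x => adj x a b) (fun x => adj x a b') := by
    intro a b b'
    split_ifs with hd
    · obtain ⟨d1, d2, d3⟩ := hd
      refine le_of_eq ?_
      simp only [cov]
      rw [av_adj α h d1, av_adj α h d3.symm, hc, ← sq]
      congr 1
      rw [av_cherry_eq α h h1 h2 h3 d2 d3 d1.symm]
      refine av_congr _ fun x => ?_
      rw [adj_symm x b a, adj_symm x b' a]
    · exact cov_nonneg hS (adj_mono _ _) (adj_mono _ _)
  calc n * (n - 1) * (n - 2) * c
      = ∑ a : Fin n, ∑ b : Fin n, ∑ b' : Fin n, (if a ≠ b ∧ b ≠ b' ∧ b' ≠ a then c else 0) :=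
        (sum_triples _ c fun _ _ _ => rfl).symm
    _ ≤ ∑ a, ∑ b, ∑ b', cov H (fun x => adj x a b) (fun x => adj x a b') :=
        Finset.sum_le_sum fun a _ => Finset.sum_le_sum fun b _ => Finset.sum_le_sum fun b' _ =>
          e4 a b b'
    _ = ∑ a, cov H (deg a) (deg a) := Finset.sum_congr rfl fun a _ => (e3 a).symm
    _ ≤ ∑ a, 2 * cov H (deg a) tot := Finset.sum_le_sum fun a _ => e1 a
    _ = 4 * vr H tot := e2.symm

/-- The triangle density exceeds the cube of the edge density by at most three times the
covariance of adjacent edges. -/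
lemma triangle_le (hα : 0 ≤ α) (h : ℝ) {q : ℝ} (hn : 2 ≤ n)
    (hq : ∀ u v w : Fin n, u ≠ v → v ≠ w → u ≠ w →
      av (ham n α h) (fun x => adj x u w * adj x v w) ≤ pn n α h ^ 2 + q) (hq0 : 0 ≤ q) :
    6 * av (ham n α h) Tr ≤ n * (n - 1) * (n - 2) * (pn n α h ^ 3 + 3 * q) := by
  set H := ham n α h
  set p := pn n α h
  have hS := ham_supermod (n := n) hα h
  obtain ⟨p0, p1⟩ := pn_mem α h hn
  have e1 : 6 * av H Tr = ∑ u, ∑ v, ∑ w, av H (fun x => adj x u v * adj x v w * adj x w u) := by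
    rw [← av_mul, ← funext six_Tr, av_sum]
    refine Finset.sum_congr rfl fun u _ => ?_
    rw [av_sum]
    exact Finset.sum_congr rfl fun v _ => av_sum _ _ _
  rw [e1, ← sum_triples (n := n) _ (p ^ 3 + 3 * q) fun _ _ _ => rfl]
  refine Finset.sum_le_sum fun u _ => Finset.sum_le_sum fun v _ => Finset.sum_le_sum fun w _ => ?_
  split_ifs with hd
  · obtain ⟨d1, d2, d3⟩ := hd
    have m : Monotone fun x : Config n => adj x u v + adj x v w - adj x u v * adj x v w := by
      intro a b hab
      have k1 := adj_mono u v hab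
      have k2 := adj_mono v w hab
      have := adj_le_one a u v
      have := adj_le_one b v w
      simp only at k1 k2 ⊢
      nlinarith
    have c1 := cov_nonneg hS m (adj_mono w u)
    rw [cov_sub_left, cov_add_left] at c1
    have c2 : cov H (fun x => adj x u v) (fun x => adj x w u) ≤ q := by
      have := hq v w u d2 d3 d1.symm
      simp only [cov]
      rw [av_adj α h d1, av_adj α h d3, ← sq,
        show av (ham n α h) (fun x => adj x u v * adj x w u)
          = av (ham n α h) (fun x => adj x v u * adj x w u) from
          av_congr _ fun x => by rw [adj_symm x u v]]
      linarith
    have c3 : cov H (fun x => adj x v w) (fun x => adj x w u) ≤ q := by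
      have := hq v u w d1.symm d3.symm d2
      simp only [cov]
      rw [av_adj α h d2, av_adj α h d3, ← sq,
        show av (ham n α h) (fun x => adj x v w * adj x w u)
          = av (ham n α h) (fun x => adj x v w * adj x u w) from
          av_congr _ fun x => by rw [adj_symm x u w]]
      linarith
    have c4 : av H (fun x => adj x u v * adj x v w) ≤ p ^ 2 + q := by
      have := hq u w v d3.symm d2.symm d1
      rwa [show av (ham n α h) (fun x => adj x u v * adj x w v)
          = av (ham n α h) (fun x => adj x u v * adj x v w) from
          av_congr _ fun x => by rw [adj_symm x w v]] at this
    have c5 : av H (fun x => adj x u v * adj x v w * adj x w u)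
        = cov H (fun x => adj x u v * adj x v w) (fun x => adj x w u)
          + av H (fun x => adj x u v * adj x v w) * p := by
      simp only [cov]; rw [av_adj α h d3]; ring
    rw [c5]
    have : av H (fun x => adj x u v * adj x v w) * p ≤ (p ^ 2 + q) * p :=
      mul_le_mul_of_nonneg_right c4 p0.le
    nlinarith
  · refine le_of_eq ?_
    have : ∀ x, adj x u v * adj x v w * adj x w u = 0 := by
      intro x
      by_cases a : u = v
      · subst a; simp
      · by_cases b : v = w
        · subst b; simp
        · by_cases c : w = u
          · subst c; simp
          · exact absurd ⟨a, b, c⟩ hd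
    simp only [this, av_const]

end Ferro

/-! ### The free energy for `α ≥ 0` -/

section FreeEnergy

variable {n : ℕ} {α : ℝ}

lemma ham_shift (α h t : ℝ) (x : Config n) : ham n α (h + t) x = ham n α h x + t * tot x := by
  simp only [ham_eq]; ring

lemma ham_fun (α h : ℝ) : ham n α h = fun x => α / n * Tr x + h * tot x := funext (ham_eq n α h)

/-- By the mean value theorem the variance of the edge count is of order `n²` for some field in
every interval. -/
lemma exists_vr_le (α h : ℝ) {δ : ℝ} (hδ : 0 < δ) :
    ∃ h' ∈ Set.Ioo h (h + δ), vr (ham n α h') tot ≤ (n * (n - 1) / 2) / δ := by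
  have hd : ∀ s, HasDerivAt (fun s => av (ham n α s) tot) (vr (ham n α s) tot) s := by
    intro s
    simp only [ham_fun]
    exact hasDerivAt_av _ tot tot s
  obtain ⟨c, hc, h2⟩ := exists_hasDerivAt_eq_slope _ _ (show h < h + δ by linarith)
    (fun s _ => (hd s).continuousAt.continuousWithinAt) (fun s _ => hd s)
  refine ⟨c, hc, ?_⟩
  rw [h2, add_sub_cancel_left]
  refine div_le_div_of_nonneg_right ?_ hδ.le
  have h3 : av (ham n α (h + δ)) tot ≤ n * (n - 1) / 2 := by
    rw [← card_edge]; exact av_le_const _ tot_le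
  have h4 : 0 ≤ av (ham n α h) tot := av_nonneg _ tot_nonneg
  linarith

lemma exists_cherry_le (hα : 0 ≤ α) (h : ℝ) {δ : ℝ} (hδ : 0 < δ) (hn : 3 ≤ n) :
    ∃ h' ∈ Set.Ioo h (h + δ), ∀ u v w : Fin n, u ≠ v → v ≠ w → u ≠ w →
      av (ham n α h') (fun x => adj x u w * adj x v w) ≤ pn n α h' ^ 2 + 2 / (δ * (n - 2)) := by
  obtain ⟨h', hh, hv⟩ := exists_vr_le (n := n) α h hδ
  refine ⟨h', hh, fun u v w h1 h2 h3 => ?_⟩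
  have := cherry_le hα h' h1 h2 h3
  have hn' : (3 : ℝ) ≤ n := by exact_mod_cast hn
  have k1 : (0 : ℝ) < n - 2 := by linarith
  have k2 : (0 : ℝ) < n * (n - 1) := by nlinarith
  have k3 : n * (n - 1) * (n - 2) * (av (ham n α h') (fun x => adj x u w * adj x v w) - pn n α h' ^ 2)
      ≤ n * (n - 1) * (n - 2) * (2 / (δ * (n - 2))) := by
    refine this.trans ((mul_le_mul_of_nonneg_left hv (by norm_num)).trans (le_of_eq ?_))
    field_simp; ring
  have := le_of_mul_le_mul_left k3 (mul_pos k2 k1)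
  linarith

/-- The free energy per edge. -/
def fe (n : ℕ) (α h : ℝ) : ℝ := Real.log (pf (ham n α h)) * 2 / (n * (n - 1))

lemma fe_shift (α h t : ℝ) (hn : 2 ≤ n) : fe n α h + t * pn n α h ≤ fe n α (h + t) := by
  have hn' : (2 : ℝ) ≤ n := by exact_mod_cast hn
  have k2 : (0 : ℝ) < n * (n - 1) := by nlinarith
  have := log_pf_ge (ham n α h) (ham n α (h + t))
  simp only [ham_shift, add_sub_cancel_left, av_mul] at this
  rw [fe, fe, pn, mul_div, ← add_div, div_le_div_iff_of_pos_right k2]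
  linarith

lemma log_pf_tot {u : ℝ} (h0 : 0 < u) (h1 : u < 1) :
    Real.log (pf (fun x : Config n => (Real.log u - Real.log (1 - u)) * tot x))
      = - (n * (n - 1) / 2) * Real.log (1 - u) := by
  have h1' : 0 < 1 - u := by linarith
  rw [pf_tot, Real.log_pow, card_edge, ← Real.log_div h0.ne' h1'.ne', Real.exp_log (by positivity),
    show 1 + u / (1 - u) = (1 - u)⁻¹ by field_simp; ring, Real.log_inv]
  ring

/-- The Gibbs variational principle with the Erdős–Rényi measure of density `u`. -/
lemma fe_ge (hα : 0 ≤ α) (h : ℝ) (hn : 2 ≤ n) {u : ℝ} (h0 : 0 < u) (h1 : u < 1) :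
    2 * phiET α h u - α / n ≤ fe n α h := by
  set c := Real.log u - Real.log (1 - u) with hc
  have hn' : (2 : ℝ) ≤ n := by exact_mod_cast hn
  have k2 : (0 : ℝ) < n * (n - 1) := by nlinarith
  set P : Config n → ℝ := fun x => c * tot x with hP
  have hS : Supermod P := supermod_tot c
  have hu : ∀ e : Edge n, av P (ind e) = u := fun e => by
    rw [hP, av_ind_tot, sigmoid_logit h0 h1 hc]
  have hadj : ∀ a b : Fin n, a ≠ b → av P (fun x => adj x a b) = u := fun a b hab => by
    simp only [adj_mkE _ _ _ hab]; exact hu _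
  have htot : av P tot = n * (n - 1) / 2 * u := by
    have : av P tot = ∑ e, av P (ind e) := av_sum _ _ _
    rw [this]; simp only [hu, Finset.sum_const, nsmul_eq_mul, Finset.card_univ, card_edge]
  have hTr : n * (n - 1) * (n - 2) * u ^ 3 ≤ 6 * av P Tr := by
    have e1 : 6 * av P Tr = ∑ u, ∑ v, ∑ w, av P (fun x => adj x u v * adj x v w * adj x w u) := by
      rw [← av_mul, ← funext six_Tr, av_sum]
      refine Finset.sum_congr rfl fun u _ => ?_
      rw [av_sum]
      exact Finset.sum_congr rfl fun v _ => av_sum _ _ _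
    rw [e1, ← sum_triples (n := n) _ (u ^ 3) fun _ _ _ => rfl]
    refine Finset.sum_le_sum fun a _ => Finset.sum_le_sum fun b _ => Finset.sum_le_sum fun d _ => ?_
    split_ifs with hd
    · obtain ⟨d1, d2, d3⟩ := hd
      have c1 := av_mul_ge hS (adj_mul_mono a b b d) (adj_mono d a)
      have c2 := av_mul_ge hS (adj_mono a b) (adj_mono b d)
      rw [hadj _ _ d3] at c1
      rw [hadj _ _ d1, hadj _ _ d2] at c2
      nlinarith
    · exact av_nonneg _ fun x => mul_nonneg (mul_nonneg (adj_nonneg _ _ _) (adj_nonneg _ _ _))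
        (adj_nonneg _ _ _)
  have main := log_pf_ge P (ham n α h)
  have e2 : av P (fun x => ham n α h x - P x) = α / n * av P Tr + (h - c) * av P tot := by
    rw [← av_mul, ← av_mul, ← av_add]
    exact av_congr _ fun x => by rw [ham_eq]; simp only [hP]; ring
  rw [e2, htot, hP, hc, log_pf_tot h0 h1, ← hP, ← hc] at main
  rw [fe, le_div_iff₀ k2]
  have k3 : α / n * (n * (n - 1) * (n - 2) * u ^ 3) ≤ α / n * (6 * av P Tr) :=
    mul_le_mul_of_nonneg_left hTr (by positivity)
  have hn0 : (n : ℝ) ≠ 0 := by linarith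
  have k4 : α / n * (n * (n - 1) * (n - 2) * u ^ 3) = α * (n - 1) * n * u ^ 3 - 2 * α * (n - 1) * u ^ 3 := by
    field_simp
  have k5 : α / n * (n * (n - 1)) = α * (n - 1) := by field_simp
  have k6 : u ^ 3 ≤ 1 := pow_le_one₀ h0.le h1.le
  have k7 : α * (n - 1) * u ^ 3 ≤ α * (n - 1) * 1 :=
    mul_le_mul_of_nonneg_left k6 (mul_nonneg hα (by linarith))
  have k8 : 0 ≤ α * (n - 1) := mul_nonneg hα (by linarith)
  simp only [phiET, Ifun]
  rw [sub_mul, k5]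
  simp only [hc] at main
  nlinarith

/-- The Gibbs variational principle with the roles of the two measures exchanged: the entropy of the
model is at most that of the product measure with the same edge density. -/
lemma fe_le (hα : 0 ≤ α) (h : ℝ) (hn : 3 ≤ n) {q : ℝ} (hq0 : 0 ≤ q)
    (hq : ∀ u v w : Fin n, u ≠ v → v ≠ w → u ≠ w →
      av (ham n α h) (fun x => adj x u w * adj x v w) ≤ pn n α h ^ 2 + q) :
    fe n α h ≤ 2 * phiET α h (pn n α h) + α * q := by
  have hn' : (3 : ℝ) ≤ n := by exact_mod_cast hn
  have hn0 : (0 : ℝ) < n := by linarith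
  have k2 : (0 : ℝ) < n * (n - 1) := by nlinarith
  obtain ⟨p0, p1⟩ := pn_mem (n := n) α h (by omega)
  have hT := triangle_le hα h (by omega) hq hq0
  set p := pn n α h with hp
  set c := Real.log p - Real.log (1 - p) with hc
  have main := log_pf_ge (ham n α h) (fun x => c * tot x)
  have htot : av (ham n α h) tot = n * (n - 1) / 2 * p := by
    rw [hp, pn]
    have : (n : ℝ) - 1 ≠ 0 := by linarith
    field_simp
  have e2 : av (ham n α h) (fun x => c * tot x - ham n α h x)
      = (c - h) * av (ham n α h) tot - α / n * av (ham n α h) Tr := by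
    rw [← av_mul, ← av_mul, ← av_sub]
    exact av_congr _ fun x => by rw [ham_eq]; ring
  rw [e2, htot, hc, log_pf_tot p0 p1] at main
  rw [fe, div_le_iff₀ k2]
  have k3 : α / n * (6 * av (ham n α h) Tr) ≤ α / n * (n * (n - 1) * (n - 2) * (p ^ 3 + 3 * q)) :=
    mul_le_mul_of_nonneg_left hT (by positivity)
  have k4 : α / n * (n * (n - 1) * (n - 2) * (p ^ 3 + 3 * q))
      = α * (p ^ 3 + 3 * q) * (n * (n - 1)) - 2 * (α * (p ^ 3 + 3 * q) * (n - 1)) := by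
    field_simp
  have k5 : 0 ≤ α * (p ^ 3 + 3 * q) * (n - 1) :=
    mul_nonneg (mul_nonneg hα (by positivity)) (by linarith)
  simp only [phiET, Ifun]
  nlinarith

/-- The mean-field upper bound for the free energy, at the price of smearing the field. -/
lemma fe_le_max (hα : 0 ≤ α) (h : ℝ) (hn : 3 ≤ n) {δ M : ℝ} (hδ : 0 < δ)
    (hM : ∀ u ∈ Set.Icc (0 : ℝ) 1, phiET α h u ≤ M) :
    fe n α h ≤ 2 * M + δ + 2 * α / (δ * (n - 2)) := by
  obtain ⟨h', ⟨h1, h2⟩, hq⟩ := exists_cherry_le hα h hδ hn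
  have hn' : (3 : ℝ) ≤ n := by exact_mod_cast hn
  have k1 : (0 : ℝ) < n - 2 := by linarith
  have := fe_le hα h' hn (by positivity) hq
  obtain ⟨p0, p1⟩ := pn_mem (n := n) α h' (by omega)
  obtain ⟨r0, r1⟩ := pn_mem (n := n) α h (by omega)
  have e1 := fe_shift (n := n) α h (h' - h) (by omega)
  rw [add_sub_cancel] at e1
  have e2 : phiET α h' (pn n α h') = phiET α h (pn n α h') + (h' - h) / 2 * pn n α h' := by
    simp only [phiET]; ring
  have e3 := hM _ ⟨p0.le, p1.le⟩
  have e4 : α * (2 / (δ * (n - 2))) = 2 * α / (δ * (n - 2)) := by ring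
  have e5 : 0 ≤ (h' - h) * pn n α h := mul_nonneg (by linarith) r0.le
  have e6 : (h' - h) * pn n α h' ≤ δ * 1 := mul_le_mul (by linarith) p1.le p0.le hδ.le
  linarith

lemma tendsto_fe (hα : 0 ≤ α) (h : ℝ) {u : ℝ} (h0 : 0 < u) (h1 : u < 1)
    (hmax : ∀ w ∈ Set.Icc (0 : ℝ) 1, phiET α h w ≤ phiET α h u) :
    Tendsto (fun n => fe n α h) atTop (𝓝 (2 * phiET α h u)) := by
  rw [Metric.tendsto_atTop']
  intro ε hε
  have t1 : Tendsto (fun n : ℕ => α / (n : ℝ)) atTop (𝓝 0) := tendsto_const_div_atTop_nhds_zero_nat α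
  have t2 : Tendsto (fun n : ℕ => 2 * α / (ε / 2 * ((n : ℝ) - 2))) atTop (𝓝 0) := by
    refine Tendsto.div_atTop tendsto_const_nhds ?_
    exact Tendsto.const_mul_atTop (by positivity)
      (tendsto_atTop_add_const_right _ (-2) tendsto_natCast_atTop_atTop)
  have := (t1.eventually (gt_mem_nhds hε)).and
    ((t2.eventually (gt_mem_nhds (half_pos hε))).and (eventually_ge_atTop 3))
  obtain ⟨N, hN⟩ := eventually_atTop.1 this
  refine ⟨N, fun n hn => ?_⟩
  obtain ⟨a1, a2, a3⟩ := hN n hn.le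
  have b1 := fe_ge (n := n) hα h (by omega) h0 h1
  have b2 := fe_le_max (n := n) hα h a3 (half_pos hε) hmax
  rw [Real.dist_eq, abs_lt]
  constructor <;> linarith

/-- Convexity of the free energy transfers its convergence to the edge density. -/
lemma tendsto_pn (hα : 0 ≤ α) {J : Set ℝ} (hJ : IsOpen J) {u : ℝ → ℝ} (hu : ContinuousOn u J)
    (h01 : ∀ h ∈ J, 0 < u h ∧ u h < 1)
    (hmax : ∀ h ∈ J, ∀ w ∈ Set.Icc (0 : ℝ) 1, phiET α h w ≤ phiET α h (u h))
    {h : ℝ} (hh : h ∈ J) : Tendsto (fun n => pn n α h) atTop (𝓝 (u h)) := by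
  have hc : ContinuousAt u h := hu.continuousAt (hJ.mem_nhds hh)
  have hΛ : ∀ h₁ ∈ J, ∀ h₂ ∈ J, 2 * phiET α h₁ (u h₁) - 2 * phiET α h₂ (u h₂)
      ≤ (h₁ - h₂) * u h₁ := by
    intro h₁ m₁ h₂ m₂
    have := hmax h₂ m₂ (u h₁) ⟨(h01 h₁ m₁).1.le, (h01 h₁ m₁).2.le⟩
    have e : phiET α h₁ (u h₁) = phiET α h₂ (u h₁) + (h₁ - h₂) / 2 * u h₁ := by
      simp only [phiET]; ring
    linarith
  have hF : ∀ h₁ ∈ J, Tendsto (fun n => fe n α h₁) atTop (𝓝 (2 * phiET α h₁ (u h₁))) :=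
    fun h₁ m => tendsto_fe hα h₁ (h01 h₁ m).1 (h01 h₁ m).2 (hmax h₁ m)
  rw [Metric.tendsto_atTop']
  intro ε hε
  have near : ∀ᶠ s in 𝓝 h, s ∈ J ∧ dist (u s) (u h) < ε / 2 :=
    (hJ.eventually_mem hh).and (Metric.tendsto_nhds.1 hc _ (half_pos hε))
  obtain ⟨r, hr, hball⟩ := Metric.eventually_nhds_iff.1 near
  set t := r / 2 with ht
  have t0 : 0 < t := by positivity
  obtain ⟨m1, d1⟩ := hball (y := h + t) (by rw [Real.dist_eq, add_sub_cancel_left, abs_of_pos t0]; linarith)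
  obtain ⟨m2, d2⟩ := hball (y := h + -t) (by
    rw [Real.dist_eq, add_sub_cancel_left, abs_neg, abs_of_pos t0]; linarith)
  rw [Real.dist_eq, abs_lt] at d1 d2
  have s1 := (hF _ m1).sub (hF _ hh)
  have s2 := (hF _ m2).sub (hF _ hh)
  have := (s1.eventually (gt_mem_nhds (lt_add_of_pos_right _ (show 0 < t * (ε / 2) by positivity)))).and
    ((s2.eventually (gt_mem_nhds (lt_add_of_pos_right _ (show 0 < t * (ε / 2) by positivity)))).and
      (eventually_ge_atTop 2))
  obtain ⟨N, hN⟩ := eventually_atTop.1 this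
  refine ⟨N, fun n hn => ?_⟩
  obtain ⟨a1, a2, a3⟩ := hN n hn.le
  have b1 := fe_shift (n := n) α h t a3
  have b2 := fe_shift (n := n) α h (-t) a3
  have c1 := hΛ _ m1 _ hh
  have c2 := hΛ _ m2 _ hh
  rw [add_sub_cancel_left] at c1 c2
  have f1 : t * pn n α h < t * (u (h + t) + ε / 2) := by linarith
  have f2 : t * (u (h + -t) - ε / 2) < t * pn n α h := by linarith
  have g1 := lt_of_mul_lt_mul_left f1 t0.le
  have g2 := lt_of_mul_lt_mul_left f2 t0.le
  rw [Real.dist_eq, abs_lt]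
  constructor <;> linarith

/-- A squeeze for the probability of two adjacent edges. -/
lemma tendsto_cherry (hα : 0 ≤ α) {J : Set ℝ} (hJ : IsOpen J) {u : ℝ → ℝ} (hu : ContinuousOn u J)
    (h01 : ∀ h ∈ J, 0 < u h ∧ u h < 1)
    (hmax : ∀ h ∈ J, ∀ w ∈ Set.Icc (0 : ℝ) 1, phiET α h w ≤ phiET α h (u h))
    {h : ℝ} (hh : h ∈ J) {ε : ℝ} (hε : 0 < ε) : ∀ᶠ n : ℕ in atTop, ∀ e : Edge n,
      |av (ham n α h) (cc e) - u h ^ 2 * n| ≤ ε * n := by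
  have hc : ContinuousAt (fun s => u s ^ 2) h := (hu.continuousAt (hJ.mem_nhds hh)).pow 2
  have near : ∀ᶠ s in 𝓝 h, s ∈ J ∧ dist (u s ^ 2) (u h ^ 2) < ε / 4 :=
    (hJ.eventually_mem hh).and (Metric.tendsto_nhds.1 hc _ (by positivity))
  obtain ⟨r, hr, hball⟩ := Metric.eventually_nhds_iff.1 near
  set t := r / 2 with ht
  have t0 : 0 < t := by positivity
  obtain ⟨m1, d1⟩ := hball (y := h + t) (by rw [Real.dist_eq, add_sub_cancel_left, abs_of_pos t0]; linarith)
  rw [Real.dist_eq, abs_lt] at d1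
  have s1 := (tendsto_pn hα hJ hu h01 hmax hh).pow 2
  have s2 := (tendsto_pn hα hJ hu h01 hmax m1).pow 2
  have s3 : Tendsto (fun n : ℕ => 2 / (t * ((n : ℝ) - 2))) atTop (𝓝 0) := by
    refine Tendsto.div_atTop tendsto_const_nhds ?_
    exact Tendsto.const_mul_atTop (by positivity)
      (tendsto_atTop_add_const_right _ (-2) tendsto_natCast_atTop_atTop)
  have s4 : Tendsto (fun n : ℕ => 2 / (n : ℝ)) atTop (𝓝 0) := tendsto_const_div_atTop_nhds_zero_nat 2
  have hε4 : 0 < ε / 4 := by positivity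
  filter_upwards [s1.eventually (lt_mem_nhds (sub_lt_self _ hε4)),
    s2.eventually (gt_mem_nhds (lt_add_of_pos_right _ hε4)),
    s3.eventually (gt_mem_nhds hε4), s4.eventually (gt_mem_nhds hε4), eventually_ge_atTop 3]
    with n a1 a2 a3 a4 hn e
  obtain ⟨v, w, hvw, rfl⟩ := exists_mkE e
  have hn' : (3 : ℝ) ≤ n := by exact_mod_cast hn
  have hn0 : (0 : ℝ) < n := by linarith
  obtain ⟨z, hz1, hz2⟩ : ∃ z : Fin n, v ≠ z ∧ w ≠ z := by
    obtain ⟨z, hz⟩ : ∃ z, z ∉ ({v, w} : Finset (Fin n)) := by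
      by_contra hcon
      push Not at hcon
      have : (Finset.univ : Finset (Fin n)) ⊆ {v, w} := fun z _ => hcon z
      have := Finset.card_le_card this
      have := Finset.card_le_two (a := v) (b := w)
      simp at *; omega
    simp only [Finset.mem_insert, Finset.mem_singleton, not_or] at hz
    exact ⟨z, Ne.symm hz.1, Ne.symm hz.2⟩
  set q := av (ham n α h) (fun x => adj x v z * adj x w z) with hq
  have hcod : av (ham n α h) (cc (mkE v w hvw)) = (n - 2) * q := by
    rw [funext (cc_mkE v w hvw)]
    exact av_cod α h hvw q fun z' h1 h2 => av_cherry_eq α h hvw h2 h1 hvw hz2 hz1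
  have q1 : pn n α h ^ 2 ≤ q := cherry_ge hα h hz2 hz1
  have q2 : q ≤ pn n α (h + t) ^ 2 + 2 / (t * (n - 2)) := by
    obtain ⟨h', ⟨k1, k2⟩, hq'⟩ := exists_cherry_le (n := n) hα h t0 hn
    have e1 := hq' v w z hvw hz2 hz1
    have e2 : q ≤ av (ham n α h') (fun x => adj x v z * adj x w z) := by
      have := av_le_tilt (ham_supermod (n := n) hα h) (adj_mul_mono v z w z)
        (w := fun x => (h' - h) * tot x)
        (fun a b hab => mul_le_mul_of_nonneg_left (tot_mono hab) (by linarith))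
      rwa [← funext (ham_shift α h (h' - h)), add_sub_cancel] at this
    have e3 : pn n α h' ≤ pn n α (h + t) := by
      have := av_le_tilt (ham_supermod (n := n) hα h') (adj_mono v w)
        (w := fun x => (h + t - h') * tot x)
        (fun a b hab => mul_le_mul_of_nonneg_left (tot_mono hab) (by linarith))
      rwa [← funext (ham_shift α h' (h + t - h')), add_sub_cancel, av_adj α _ hvw,
        av_adj α _ hvw] at this
    have e4 := (pn_mem (n := n) α h' (by omega)).1
    have : pn n α h' ^ 2 ≤ pn n α (h + t) ^ 2 := pow_le_pow_left₀ e4.le e3 2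
    linarith
  have hq0 : 0 ≤ q := (sq_nonneg _).trans q1
  have hq1 : q ≤ 1 := av_le_const _ fun x => mul_le_one₀ (adj_le_one _ _ _) (adj_nonneg _ _ _)
    (adj_le_one _ _ _)
  rw [div_lt_iff₀ hn0] at a4
  rw [hcod, abs_le]
  have l1 : u h ^ 2 - ε / 4 ≤ q := by linarith
  have l2 : q ≤ u h ^ 2 + 3 * (ε / 4) := by linarith
  constructor
  · nlinarith [mul_le_mul_of_nonneg_right l1 hn0.le]
  · nlinarith [mul_le_mul_of_nonneg_right l2 hn0.le]

/-- Exponential tails for an increasing observable with bounded discrete derivatives, from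
comparison with the model in a slightly shifted field. -/
lemma tail_le (hα : 0 ≤ α) (h : ℝ) {Y : Config n → ℝ} (hY : Monotone Y) {D t a r : ℝ} (ht : 0 < t)
    (hD : ∀ i x, dd i Y x ≤ D) (h1 : av (ham n α (h + t * D)) Y ≤ a + r)
    (h2 : a - r ≤ av (ham n α (h + -(t * D))) Y) :
    av (ham n α h) (fun x => if 2 * r < |Y x - a| then (1 : ℝ) else 0) ≤ 2 * Real.exp (-(t * r)) := by
  set H := ham n α h
  have hm := monotone_tot_sub hD
  have b1 : av H (fun x => Real.exp (t * Y x)) ≤ Real.exp (t * (a + r)) := by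
    refine (av_exp_le H _).trans (Real.exp_le_exp.2 ?_)
    rw [av_mul]
    refine mul_le_mul_of_nonneg_left (le_trans ?_ h1) ht.le
    have := tilt_le_av (ham_supermod (n := n) hα (h + t * D)) hY
      (w := fun x => -(t * (D * tot x - Y x)))
      (fun x y hxy => neg_le_neg (mul_le_mul_of_nonneg_left (hm hxy) ht.le))
    refine le_trans (le_of_eq ?_) this
    congr 1
    funext x; rw [ham_shift]; ring
  have b2 : av H (fun x => Real.exp (-t * Y x)) ≤ Real.exp (-t * (a - r)) := by
    refine (av_exp_le H _).trans (Real.exp_le_exp.2 ?_)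
    rw [av_mul, neg_mul, neg_mul]
    refine neg_le_neg (mul_le_mul_of_nonneg_left (h2.trans ?_) ht.le)
    have := av_le_tilt (ham_supermod (n := n) hα (h + -(t * D))) hY
      (w := fun x => t * (D * tot x - Y x))
      (fun x y hxy => mul_le_mul_of_nonneg_left (hm hxy) ht.le)
    refine this.trans (le_of_eq ?_)
    congr 1
    funext x; rw [ham_shift]; ring
  have b3 : ∀ x, (if 2 * r < |Y x - a| then (1 : ℝ) else 0)
      ≤ Real.exp (-(t * (a + 2 * r))) * Real.exp (t * Y x)
        + Real.exp (t * (a - 2 * r)) * Real.exp (-t * Y x) := by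
    intro x
    rw [← Real.exp_add, ← Real.exp_add]
    split_ifs with hx
    · rcases lt_abs.1 hx with hx | hx
      · have : 1 ≤ Real.exp (-(t * (a + 2 * r)) + t * Y x) := Real.one_le_exp (by nlinarith)
        linarith [Real.exp_pos (t * (a - 2 * r) + -t * Y x)]
      · have : 1 ≤ Real.exp (t * (a - 2 * r) + -t * Y x) := Real.one_le_exp (by nlinarith)
        linarith [Real.exp_pos (-(t * (a + 2 * r)) + t * Y x)]
    · positivity
  refine (av_mono H b3).trans ?_
  rw [av_add, av_mul, av_mul]
  have c1 := mul_le_mul_of_nonneg_left b1 (Real.exp_pos (-(t * (a + 2 * r)))).le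
  have c2 := mul_le_mul_of_nonneg_left b2 (Real.exp_pos (t * (a - 2 * r))).le
  rw [← Real.exp_add] at c1 c2
  rw [show -(t * (a + 2 * r)) + t * (a + r) = -(t * r) by ring] at c1
  rw [show t * (a - 2 * r) + -t * (a - r) = -(t * r) by ring] at c2
  linarith

end FreeEnergy

/-! ### The a priori estimates for `α ≥ 0` -/

section IfaceFerro

lemma tendsto_sq_exp {c : ℝ} (hc : 0 < c) :
    Tendsto (fun n : ℕ => (n : ℝ) ^ 2 * (2 * Real.exp (-(c * n)))) atTop (𝓝 0) := by
  have h1 : Tendsto (fun n : ℕ => c * (n : ℝ)) atTop atTop :=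
    Tendsto.const_mul_atTop hc tendsto_natCast_atTop_atTop
  have h2 := ((Real.tendsto_pow_mul_exp_neg_atTop_nhds_zero 2).comp h1).const_mul (2 / c ^ 2)
  rw [mul_zero] at h2
  refine h2.congr fun n => ?_
  simp only [Function.comp]
  field_simp

/-- For `α ≥ 0` the variance bound is a consequence of FKG, and concentration follows from the
exponential tails, as the densities converge in the fields `h ± t` as well. -/
theorem iface_nonneg {α h : ℝ} (hα : 0 ≤ α) {U : Set (ℝ × ℝ)} (hUopen : IsOpen U)
    (hmemU : (α, h) ∈ U) {ustar : ℝ × ℝ → ℝ} (hC1 : ContDiffOn ℝ 1 ustar U)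
    (hrange : ∀ p ∈ U, ustar p ∈ Set.Ioo (0 : ℝ) 1)
    (hmax : ∀ p ∈ U, ∀ u ∈ Set.Icc (0 : ℝ) 1, phiET p.1 p.2 u ≤ phiET p.1 p.2 (ustar p)) :
    Iface α h (ustar (α, h)) := by
  obtain ⟨hcr, hlam, -⟩ := crit_facts hUopen hmemU hC1 hrange hmax
  have hcont : Continuous fun s : ℝ => (α, s) := by fun_prop
  set J : Set ℝ := (fun s : ℝ => (α, s)) ⁻¹' U with hJdef
  have hJ : IsOpen J := hUopen.preimage hcont
  set u : ℝ → ℝ := fun s => ustar (α, s) with hudef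
  have hu : ContinuousOn u J := hC1.continuousOn.comp hcont.continuousOn fun s hs => hs
  have h01 : ∀ s ∈ J, 0 < u s ∧ u s < 1 := fun s hs => hrange _ hs
  have hm : ∀ s ∈ J, ∀ w ∈ Set.Icc (0 : ℝ) 1, phiET α s w ≤ phiET α s (u s) :=
    fun s hs => hmax _ hs
  have hh : h ∈ J := hmemU
  have hc : ContinuousAt u h := hu.continuousAt (hJ.mem_nhds hh)
  change Iface α h (u h)
  refine ⟨(h01 h hh).1, (h01 h hh).2, hcr, hlam, ⟨0, le_rfl, ?_⟩, ?_, ?_⟩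
  · refine Eventually.of_forall fun n f ε hf => ?_
    have := vr_le_of_fkg (ham_supermod (n := n) hα h) hf
    simpa using this
  · intro ε hε
    have near : ∀ᶠ s in 𝓝 h, s ∈ J ∧ dist (u s) (u h) < ε / 8 :=
      (hJ.eventually_mem hh).and (Metric.tendsto_nhds.1 hc _ (by positivity))
    obtain ⟨r, hr, hball⟩ := Metric.eventually_nhds_iff.1 near
    set t := r / 2 with ht
    have t0 : 0 < t := by positivity
    obtain ⟨m1, d1⟩ := hball (y := h + t) (by
      rw [Real.dist_eq, add_sub_cancel_left, abs_of_pos t0]; linarith)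
    obtain ⟨m2, d2⟩ := hball (y := h + -t) (by
      rw [Real.dist_eq, add_sub_cancel_left, abs_neg, abs_of_pos t0]; linarith)
    rw [Real.dist_eq, abs_lt] at d1 d2
    have e8 : 0 < ε / 8 := by positivity
    filter_upwards [(tendsto_pn hα hJ hu h01 hm m1).eventually (gt_mem_nhds (lt_add_of_pos_right _ e8)),
      (tendsto_pn hα hJ hu h01 hm m2).eventually (lt_mem_nhds (sub_lt_self _ e8)),
      (tendsto_sq_exp (show 0 < t * (ε / 2) by positivity)).eventually (gt_mem_nhds hε),
      (tendsto_const_div_atTop_nhds_zero_nat (1 : ℝ)).eventually (gt_mem_nhds e8),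
      eventually_ge_atTop 2] with n a1 a2 a3 a4 hn v
    have hn' : (2 : ℝ) ≤ n := by exact_mod_cast hn
    have hn0 : (0 : ℝ) < n := by linarith
    rw [div_lt_iff₀ hn0] at a4
    have p1 := (pn_mem (n := n) α (h + t) hn)
    have p2 := (pn_mem (n := n) α (h + -t) hn)
    have := tail_le (n := n) hα h (deg_mono v) (D := 1) (a := u h * n) (r := ε / 2 * n) t0
      (fun i x => dd_deg_le i v x) (by
        rw [mul_one, av_deg]
        have l1 : pn n α (h + t) ≤ u h + ε / 4 := by linarith
        nlinarith [mul_le_mul_of_nonneg_right l1 hn0.le]) (by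
        rw [mul_one, av_deg]
        have l1 : u h - ε / 4 ≤ pn n α (h + -t) := by linarith
        nlinarith [mul_le_mul_of_nonneg_right l1 hn0.le])
    rw [show 2 * (ε / 2 * (n : ℝ)) = ε * n by ring,
      show t * (ε / 2 * (n : ℝ)) = t * (ε / 2) * n by ring] at this
    exact (mul_le_mul_of_nonneg_left this (by positivity)).trans a3.le
  · intro ε hε
    have near : ∀ᶠ s in 𝓝 h, s ∈ J ∧ dist (u s ^ 2) (u h ^ 2) < ε / 4 :=
      (hJ.eventually_mem hh).and (Metric.tendsto_nhds.1 (hc.pow 2) _ (by positivity))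
    obtain ⟨r, hr, hball⟩ := Metric.eventually_nhds_iff.1 near
    set t := r / 4 with ht
    have t0 : 0 < t := by positivity
    obtain ⟨m1, d1⟩ := hball (y := h + t * 2) (by
      rw [Real.dist_eq, add_sub_cancel_left, abs_of_pos (by linarith)]; linarith)
    obtain ⟨m2, d2⟩ := hball (y := h + -(t * 2)) (by
      rw [Real.dist_eq, add_sub_cancel_left, abs_neg, abs_of_pos (by linarith)]; linarith)
    rw [Real.dist_eq, abs_lt] at d1 d2
    have e8 : 0 < ε / 4 := by positivity
    filter_upwards [tendsto_cherry hα hJ hu h01 hm m1 e8, tendsto_cherry hα hJ hu h01 hm m2 e8,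
      (tendsto_sq_exp (show 0 < t * (ε / 2) by positivity)).eventually (gt_mem_nhds hε)]
      with n a1 a2 a3 e
    have b1 := (abs_le.1 (a1 e)).2
    have b2 := (abs_le.1 (a2 e)).1
    have hn0 : (0 : ℝ) ≤ n := Nat.cast_nonneg n
    have := tail_le (n := n) hα h (cc_mono e) (D := 2) (a := u h ^ 2 * n) (r := ε / 2 * n) t0
      (fun i x => (le_abs_self _).trans (dd_cc_le_two e i x)) (by nlinarith) (by nlinarith)
    rw [show 2 * (ε / 2 * (n : ℝ)) = ε * n by ring,
      show t * (ε / 2 * (n : ℝ)) = t * (ε / 2) * n by ring] at this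
    exact (mul_le_mul_of_nonneg_left this (by positivity)).trans a3.le

end IfaceFerro

/-! ### The a priori estimates for `-2 < α < 0` -/

section IfaceNeg

variable {n : ℕ}

lemma av_cc_eq (α h : ℝ) (e e' : Edge n) : av (ham n α h) (cc e) = av (ham n α h) (cc e') := by
  obtain ⟨u, v, h1, rfl⟩ := exists_mkE e
  obtain ⟨u', v', h2, rfl⟩ := exists_mkE e'
  obtain ⟨π, e1, e2⟩ : ∃ π : Equiv.Perm (Fin n), π u' = u ∧ π v' = v := by
    refine ⟨Equiv.swap (Equiv.swap u' u v') v * Equiv.swap u' u, ?_, ?_⟩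
    · simp only [Equiv.Perm.mul_apply, Equiv.swap_apply_left]
      refine Equiv.swap_apply_of_ne_of_ne ?_ h1
      intro h3
      have := congrArg (Equiv.swap u' u) h3
      simp at this; exact h2 this
    · simp
  rw [← av_perm α h π (cc (mkE u' v' h2))]
  refine av_congr _ fun x => ?_
  simp only [cc_mkE, cod, adj_perm, e1, e2]
  rw [Equiv.sum_comp π (fun w => adj x u w * adj x v w)]

variable {α : ℝ}

/-- The influence of an edge on the conditional laws of the others has total size at most `|α| / 2`,
so that Dobrushin's condition holds. -/
lemma cov_le_neg (hα : |α| < 2) (h : ℝ) {f g : Config n → ℝ} {D : ℝ} (hD : 0 ≤ D)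
    (hf : ∀ i x, |dd i f x| ≤ D) : |cov (ham n α h) f g|
      ≤ D * (1 / (4 * (1 - |α| / 2))) * ∑ i, av (ham n α h) (fun x => |dd i g x|) := by
  have := cov_le_dobrushin (ham n α h) (c := |α| / 2) (by positivity) (by linarith)
    (fun j x => sum_dd_dd_ham α h j x) (g := g) hD hf
  rwa [show D * (1 / (4 * (1 - |α| / 2))) = D / (4 * (1 - |α| / 2)) by ring]

/-- Moments of the degrees and codegrees in the uniqueness regime. -/
lemma moments_neg (hα : |α| < 2) (h : ℝ) : ∃ K : ℝ, 0 ≤ K ∧ ∀ n : ℕ, 1 ≤ n →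
    (∀ v : Fin n, vr (ham n α h) (deg v) ≤ K * n ∧
      av (ham n α h) (fun x => (deg v x - av (ham n α h) (deg v)) ^ 6) ≤ K * n ^ 3) ∧
    (∀ e : Edge n, vr (ham n α h) (cc e) ≤ K * n ∧
      av (ham n α h) (fun x => (cc e x - av (ham n α h) (cc e)) ^ 6) ≤ K * n ^ 3) := by
  set K0 := 1 / (4 * (1 - |α| / 2)) with hK0
  have hK : 0 ≤ K0 := by
    have : 0 < 1 - |α| / 2 := by linarith
    positivity
  set K6 := 40 * K0 * (6 * K0 * (K0 + 1) + 1) with hK6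
  have hK6' : 0 ≤ K6 := by positivity
  refine ⟨4 * K0 + 64 * K6, by positivity, fun n hn => ⟨fun v => ?_, fun e => ?_⟩⟩
  · have hn' : (1 : ℝ) ≤ n := by exact_mod_cast hn
    have := sixth_moment (ham n α h) (f := deg v) (δ := fun f => ∑ u, hit f v u) hK hn'
      (fun i => sum_hit_vertex i v)
      (fun i x => by rw [abs_of_nonneg (dd_deg_nonneg i v x), dd_deg]) (sum_dd_deg' v)
      (fun g => by
        have := cov_le_neg hα h (f := deg v) (g := g) zero_le_one
          (fun i x => by rw [abs_of_nonneg (dd_deg_nonneg i v x)]; exact dd_deg_le i v x)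
        rwa [one_mul] at this)
    have a : 0 ≤ (n : ℝ) ^ 3 := by positivity
    exact ⟨this.1.trans (by nlinarith), this.2.trans (by nlinarith)⟩
  · have hn' : (1 : ℝ) ≤ n := by exact_mod_cast hn
    set f : Config n → ℝ := fun x => 1 / 2 * cc e x with hf
    have hdd : ∀ i x, |dd i f x| ≤ 1 / 2 * infl e i := fun i x => by
      have e1 : dd i f x = 1 / 2 * dd i (cc e) x := by simp only [dd, hf]; ring
      rw [e1, abs_mul, abs_of_pos (by norm_num : (0 : ℝ) < 1 / 2)]
      linarith [dd_cc_le e i x]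
    have h1 : ∀ i, 1 / 2 * infl e i ≤ 1 := fun i => by linarith [infl_le_two e i]
    have := sixth_moment (ham n α h) (f := f) (δ := fun i => 1 / 2 * infl e i) hK hn' h1 hdd
      (by rw [← Finset.mul_sum]; linarith [sum_infl e])
      (fun g => by
        have := cov_le_neg hα h (f := f) (g := g) zero_le_one
          (fun i x => (hdd i x).trans (h1 i))
        rwa [one_mul] at this)
    rw [hf, vr_mul, av_mul] at this
    have e6 : ∀ x, (1 / 2 * cc e x - 1 / 2 * av (ham n α h) (cc e)) ^ 6
        = 1 / 64 * (cc e x - av (ham n α h) (cc e)) ^ 6 := fun x => by ring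
    simp only [e6, av_mul] at this
    have a : 0 ≤ (n : ℝ) ^ 3 := by positivity
    exact ⟨by nlinarith [this.1], by nlinarith [this.2]⟩

/-- The sixth moment is the first even one whose Markov bound beats the factor `n²`. -/
lemma tail_six {Y : Config n → ℝ} {H : Config n → ℝ} {K ε a : ℝ} (hε : 0 < ε) (hn : 1 ≤ n)
    (h6 : av H (fun x => (Y x - av H Y) ^ 6) ≤ K * n ^ 3) (ha : |av H Y - a| ≤ ε / 2 * n) :
    (n : ℝ) ^ 2 * av H (fun x => if ε * n < |Y x - a| then (1 : ℝ) else 0)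
      ≤ K / (ε / 2) ^ 6 / n := by
  have hn' : (1 : ℝ) ≤ n := by exact_mod_cast hn
  have hn0 : (0 : ℝ) < n := by linarith
  have h1 : av H (fun x => if ε * n < |Y x - a| then (1 : ℝ) else 0)
      ≤ av H (fun x => (Y x - av H Y) ^ 6) / (ε / 2 * n) ^ 6 := by
    refine av_indicator_le H (by positivity) (fun x => by positivity) fun x hx => ?_
    have : ε / 2 * n ≤ |Y x - av H Y| := by
      have := abs_sub_le (Y x) (av H Y) a
      linarith
    calc (ε / 2 * n) ^ 6 ≤ |Y x - av H Y| ^ 6 := pow_le_pow_left₀ (by positivity) this 6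
      _ = (Y x - av H Y) ^ 6 := by rw [← abs_pow]; exact abs_of_nonneg (by positivity)
  calc (n : ℝ) ^ 2 * _ ≤ n ^ 2 * (K * n ^ 3 / (ε / 2 * n) ^ 6) :=
        mul_le_mul_of_nonneg_left (h1.trans (div_le_div_of_nonneg_right h6 (by positivity)))
          (by positivity)
    _ = K / (ε / 2) ^ 6 / n := by field_simp

/-- By vertex symmetry the mean codegree is determined by the second moments of the degrees. -/
lemma av_cc_near {h K : ℝ} (hK : 0 ≤ K) (hn : 2 ≤ n)
    (hv : ∀ v : Fin n, vr (ham n α h) (deg v) ≤ K * n) (e : Edge n) :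
    |av (ham n α h) (cc e) - n * pn n α h ^ 2| ≤ 2 * K + 3 := by
  set H := ham n α h
  set p := pn n α h
  have hn' : (2 : ℝ) ≤ n := by exact_mod_cast hn
  obtain ⟨p0, p1⟩ := pn_mem (n := n) α h hn
  have e1 : ∑ f, av H (cc f) = 1 / 2 * ∑ v, (av H (fun x => deg v x ^ 2) - av H (deg v)) := by
    rw [← av_sum, av_congr H sum_cc, av_mul, av_sum]
    congr 1
    exact Finset.sum_congr rfl fun v _ => av_sub _ _ _
  have e2 : ∑ f, av H (cc f) = n * (n - 1) / 2 * av H (cc e) := by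
    rw [Finset.sum_congr rfl fun f _ => av_cc_eq α h f e, Finset.sum_const, Finset.card_univ,
      nsmul_eq_mul, card_edge]
  have e3 : ∀ v, av H (fun x => deg v x ^ 2) - av H (deg v)
      = vr H (deg v) + (n - 1) ^ 2 * p ^ 2 - (n - 1) * p := by
    intro v
    have : av H (fun x => deg v x ^ 2) = vr H (deg v) + av H (deg v) ^ 2 := by
      simp only [vr, cov, sq]; ring
    rw [this, av_deg]; ring
  simp only [e3, Finset.sum_sub_distrib, Finset.sum_add_distrib, Finset.sum_const,
    Finset.card_univ, nsmul_eq_mul, Fintype.card_fin] at e1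
  have s1 : ∑ v, vr H (deg v) ≤ n * (K * n) :=
    (Finset.sum_le_sum fun v _ => hv v).trans (by simp)
  have s0 : 0 ≤ ∑ v, vr H (deg v) := Finset.sum_nonneg fun v _ => vr_nonneg _ _
  have hpos : (0 : ℝ) < n * (n - 1) := by nlinarith
  have e4 : n * (n - 1) * (av H (cc e) - n * p ^ 2)
      = ∑ v, vr H (deg v) - n * (n - 1) * p ^ 2 - n * (n - 1) * p := by
    rw [e2] at e1; linear_combination 2 * e1
  have p2 : p ^ 2 ≤ 1 := pow_le_one₀ p0.le p1.le
  rw [abs_le]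
  constructor
  · refine le_of_mul_le_mul_left ?_ hpos
    rw [e4]
    nlinarith [mul_le_mul_of_nonneg_left p2 hpos.le, mul_le_mul_of_nonneg_left p1.le hpos.le,
      mul_nonneg hK hpos.le]
  · refine le_of_mul_le_mul_left ?_ hpos
    rw [e4]
    have : (n : ℝ) * (K * n) ≤ n * (n - 1) * (2 * K) := by
      have : 0 ≤ K * (n * (n - 2)) := mul_nonneg hK (by nlinarith)
      nlinarith
    nlinarith [mul_nonneg hpos.le (sq_nonneg p), mul_nonneg hpos.le p0.le]

/-- For `-2 < α < 0` variances and moments are controlled by Dobrushin's condition; the edge density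
nearly solves the fixed-point equation, whose solution is unique. -/
theorem iface_neg {h p : ℝ} (hα : -2 < α) (hα' : α < 0) (p0 : 0 < p) (p1 : p < 1)
    (hcr : p = Real.sigmoid (h + α * p ^ 2)) : Iface α h p := by
  have hab : |α| < 2 := by rw [abs_of_neg hα']; linarith
  obtain ⟨K, hK, hmom⟩ := moments_neg hab h
  have hlam : 0 < 1 - 2 * α * p ^ 2 * (1 - p) := by
    have : 0 ≤ (-α) * (p ^ 2 * (1 - p)) :=
      mul_nonneg (by linarith) (mul_nonneg (sq_nonneg p) (by linarith))
    linarith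
  -- the distance of the edge density to the fixed point
  have hpn : ∀ n : ℕ, 2 ≤ n → |pn n α h - p|
      ≤ 1 / 2 * ((Real.sqrt (K * n) + (2 * K + 3)) / n) := by
    intro n hn
    have hn' : (2 : ℝ) ≤ n := by exact_mod_cast hn
    have hn0 : (0 : ℝ) < n := by linarith
    set H := ham n α h
    have huv : (⟨0, by omega⟩ : Fin n) ≠ ⟨1, by omega⟩ := by simp
    set e := mkE _ _ huv
    have q0 : pn n α h = av H (fun x => Real.sigmoid (h + α * (cc e x / n))) := by
      rw [← av_adj α h huv]
      simp only [adj_mkE _ _ _ huv]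
      rw [show av (ham n α h) (fun x => ind (mkE _ _ huv) x) = _ from av_ind_eq H e]
      exact av_congr _ fun x => sg_ham α h e x
    have r0 := (pn_mem (n := n) α h hn).1
    set q := pn n α h with hq
    have near := av_cc_near hK hn (fun v => ((hmom n (by omega)).1 v).1) e
    have hvar := ((hmom n (by omega)).2 e).1
    have b1 : |q - Real.sigmoid (h + α * q ^ 2)| ≤ 1 / 2 * ((Real.sqrt (K * n) + (2 * K + 3)) / n) := by
      have c1 : q - Real.sigmoid (h + α * q ^ 2)
          = av H (fun x => Real.sigmoid (h + α * (cc e x / n)) - Real.sigmoid (h + α * q ^ 2)) := by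
        rw [av_sub, av_const, ← q0]
      have c2 : ∀ x, |Real.sigmoid (h + α * (cc e x / n)) - Real.sigmoid (h + α * q ^ 2)|
          ≤ 1 / (2 * n) * (|cc e x - av H (cc e)| + (2 * K + 3)) := by
        intro x
        refine (sigmoid_lip _ _).trans ?_
        rw [show h + α * (cc e x / n) - (h + α * q ^ 2) = α * ((cc e x - n * q ^ 2) / n) by
          field_simp; ring, abs_mul, abs_div, abs_of_pos hn0]
        have d1 : |cc e x - n * q ^ 2| ≤ |cc e x - av H (cc e)| + (2 * K + 3) :=
          (abs_sub_le _ (av H (cc e)) _).trans (by linarith)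
        have d2 : |α| * (|cc e x - n * q ^ 2| / n)
            ≤ 2 * ((|cc e x - av H (cc e)| + (2 * K + 3)) / n) :=
          mul_le_mul hab.le (div_le_div_of_nonneg_right d1 hn0.le) (by positivity) (by norm_num)
        calc 1 / 4 * (|α| * (|cc e x - n * q ^ 2| / n))
            ≤ 1 / 4 * (2 * ((|cc e x - av H (cc e)| + (2 * K + 3)) / n)) := by linarith
          _ = _ := by field_simp; norm_num
      rw [c1]
      refine (abs_av_le _ _).trans ((av_mono _ c2).trans ?_)
      rw [av_mul, av_add, av_const]
      have c3 : av H (fun x => |cc e x - av H (cc e)|) ≤ Real.sqrt (K * n) := by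
        refine (av_abs_le_sqrt H fun x => cc e x - av H (cc e)).trans (Real.sqrt_le_sqrt ?_)
        rw [← vr_eq]; exact hvar
      calc 1 / (2 * (n : ℝ)) * (av H (fun x => |cc e x - av H (cc e)|) + (2 * K + 3))
          ≤ 1 / (2 * n) * (Real.sqrt (K * n) + (2 * K + 3)) :=
            mul_le_mul_of_nonneg_left (by linarith) (by positivity)
        _ = _ := by field_simp
    refine le_trans ?_ b1
    -- the map `u ↦ sigmoid (h + α u²)` is decreasing on the positive half-line
    rcases le_total p q with hpq | hpq
    · have : Real.sigmoid (h + α * q ^ 2) ≤ p := by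
        have h1 : p ^ 2 ≤ q ^ 2 := pow_le_pow_left₀ p0.le hpq 2
        have h2 : Real.sigmoid (h + α * q ^ 2) ≤ Real.sigmoid (h + α * p ^ 2) :=
          Real.sigmoid_le (by nlinarith)
        rwa [← hcr] at h2
      rw [abs_of_nonneg (by linarith), abs_of_nonneg (by linarith)]; linarith
    · have : p ≤ Real.sigmoid (h + α * q ^ 2) := by
        have h1 : q ^ 2 ≤ p ^ 2 := pow_le_pow_left₀ r0.le hpq 2
        have h2 : Real.sigmoid (h + α * p ^ 2) ≤ Real.sigmoid (h + α * q ^ 2) :=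
          Real.sigmoid_le (by nlinarith)
        rwa [← hcr] at h2
      rw [abs_of_nonpos (by linarith), abs_of_nonpos (by linarith)]; linarith
  have hlim : Tendsto (fun n : ℕ => 1 / 2 * ((Real.sqrt (K * n) + (2 * K + 3)) / n)) atTop (𝓝 0) := by
    have t1 : Tendsto (fun n : ℕ => Real.sqrt (K * n) / n) atTop (𝓝 0) := by
      have : Tendsto (fun n : ℕ => Real.sqrt (K / n)) atTop (𝓝 0) := by
        have := (tendsto_const_div_atTop_nhds_zero_nat K).sqrt
        simpa using this
      refine this.congr' ?_
      filter_upwards [eventually_gt_atTop 0] with n hn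
      have hn0 : (0 : ℝ) < n := by exact_mod_cast hn
      rw [show K / (n : ℝ) = K * n / n ^ 2 by field_simp, Real.sqrt_div (by positivity),
        Real.sqrt_sq hn0.le]
    have t2 := tendsto_const_div_atTop_nhds_zero_nat (2 * K + 3)
    have := (t1.add t2).const_mul (1 / 2)
    simp only [add_zero, mul_zero] at this
    refine this.congr fun n => ?_
    rw [← add_div]
  refine ⟨p0, p1, hcr, hlam, ⟨1 / (4 * (1 - |α| / 2)), ?_, ?_⟩, ?_, ?_⟩
  · have : 0 < 1 - |α| / 2 := by linarith
    positivity
  · filter_upwards [eventually_ge_atTop 2] with n hn f ε hf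
    have huv : (⟨0, by omega⟩ : Fin n) ≠ ⟨1, by omega⟩ := by simp
    have hε : 0 ≤ ε := (abs_nonneg _).trans (hf (mkE _ _ huv) ⊥)
    have c := cov_le_neg hab h (f := f) (g := f) hε hf
    have hK0 : 0 ≤ 1 / (4 * (1 - |α| / 2)) := by
      have : 0 < 1 - |α| / 2 := by linarith
      positivity
    set K0 := 1 / (4 * (1 - |α| / 2))
    have hn' : (2 : ℝ) ≤ n := by exact_mod_cast hn
    have s : ∑ i, av (ham n α h) (fun x => |dd i f x|) ≤ n ^ 2 * ε := by
      calc _ ≤ ∑ _i : Edge n, ε := Finset.sum_le_sum fun i _ => av_le_const _ (hf i)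
        _ = n * (n - 1) / 2 * ε := by
          rw [Finset.sum_const, Finset.card_univ, nsmul_eq_mul, card_edge]
        _ ≤ n ^ 2 * ε := mul_le_mul_of_nonneg_right (by nlinarith) hε
    have hv := vr_nonneg (ham n α h) tot
    calc vr (ham n α h) f ≤ |cov (ham n α h) f f| := le_abs_self _
      _ ≤ ε * K0 * (n ^ 2 * ε) := c.trans (mul_le_mul_of_nonneg_left s (by positivity))
      _ = ε ^ 2 * (K0 * n ^ 2) := by ring
      _ ≤ _ := mul_le_mul_of_nonneg_left (by linarith) (by positivity)
  · intro ε hε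
    filter_upwards [hlim.eventually (gt_mem_nhds (show 0 < ε / 4 by positivity)),
      (tendsto_const_div_atTop_nhds_zero_nat (K / (ε / 2) ^ 6)).eventually (gt_mem_nhds hε),
      (tendsto_const_div_atTop_nhds_zero_nat (1 : ℝ)).eventually
        (gt_mem_nhds (show 0 < ε / 4 by positivity)), eventually_ge_atTop 2] with n a1 a2 a3 hn v
    have hn' : (2 : ℝ) ≤ n := by exact_mod_cast hn
    have hn0 : (0 : ℝ) < n := by linarith
    rw [div_lt_iff₀ hn0] at a3
    refine (tail_six hε (by omega) ((hmom n (by omega)).1 v).2 ?_).trans a2.le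
    rw [av_deg]
    obtain ⟨r0, r1⟩ := pn_mem (n := n) α h hn
    have := abs_le.1 ((hpn n hn).trans a1.le)
    rw [abs_le]
    constructor <;> nlinarith [this.1, this.2]
  · intro ε hε
    filter_upwards [hlim.eventually (gt_mem_nhds (show 0 < ε / 8 by positivity)),
      (tendsto_const_div_atTop_nhds_zero_nat (K / (ε / 2) ^ 6)).eventually (gt_mem_nhds hε),
      (tendsto_const_div_atTop_nhds_zero_nat (2 * K + 3)).eventually
        (gt_mem_nhds (show 0 < ε / 4 by positivity)), eventually_ge_atTop 2] with n a1 a2 a3 hn e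
    have hn' : (2 : ℝ) ≤ n := by exact_mod_cast hn
    have hn0 : (0 : ℝ) < n := by linarith
    rw [div_lt_iff₀ hn0] at a3
    refine (tail_six hε (by omega) ((hmom n (by omega)).2 e).2 ?_).trans a2.le
    have near := av_cc_near hK hn (fun v => ((hmom n (by omega)).1 v).1) e
    obtain ⟨r0, r1⟩ := pn_mem (n := n) α h hn
    have h1 := (hpn n hn).trans a1.le
    have h2 : |pn n α h ^ 2 - p ^ 2| ≤ ε / 8 * 2 := by
      rw [show pn n α h ^ 2 - p ^ 2 = (pn n α h - p) * (pn n α h + p) by ring, abs_mul]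
      exact mul_le_mul h1 (by rw [abs_of_pos (by linarith)]; linarith) (abs_nonneg _) (by positivity)
    have h3 := abs_sub_le (av (ham n α h) (cc e)) (n * pn n α h ^ 2) (p ^ 2 * n)
    have h4 : |n * pn n α h ^ 2 - p ^ 2 * n| = n * |pn n α h ^ 2 - p ^ 2| := by
      rw [show n * pn n α h ^ 2 - p ^ 2 * n = n * (pn n α h ^ 2 - p ^ 2) by ring, abs_mul,
        abs_of_pos hn0]
    have h5 : n * |pn n α h ^ 2 - p ^ 2| ≤ n * (ε / 8 * 2) := mul_le_mul_of_nonneg_left h2 hn0.le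
    linarith

end IfaceNeg

/-! ### Additive functionals of concentrated observables -/

section Clamp
variable {I : Type*} [Fintype I] [DecidableEq I]

/-- Variance of an additive functional `w * ∑ q (Y k)` when `q` is `κ`-Lipschitz on a window
around `m` which the `Y k` rarely leave: outside the window `q` is replaced by its value at the
nearest end point. -/
lemma clamp_core {K : Type*} [Fintype K] (H : (I → Bool) → ℝ) (Y : K → (I → Bool) → ℝ) (q : ℝ → ℝ)
    {m r κ C w L A P : ℝ} (hr : 0 ≤ r) (hκ0 : 0 ≤ κ) (hw : 0 ≤ w)
    (hv : ∀ (f : (I → Bool) → ℝ) ε, (∀ i x, |dd i f x| ≤ ε) → vr H f ≤ ε ^ 2 * A)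
    (hκ : ∀ a b, |a - m| ≤ r → |b - m| ≤ r → |q a - q b| ≤ κ * |a - b|)
    (hC : ∀ k x, |q (Y k x) - q m| ≤ C) (hκr : κ * r ≤ C)
    (hL : ∀ i x, w * ∑ k, |dd i (Y k) x| ≤ L)
    (hP : ∀ k, av H (fun x => if r < |Y k x - m| then (1 : ℝ) else 0) ≤ P) :
    vr H (fun x => w * ∑ k, q (Y k x))
      ≤ 2 * ((κ * L) ^ 2 * A) + 8 * C ^ 2 * (w * Fintype.card K) ^ 2 * P := by
  set cl : ℝ → ℝ := fun y => max (m - r) (min (m + r) y) with hcl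
  have cl_mem : ∀ y, |cl y - m| ≤ r := by
    intro y
    have h1 : m - r ≤ cl y := le_max_left _ _
    have h2 : cl y ≤ m + r := max_le (by linarith) (min_le_left _ _)
    rw [abs_le]; constructor <;> linarith
  have cl_lip : ∀ a b, |cl a - cl b| ≤ |a - b| := by
    intro a b
    refine (abs_max_sub_max_le_max _ _ _ _).trans ?_
    rw [sub_self, abs_zero, max_eq_right (abs_nonneg _)]
    refine (abs_min_sub_min_le_max _ _ _ _).trans ?_
    rw [sub_self, abs_zero, max_eq_right (abs_nonneg _)]
  have cl_eq : ∀ y, |y - m| ≤ r → cl y = y := by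
    intro y hy
    rw [abs_le] at hy
    simp only [hcl]
    rw [min_eq_right (by linarith), max_eq_right (by linarith)]
  have hC0 : ∀ k x, |q (Y k x) - q (cl (Y k x))| ≤ 2 * C * (if r < |Y k x - m| then (1 : ℝ) else 0) := by
    intro k x
    split_ifs with hb
    · have h1 := hC k x
      have h2 := hκ (cl (Y k x)) m (cl_mem _) (by simpa using hr)
      have h3 : κ * |cl (Y k x) - m| ≤ κ * r := mul_le_mul_of_nonneg_left (cl_mem _) hκ0
      have h4 : |q (Y k x) - q (cl (Y k x))| ≤ |q (Y k x) - q m| + |q (cl (Y k x)) - q m| := by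
        have := abs_sub (q (Y k x) - q m) (q (cl (Y k x)) - q m)
        simpa using this
      linarith
    · rw [cl_eq _ (not_lt.mp hb)]; simp
  have e1 : vr H (fun x => w * ∑ k, q (cl (Y k x))) ≤ (κ * L) ^ 2 * A := by
    refine hv _ _ fun i x => ?_
    have h1 : dd i (fun x => w * ∑ k, q (cl (Y k x))) x
        = w * ∑ k, (q (cl (Y k (up i x))) - q (cl (Y k (dn i x)))) := by
      simp only [dd, Finset.sum_sub_distrib]; ring
    rw [h1, abs_mul, abs_of_nonneg hw]
    calc w * |∑ k, (q (cl (Y k (up i x))) - q (cl (Y k (dn i x))))|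
        ≤ w * ∑ k, κ * |dd i (Y k) x| := by
          refine mul_le_mul_of_nonneg_left ((Finset.abs_sum_le_sum_abs _ _).trans
            (Finset.sum_le_sum fun k _ => ?_)) hw
          refine (hκ _ _ (cl_mem _) (cl_mem _)).trans ?_
          exact mul_le_mul_of_nonneg_left (cl_lip _ _) hκ0
      _ = κ * (w * ∑ k, |dd i (Y k) x|) := by rw [← Finset.mul_sum]; ring
      _ ≤ κ * L := mul_le_mul_of_nonneg_left (hL i x) hκ0
  have e2 : vr H (fun x => w * ∑ k, (q (Y k x) - q (cl (Y k x))))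
      ≤ 4 * C ^ 2 * (w * Fintype.card K) ^ 2 * P := by
    refine (vr_le_sq _ _).trans ?_
    calc av H (fun x => (w * ∑ k, (q (Y k x) - q (cl (Y k x)))) ^ 2)
        ≤ av H (fun x => (w ^ 2 * Fintype.card K * (4 * C ^ 2))
            * ∑ k, (if r < |Y k x - m| then (1 : ℝ) else 0)) := by
          refine av_mono _ fun x => ?_
          rw [mul_pow, Finset.mul_sum]
          have h1 := sq_sum_le_card_mul_sum_sq (s := (Finset.univ : Finset K))
            (f := fun k => q (Y k x) - q (cl (Y k x)))
          rw [Finset.card_univ] at h1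
          have h2 : ∑ k, (q (Y k x) - q (cl (Y k x))) ^ 2
              ≤ ∑ k, 4 * C ^ 2 * (if r < |Y k x - m| then (1 : ℝ) else 0) := by
            refine Finset.sum_le_sum fun k _ => ?_
            have h3 := hC0 k x
            rw [← sq_abs]
            refine (pow_le_pow_left₀ (abs_nonneg _) h3 2).trans (le_of_eq ?_)
            split_ifs <;> ring
          calc w ^ 2 * (∑ k, (q (Y k x) - q (cl (Y k x)))) ^ 2
              ≤ w ^ 2 * (Fintype.card K * ∑ k, 4 * C ^ 2 * (if r < |Y k x - m| then (1 : ℝ) else 0)) :=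
                mul_le_mul_of_nonneg_left (h1.trans
                  (mul_le_mul_of_nonneg_left h2 (Nat.cast_nonneg _))) (sq_nonneg _)
            _ = _ := by simp only [Finset.mul_sum]; exact Finset.sum_congr rfl fun k _ => by ring
      _ = (w ^ 2 * Fintype.card K * (4 * C ^ 2))
            * ∑ k, av H (fun x => if r < |Y k x - m| then (1 : ℝ) else 0) := by
          rw [av_mul, av_sum]
      _ ≤ (w ^ 2 * Fintype.card K * (4 * C ^ 2)) * ∑ k : K, P :=
          mul_le_mul_of_nonneg_left (Finset.sum_le_sum fun k _ => hP k) (by positivity)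
      _ = _ := by rw [Finset.sum_const, Finset.card_univ, nsmul_eq_mul]; ring
  have e3 : (fun x => w * ∑ k, q (Y k x)) = fun x => w * ∑ k, q (cl (Y k x))
      + w * ∑ k, (q (Y k x) - q (cl (Y k x))) := by
    funext x; rw [Finset.sum_sub_distrib]; ring
  rw [e3]
  refine (vr_add_le H _ _).trans ?_
  linarith

end Clamp

section Fluct
variable {α h p : ℝ}

/-- If `q' m = 0` and the `Y k` concentrate at `m`, then `w * ∑ q (Y k)` has fluctuations of
smaller order than `n`. -/
lemma clamp_ev (J : Iface α h p) {K : ℕ → Type} [∀ n, Fintype (K n)]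
    (Y : ∀ n, K n → Config n → ℝ) (w : ℕ → ℝ) (q q' : ℝ → ℝ) {m : ℝ}
    (hq : ∀ y, HasDerivAt q (q' y) y) (hc : ContinuousAt q' m) (hz : q' m = 0)
    (hY : ∀ n k x, Y n k x ∈ Set.Icc (0 : ℝ) 1)
    (hw : ∀ n, 0 ≤ w n) (hcard : ∀ n, w n * Fintype.card (K n) ≤ (n : ℝ) ^ 2)
    (hL : ∀ n, 0 < n → ∀ i x, w n * ∑ k, |dd i (Y n k) x| ≤ 2)
    (hconc : ∀ ε > 0, ∀ᶠ n : ℕ in atTop, ∀ k : K n, (n : ℝ) ^ 2 *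
      av (ham n α h) (fun x => if ε < |Y n k x - m| then (1 : ℝ) else 0) ≤ ε)
    {ε : ℝ} (hε : 0 < ε) : ∀ᶠ n : ℕ in atTop,
      vr (ham n α h) (fun x => w n * ∑ k, q (Y n k x)) ≤ ε * (n ^ 2 + vr (ham n α h) tot) := by
  obtain ⟨C0, hC0, hvar⟩ := J.var
  have hqc : Continuous q := continuous_iff_continuousAt.mpr fun y => (hq y).continuousAt
  obtain ⟨B, hB⟩ := (isCompact_Icc (a := (0 : ℝ)) (b := 1)).exists_bound_of_continuousOn
    (f := fun y => q y - q m) (by fun_prop)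
  set C := max B 1 with hCdef
  have hC1 : 1 ≤ C := le_max_right _ _
  obtain ⟨η, hη0, hη1, hη⟩ : ∃ η : ℝ, 0 < η ∧ η ≤ 1 ∧ 8 * η ^ 2 * (C0 + 1) ≤ ε / 2 := by
    refine ⟨min 1 (ε / (16 * (C0 + 1))), by positivity, min_le_left _ _, ?_⟩
    set η := min 1 (ε / (16 * (C0 + 1)))
    have h0 : 0 ≤ η := by positivity
    have h1 : η ≤ 1 := min_le_left _ _
    have h2 : η * (16 * (C0 + 1)) ≤ ε :=
      (le_div_iff₀ (by positivity)).mp (min_le_right _ _)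
    have : η ^ 2 ≤ η := by nlinarith
    nlinarith
  obtain ⟨δ, hδ, hδq⟩ := Metric.continuousAt_iff.mp hc η hη0
  set r := min (min (δ / 2) 1) (ε / (16 * C ^ 2)) with hrdef
  have hr0 : 0 < r := by positivity
  have hr1 : r ≤ 1 := (min_le_left _ _).trans (min_le_right _ _)
  have hrδ : r < δ := ((min_le_left _ _).trans (min_le_left _ _)).trans_lt (by linarith)
  have hrC : r * (16 * C ^ 2) ≤ ε := (le_div_iff₀ (by positivity)).mp (min_le_right _ _)
  have hlip : ∀ a b, |a - m| ≤ r → |b - m| ≤ r → |q a - q b| ≤ η * |a - b| := by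
    intro a b ha hb
    have := (convex_closedBall m r).norm_image_sub_le_of_norm_hasDerivWithin_le
      (f := q) (f' := q') (C := η) (x := b) (y := a) (fun y _ => (hq y).hasDerivWithinAt) ?_
      (by rwa [Metric.mem_closedBall, Real.dist_eq]) (by rwa [Metric.mem_closedBall, Real.dist_eq])
    · simpa using this
    · intro y hy
      have := hδq (lt_of_le_of_lt (Metric.mem_closedBall.mp hy) hrδ)
      rw [hz, Real.dist_eq, sub_zero] at this
      exact this.le
  filter_upwards [hvar, hconc r hr0, eventually_gt_atTop 0] with n hv hcn hn
  have hn' : (0 : ℝ) < n := Nat.cast_pos.mpr hn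
  have key := clamp_core (ham n α h) (Y n) q (m := m) (r := r) (κ := η) (C := C) (w := w n) (L := 2)
    (A := C0 * n ^ 2 + vr (ham n α h) tot) (P := r / n ^ 2) hr0.le hη0.le (hw n) hv hlip
    (fun k x => (hB _ (hY n k x)).trans (le_max_left _ _))
    (by nlinarith) (hL n hn) (fun k => by
      rw [le_div_iff₀ (by positivity), mul_comm]; exact hcn k)
  refine key.trans ?_
  have hV := vr_nonneg (ham n α h) tot
  have h1 : (w n * Fintype.card (K n)) ^ 2 ≤ ((n : ℝ) ^ 2) ^ 2 :=
    pow_le_pow_left₀ (mul_nonneg (hw n) (Nat.cast_nonneg _)) (hcard n) 2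
  have h2 : 8 * C ^ 2 * (w n * Fintype.card (K n)) ^ 2 * (r / n ^ 2) ≤ ε / 2 * n ^ 2 := by
    calc 8 * C ^ 2 * (w n * Fintype.card (K n)) ^ 2 * (r / n ^ 2)
        ≤ 8 * C ^ 2 * ((n : ℝ) ^ 2) ^ 2 * (r / n ^ 2) := by gcongr
      _ = (r * (16 * C ^ 2)) / 2 * n ^ 2 := by field_simp; ring
      _ ≤ _ := by gcongr
  have h3 : 2 * ((η * 2) ^ 2 * (C0 * n ^ 2 + vr (ham n α h) tot))
      ≤ ε / 2 * (n ^ 2 + vr (ham n α h) tot) := by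
    have : C0 * n ^ 2 + vr (ham n α h) tot ≤ (C0 + 1) * (n ^ 2 + vr (ham n α h) tot) := by
      nlinarith [mul_nonneg hC0 hV, sq_nonneg (n : ℝ)]
    calc 2 * ((η * 2) ^ 2 * (C0 * n ^ 2 + vr (ham n α h) tot))
        ≤ 2 * ((η * 2) ^ 2 * ((C0 + 1) * (n ^ 2 + vr (ham n α h) tot))) := by gcongr
      _ = 8 * η ^ 2 * (C0 + 1) * (n ^ 2 + vr (ham n α h) tot) := by ring
      _ ≤ _ := by gcongr
  nlinarith [mul_nonneg hε.le hV]

lemma card_edge_le (n : ℕ) : (Fintype.card (Edge n) : ℝ) ≤ (n : ℝ) ^ 2 / 2 := by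
  rw [card_edge]; nlinarith [Nat.cast_nonneg (α := ℝ) n]

lemma dd_div {n : ℕ} (i : Edge n) (f : Config n → ℝ) (c : ℝ) (x) :
    dd i (fun y => f y / c) x = dd i f x / c := by simp only [dd]; ring

lemma clamp_cc0 (J : Iface α h p) (q q' : ℝ → ℝ)
    (hq : ∀ y, HasDerivAt q (q' y) y) (hc : ContinuousAt q' (p ^ 2)) (hz : q' (p ^ 2) = 0)
    {ε : ℝ} (hε : 0 < ε) : ∀ᶠ n : ℕ in atTop,
      vr (ham n α h) (fun x => ∑ e, q (cc e x / n)) ≤ ε * (n ^ 2 + vr (ham n α h) tot) := by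
  have := clamp_ev J (K := fun n => Edge n) (fun n e x => cc e x / n) (fun _ => 1) q q' hq hc hz
    (fun n e x => ⟨div_nonneg (cc_nonneg _ _) (Nat.cast_nonneg _),
      div_le_one_of_le₀ (cc_le _ _) (Nat.cast_nonneg _)⟩)
    (fun n => zero_le_one) (fun n => by
      have := card_edge_le n; nlinarith [sq_nonneg (n : ℝ)])
    (fun n hn i x => by
      have hn' : (0 : ℝ) < n := Nat.cast_pos.mpr hn
      simp only [dd_div, abs_div, Nat.abs_cast, ← Finset.sum_div, one_mul]
      rw [div_le_iff₀ hn']; exact sum_dd_cc' i x) ?_ hε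
  · simpa using this
  · intro δ hδ
    filter_upwards [J.conc_cc δ hδ, eventually_gt_atTop 0] with n h1 hn e
    have hn' : (0 : ℝ) < n := Nat.cast_pos.mpr hn
    refine le_trans (le_of_eq ?_) (h1 e)
    congr 2; funext x
    have : |cc e x - p ^ 2 * n| = |cc e x / n - p ^ 2| * n := by
      rw [← abs_of_pos hn', ← abs_mul, abs_of_pos hn']; congr 1; field_simp
    rw [this]
    simp only [mul_lt_mul_iff_left₀ hn']

lemma clamp_deg0 (J : Iface α h p) {ε : ℝ} (hε : 0 < ε) : ∀ᶠ n : ℕ in atTop,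
      vr (ham n α h) (fun x => (n : ℝ) * ∑ v, (deg v x / n - p) ^ 2)
        ≤ ε * (n ^ 2 + vr (ham n α h) tot) := by
  refine clamp_ev J (K := fun n => Fin n) (fun n v x => deg v x / n) (fun n => n)
    (fun y => (y - p) ^ 2) (fun y => 2 * (y - p)) (m := p) ?_ (by fun_prop) (by simp)
    (fun n e x => ⟨div_nonneg (deg_nonneg _ _) (Nat.cast_nonneg _),
      div_le_one_of_le₀ (deg_le _ _) (Nat.cast_nonneg _)⟩)
    (fun n => Nat.cast_nonneg _) (fun n => by rw [Fintype.card_fin]; nlinarith)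
    (fun n hn i x => by
      have hn' : (0 : ℝ) < n := Nat.cast_pos.mpr hn
      simp only [dd_div, abs_div, Nat.abs_cast, ← Finset.sum_div]
      rw [sum_dd_deg]; field_simp; exact le_refl _) ?_ hε
  · intro y
    have := ((hasDerivAt_id y).sub_const p).fun_pow 2
    simpa using this
  · intro δ hδ
    filter_upwards [J.conc_deg δ hδ, eventually_gt_atTop 0] with n h1 hn e
    have hn' : (0 : ℝ) < n := Nat.cast_pos.mpr hn
    refine le_trans (le_of_eq ?_) (h1 e)
    congr 2; funext x
    have : |deg e x - p * n| = |deg e x / n - p| * n := by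
      rw [← abs_of_pos hn', ← abs_mul, abs_of_pos hn']; congr 1; field_simp
    rw [this]
    simp only [mul_lt_mul_iff_left₀ hn']

end Fluct

/-! ### Linearization around the constant codegree -/

section Lin
variable {α h p : ℝ}

lemma sum_cc_lin {n : ℕ} (hn : 0 < n) (p : ℝ) (x : Config n) :
    ∑ e, cc e x / n = 2 * p * tot x
      + (1 / 2 * ((n : ℝ) * ∑ v, (deg v x / n - p) ^ 2) + (-1 / n) * tot x) + (- p ^ 2 * n ^ 2 / 2) := by
  have hn' : (n : ℝ) ≠ 0 := Nat.cast_ne_zero.mpr hn.ne'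
  rw [← Finset.sum_div, sum_cc]
  have h1 : ∑ v, (deg v x / n - p) ^ 2
      = (∑ v, deg v x ^ 2) / n ^ 2 - 2 * p / n * (2 * tot x) + n * p ^ 2 := by
    rw [← sum_deg, Finset.sum_div, Finset.mul_sum, ← Finset.sum_sub_distrib]
    have : (n : ℝ) * p ^ 2 = ∑ v : Fin n, p ^ 2 := by simp
    rw [this, ← Finset.sum_add_distrib]
    exact Finset.sum_congr rfl fun v _ => by field_simp; ring
  rw [h1, Finset.sum_sub_distrib, sum_deg]
  field_simp
  ring

/-- The sum of the codegrees is a quadratic function of the degrees; the quadratic part of its expansion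
around `p n` is negligible. -/
lemma vr_lin0 (J : Iface α h p) {ε : ℝ} (hε : 0 < ε) : ∀ᶠ n : ℕ in atTop,
    vr (ham n α h) (fun x => ∑ e, cc e x / n - 2 * p * tot x)
      ≤ ε * (n ^ 2 + vr (ham n α h) tot) := by
  have hl : Tendsto (fun n : ℕ => 2 / (n : ℝ) ^ 2) atTop (𝓝 0) :=
    tendsto_const_nhds.div_atTop ((tendsto_pow_atTop two_ne_zero).comp tendsto_natCast_atTop_atTop)
  filter_upwards [clamp_deg0 J hε, eventually_gt_atTop 0,
    hl.eventually_le_const (show (0 : ℝ) < ε / 2 by positivity)] with n h1 hn h2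
  have hn' : (0 : ℝ) < n := Nat.cast_pos.mpr hn
  have e1 : (fun x : Config n => ∑ e, cc e x / n - 2 * p * tot x) = fun x =>
      (1 / 2 * ((n : ℝ) * ∑ v, (deg v x / n - p) ^ 2) + (-1 / n) * tot x) + (- p ^ 2 * n ^ 2 / 2) := by
    funext x; rw [sum_cc_lin hn p]; ring
  rw [e1, vr_add_const]
  refine (vr_add_le _ _ _).trans ?_
  rw [vr_mul _ _ (1 / 2), vr_mul _ _ (-1 / (n : ℝ))]
  have h3 : (-1 / (n : ℝ)) ^ 2 = (2 / (n : ℝ) ^ 2) / 2 := by field_simp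
  rw [h3]
  have hV := vr_nonneg (ham n α h) tot
  nlinarith [mul_le_mul_of_nonneg_right h2 hV, mul_nonneg hε.le (sq_nonneg (n : ℝ))]

lemma hasDerivAt_S (α h y : ℝ) : HasDerivAt (fun y => Real.sigmoid (h + α * y))
    (α * (Real.sigmoid (h + α * y) * (1 - Real.sigmoid (h + α * y)))) y := by
  have h1 : HasDerivAt (fun y => h + α * y) α y := by
    simpa using ((hasDerivAt_id y).const_mul α).const_add h
  have := (Real.hasDerivAt_sigmoid (h + α * y)).comp y h1
  simpa [mul_comm, Function.comp_def] using this

lemma continuous_S (α h : ℝ) : Continuous (fun y => Real.sigmoid (h + α * y)) :=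
  continuous_iff_continuousAt.mpr fun y => (hasDerivAt_S α h y).continuousAt

/-- The sum of the conditional edge probabilities is, up to a negligible error, a linear function
of the number of edges. -/
lemma vr_R0 (J : Iface α h p) {ε : ℝ} (hε : 0 < ε) : ∀ᶠ n : ℕ in atTop,
    vr (ham n α h) (fun x => ∑ e, sg (ham n α h) e x - 2 * α * p ^ 2 * (1 - p) * tot x)
      ≤ ε * (n ^ 2 + vr (ham n α h) tot) := by
  set s := α * (p * (1 - p)) with hs
  have hS := continuous_S α h
  filter_upwards [clamp_cc0 J (fun y => Real.sigmoid (h + α * y) - s * y)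
    (fun y => α * (Real.sigmoid (h + α * y) * (1 - Real.sigmoid (h + α * y))) - s)
    (fun y => (hasDerivAt_S α h y).sub (by simpa using (hasDerivAt_id y).const_mul s))
    (by fun_prop) (by simp only [← J.crit, hs, sub_self]) (show 0 < ε / 4 by positivity),
    vr_lin0 J (show 0 < ε / (4 * (s ^ 2 + 1)) by positivity)] with n h1 h2
  have e1 : (fun x : Config n => ∑ e, sg (ham n α h) e x - 2 * α * p ^ 2 * (1 - p) * tot x)
      = fun x => ∑ e, (Real.sigmoid (h + α * (cc e x / n)) - s * (cc e x / n))
        + s * (∑ e, cc e x / n - 2 * p * tot x) := by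
    funext x
    simp only [sg_ham, Finset.sum_sub_distrib, ← Finset.mul_sum, hs]; ring
  rw [e1]
  refine (vr_add_le _ _ _).trans ?_
  rw [vr_mul]
  set W := (n : ℝ) ^ 2 + vr (ham n α h) tot
  have hW : 0 ≤ W := add_nonneg (sq_nonneg _) (vr_nonneg _ _)
  have h3 : s ^ 2 * (ε / (4 * (s ^ 2 + 1)) * W) ≤ ε / 4 * W := by
    have : s ^ 2 * (ε / (4 * (s ^ 2 + 1)) * W) = (s ^ 2 / (s ^ 2 + 1)) * (ε / 4 * W) := by
      field_simp
    rw [this]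
    exact mul_le_of_le_one_left (by positivity) (div_le_one_of_le₀ (by linarith) (by positivity))
  nlinarith [mul_le_mul_of_nonneg_left h2 (sq_nonneg s)]

lemma sum_sg_var_le (n : ℕ) : ∑ i : Edge n, av (ham n α h)
    (fun x => sg (ham n α h) i x * (1 - sg (ham n α h) i x)) ≤ (n : ℝ) ^ 2 / 8 := by
  calc _ ≤ ∑ i : Edge n, (1 / 4 : ℝ) :=
        Finset.sum_le_sum fun i _ => av_le_const _ fun x => sg_var_le _ _ _
    _ = Fintype.card (Edge n) * (1 / 4) := by simp
    _ ≤ _ := by have := card_edge_le n; linarith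

/-- The variance of the number of edges is `O(n²)`. -/
lemma vr_tot (J : Iface α h p) : ∃ C : ℝ, 0 < C ∧ ∀ᶠ n : ℕ in atTop,
    vr (ham n α h) tot ≤ C * n ^ 2 := by
  set l := 1 - 2 * α * p ^ 2 * (1 - p) with hl
  have hl0 : 0 < l := J.lam
  refine ⟨1 / (4 * l) + 1, by positivity, ?_⟩
  filter_upwards [vr_R0 J (show 0 < (l / 2) ^ 2 by positivity)] with n h1
  set H := ham n α h with hH
  set V := vr H tot with hVdef
  have hV : 0 ≤ V := vr_nonneg _ _
  have g1 := glauber_sum H (tot : Config n → ℝ)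
  simp only [dd_tot, smul_eq_mul, mul_one] at g1
  have g0 := glauber_sum H (fun _ : Config n => (1 : ℝ))
  simp only [dd, sub_self, smul_eq_mul, mul_zero, mul_one, av_const, Finset.sum_const_zero] at g0
  set R : Config n → ℝ := fun x => ∑ e, sg H e x - 2 * α * p ^ 2 * (1 - p) * tot x with hR
  have g2 : cov H (fun x => tot x - ∑ i, sg H i x) tot
      = ∑ i, av H (fun x => sg H i x * (1 - sg H i x)) := by
    rw [← g1, cov_center, g0]
    simp only [sub_zero, mul_sub]
    rw [av_sub]
    have : av H (fun x => (tot x - ∑ i, sg H i x) * av H tot) = 0 := by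
      rw [av_congr H (g := fun x => av H tot * (tot x - ∑ i, sg H i x)) (fun x => mul_comm _ _),
        av_mul, g0, mul_zero]
    rw [this, sub_zero]
  have g3 : cov H (fun x => tot x - ∑ i, sg H i x) tot = l * V - cov H R tot := by
    have : (fun x : Config n => tot x - ∑ i, sg H i x) = fun x => l * tot x - R x := by
      funext x; simp only [hR, hl]; ring
    rw [this, cov_sub_left, cov_mul_left]; rfl
  have g4 : cov H R tot ≤ l / 2 * (n ^ 2 + V) := by
    refine abs_le_of_sq_le_sq' ?_ (by positivity) |>.2
    refine (cov_sq_le H R tot).trans ?_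
    rw [mul_pow, sq ((n : ℝ) ^ 2 + V), ← mul_assoc]
    refine mul_le_mul h1 (by nlinarith [sq_nonneg (n : ℝ)]) hV (by positivity)
  have g5 := sum_sg_var_le (α := α) (h := h) n
  rw [← hH, ← g2, g3] at g5
  have : l * V ≤ l * ((1 / (4 * l) + 1) * n ^ 2) := by
    have e : l * ((1 / (4 * l) + 1) * n ^ 2) = n ^ 2 / 4 + l * n ^ 2 := by field_simp
    rw [e]; linarith
  exact le_of_mul_le_mul_left this hl0

/-- Replaces the bound `ε (n² + Var E)` by `ε n²`. -/
lemma upgrade (J : Iface α h p) {f : ∀ n, Config n → ℝ}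
    (hf : ∀ ε > 0, ∀ᶠ n : ℕ in atTop,
      vr (ham n α h) (f n) ≤ ε * (n ^ 2 + vr (ham n α h) tot)) {ε : ℝ} (hε : 0 < ε) :
    ∀ᶠ n : ℕ in atTop, vr (ham n α h) (f n) ≤ ε * n ^ 2 := by
  obtain ⟨C, hC, hV⟩ := vr_tot J
  filter_upwards [hf (ε / (1 + C)) (by positivity), hV] with n h1 h2
  refine h1.trans ?_
  calc ε / (1 + C) * (n ^ 2 + vr (ham n α h) tot) ≤ ε / (1 + C) * (n ^ 2 + C * n ^ 2) := by gcongr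
    _ = _ := by field_simp

lemma vr_R (J : Iface α h p) {ε : ℝ} (hε : 0 < ε) : ∀ᶠ n : ℕ in atTop,
    vr (ham n α h) (fun x => ∑ e, sg (ham n α h) e x - 2 * α * p ^ 2 * (1 - p) * tot x)
      ≤ ε * n ^ 2 := upgrade J (fun _ hε => vr_R0 J hε) hε

lemma vr_lin (J : Iface α h p) {ε : ℝ} (hε : 0 < ε) : ∀ᶠ n : ℕ in atTop,
    vr (ham n α h) (fun x => ∑ e, cc e x / n - 2 * p * tot x) ≤ ε * n ^ 2 :=
  upgrade J (fun _ hε => vr_lin0 J hε) hε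

lemma clamp_cc (J : Iface α h p) (q q' : ℝ → ℝ)
    (hq : ∀ y, HasDerivAt q (q' y) y) (hc : ContinuousAt q' (p ^ 2)) (hz : q' (p ^ 2) = 0)
    {ε : ℝ} (hε : 0 < ε) : ∀ᶠ n : ℕ in atTop,
      vr (ham n α h) (fun x => ∑ e, q (cc e x / n)) ≤ ε * n ^ 2 :=
  upgrade J (fun _ hε => clamp_cc0 J q q' hq hc hz hε) hε

/-- The centred relative codegree of an edge. -/
def bb (p : ℝ) {n : ℕ} (e : Edge n) (x : Config n) : ℝ := cc e x / n - p ^ 2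

lemma bb_abs_le (J : Iface α h p) {n : ℕ} (e : Edge n) (x : Config n) : |bb p e x| ≤ 1 := by
  have h0 : 0 ≤ cc e x / n := div_nonneg (cc_nonneg _ _) (Nat.cast_nonneg _)
  have h1 : cc e x / n ≤ 1 := div_le_one_of_le₀ (cc_le _ _) (Nat.cast_nonneg _)
  have := J.pos; have := J.lt_one
  rw [bb, abs_le]; constructor <;> nlinarith

lemma dd_bb {n : ℕ} (e f : Edge n) (x : Config n) : dd f (bb p e) x = dd f (cc e) x / n := by
  simp only [dd, bb]; ring

lemma bb_up {n : ℕ} (e : Edge n) (x : Config n) : bb p e (up e x) = bb p e x := by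
  rw [bb, cc_up_self, bb]
lemma bb_dn {n : ℕ} (e : Edge n) (x : Config n) : bb p e (dn e x) = bb p e x := by
  rw [bb, cc_dn_self, bb]

lemma conc_bb (J : Iface α h p) {ε : ℝ} (hε : 0 < ε) : ∀ᶠ n : ℕ in atTop, ∀ e : Edge n,
    (n : ℝ) ^ 2 * av (ham n α h) (fun x => if ε < |bb p e x| then (1 : ℝ) else 0) ≤ ε := by
  filter_upwards [J.conc_cc ε hε, eventually_gt_atTop 0] with n h1 hn e
  have hn' : (0 : ℝ) < n := Nat.cast_pos.mpr hn
  refine le_trans (le_of_eq ?_) (h1 e)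
  congr 2; funext x
  have : |cc e x - p ^ 2 * n| = |bb p e x| * n := by
    rw [← abs_of_pos hn', ← abs_mul, abs_of_pos hn', bb]; congr 1; field_simp
  rw [this]
  simp only [mul_lt_mul_iff_left₀ hn']

lemma av_bb (J : Iface α h p) {ε : ℝ} (hε : 0 < ε) : ∀ᶠ n : ℕ in atTop, ∀ e : Edge n,
    av (ham n α h) (fun x => |bb p e x|) ≤ ε := by
  filter_upwards [conc_bb J (half_pos hε), eventually_gt_atTop 0] with n h1 hn e
  have hn' : (1 : ℝ) ≤ n := Nat.one_le_cast.mpr hn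
  set P := av (ham n α h) (fun x => if ε / 2 < |bb p e x| then (1 : ℝ) else 0) with hP
  have hP0 : 0 ≤ P := av_nonneg _ fun x => by split_ifs <;> norm_num
  have h2 : P ≤ ε / 2 := le_trans (le_mul_of_one_le_left hP0 (one_le_pow₀ hn')) (h1 e)
  calc av (ham n α h) (fun x => |bb p e x|)
      ≤ av (ham n α h) (fun x => ε / 2 + if ε / 2 < |bb p e x| then (1 : ℝ) else 0) := by
        refine av_mono _ fun x => ?_
        split_ifs with hb
        · linarith [bb_abs_le J e x]
        · linarith
    _ = ε / 2 + P := by rw [av_add, av_const]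
    _ ≤ ε := by linarith

/-- The codegree-weighted sum of the centred edge indicators. -/
def YY (α h p : ℝ) {n : ℕ} (x : Config n) : ℝ :=
  ∑ e, (ind e x - sg (ham n α h) e x) * bb p e x

lemma abs_ind_sub_sg {n : ℕ} (H : Config n → ℝ) (e : Edge n) (x : Config n) :
    |ind e x - sg H e x| ≤ 1 := by
  have := ind_nonneg e x; have := ind_le_one e x; have := sg_pos H e x; have := sg_lt_one H e x
  rw [abs_le]; constructor <;> linarith

lemma dd_sg_ham_le {n : ℕ} (e f : Edge n) (x : Config n) :
    |sg (ham n α h) e (up f x) - sg (ham n α h) e (dn f x)| ≤ |α| / 4 * (|dd f (cc e) x| / n) := by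
  rw [sg_ham, sg_ham]
  refine (sigmoid_lip _ _).trans (le_of_eq ?_)
  have : h + α * (cc e (up f x) / n) - (h + α * (cc e (dn f x) / n)) = α * (dd f (cc e) x / n) := by
    simp only [dd]; ring
  rw [this, abs_mul, abs_div, Nat.abs_cast]; ring

lemma dd_YY_le (J : Iface α h p) {n : ℕ} (hn : 0 < n) (f : Edge n) (x : Config n) :
    |dd f (YY α h p) x| ≤ 3 + |α| / 2 := by
  have hn' : (0 : ℝ) < n := Nat.cast_pos.mpr hn
  have h1 : dd f (YY α h p) x = ∑ e, ((dd f (ind e) x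
      - (sg (ham n α h) e (up f x) - sg (ham n α h) e (dn f x))) * bb p e (up f x)
      + (ind e (dn f x) - sg (ham n α h) e (dn f x)) * dd f (bb p e) x) := by
    simp only [dd, YY, ← Finset.sum_sub_distrib]
    exact Finset.sum_congr rfl fun e _ => by ring
  rw [h1]
  have h2 : ∀ e : Edge n, |(dd f (ind e) x
      - (sg (ham n α h) e (up f x) - sg (ham n α h) e (dn f x))) * bb p e (up f x)
      + (ind e (dn f x) - sg (ham n α h) e (dn f x)) * dd f (bb p e) x|
      ≤ (if f = e then 1 else 0) + (|α| / 4 + 1) * (|dd f (cc e) x| / n) := by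
    intro e
    have a1 := bb_abs_le J e (up f x)
    have a2 := abs_ind_sub_sg (ham n α h) e (dn f x)
    have a3 := dd_sg_ham_le (α := α) (h := h) e f x
    have a4 : |dd f (bb p e) x| = |dd f (cc e) x| / n := by rw [dd_bb, abs_div, Nat.abs_cast]
    have a5 : |dd f (ind e) x| = if f = e then 1 else 0 := by rw [dd_ind]; split_ifs <;> simp
    refine (abs_add_le _ _).trans ?_
    rw [abs_mul, abs_mul]
    have a6 := abs_sub (dd f (ind e) x)
      (sg (ham n α h) e (up f x) - sg (ham n α h) e (dn f x))
    have a7 := mul_le_of_le_one_right (abs_nonneg (dd f (ind e) x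
      - (sg (ham n α h) e (up f x) - sg (ham n α h) e (dn f x)))) a1
    have a8 := mul_le_of_le_one_left (abs_nonneg (dd f (bb p e) x)) a2
    rw [a4] at a8 ⊢
    rw [a5] at a6
    linarith
  refine (Finset.abs_sum_le_sum_abs _ _).trans ((Finset.sum_le_sum fun e _ => h2 e).trans ?_)
  rw [Finset.sum_add_distrib, Finset.sum_ite_eq, if_pos (Finset.mem_univ _), ← Finset.mul_sum,
    ← Finset.sum_div]
  have h3 : (∑ e, |dd f (cc e) x|) / n ≤ 2 := by
    rw [div_le_iff₀ hn']; exact sum_dd_cc' f x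
  have := mul_le_mul_of_nonneg_left h3 (show 0 ≤ |α| / 4 + 1 by positivity)
  linarith

/-- By the Glauber identity the second moment of `YY` is a sum of terms with a factor `bb`, whose
average tends to zero. -/
lemma av_YY_sq (J : Iface α h p) {ε : ℝ} (hε : 0 < ε) : ∀ᶠ n : ℕ in atTop,
    av (ham n α h) (fun x => YY α h p x ^ 2) ≤ ε * n ^ 2 := by
  set C := 3 + |α| / 2 with hC
  have hC0 : 0 < C := by positivity
  filter_upwards [av_bb J (show 0 < ε / C by positivity), eventually_gt_atTop 0] with n h1 hn
  set H := ham n α h with hH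
  have h2 : av H (fun x => YY α h p x ^ 2)
      = ∑ e, av H (fun x => sg H e x * (1 - sg H e x) * (bb p e x * dd e (YY α h p) x)) := by
    have : (fun x : Config n => YY α h p x ^ 2)
        = fun x => ∑ e, (ind e x - sg H e x) * (bb p e x * YY α h p x) := by
      funext x
      rw [sq]
      conv_lhs => enter [1]; rw [YY]
      rw [Finset.sum_mul]
      exact Finset.sum_congr rfl fun e _ => by ring
    rw [this, av_sum]
    refine Finset.sum_congr rfl fun e _ => ?_
    rw [glauber_mul]
    refine av_congr _ fun x => ?_
    congr 1
    simp only [dd, bb_up, bb_dn]; ring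
  rw [h2]
  have h3 : ∀ e : Edge n, av H (fun x => sg H e x * (1 - sg H e x) * (bb p e x * dd e (YY α h p) x))
      ≤ ε := by
    intro e
    calc _ ≤ av H (fun x => C * |bb p e x|) := by
          refine av_mono _ fun x => ?_
          refine (le_abs_self _).trans ?_
          rw [abs_mul, abs_of_nonneg (sg_var_nonneg H e x), abs_mul]
          have a1 := sg_var_le H e x
          have a2 := dd_YY_le J hn e x (h := h)
          calc _ ≤ 1 * (|bb p e x| * C) := by
                refine mul_le_mul (by linarith) ?_ (by positivity) zero_le_one
                exact mul_le_mul_of_nonneg_left a2 (abs_nonneg _)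
            _ = _ := by ring
      _ = C * av H (fun x => |bb p e x|) := av_mul _ _ _
      _ ≤ C * (ε / C) := mul_le_mul_of_nonneg_left (h1 e) hC0.le
      _ = ε := by field_simp
  refine (Finset.sum_le_sum fun e _ => h3 e).trans ?_
  rw [Finset.sum_const, Finset.card_univ, nsmul_eq_mul]
  have := card_edge_le n
  nlinarith [sq_nonneg (n : ℝ)]

/-- The triangle count is asymptotically an affine function of the edge count. -/
lemma vr_tri (J : Iface α h p) {ε : ℝ} (hε : 0 < ε) : ∀ᶠ n : ℕ in atTop,
    vr (ham n α h) (fun x => Tr x / n - p ^ 2 * tot x) ≤ ε * n ^ 2 := by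
  have hS := continuous_S α h
  filter_upwards [av_YY_sq J (half_pos hε), vr_lin J (half_pos hε),
    clamp_cc J (fun y => (y - p ^ 2) * Real.sigmoid (h + α * y) - p * y)
    (fun y => (1 * Real.sigmoid (h + α * y) + (y - p ^ 2) *
      (α * (Real.sigmoid (h + α * y) * (1 - Real.sigmoid (h + α * y))))) - p)
    (fun y => (((hasDerivAt_id y).sub_const (p ^ 2)).mul (hasDerivAt_S α h y)).sub
      (by simpa using (hasDerivAt_id y).const_mul p))
    (by fun_prop) (by simp only [← J.crit]; ring) (half_pos hε)] with n h1 h2 h3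
  set H := ham n α h with hH
  set Q : Config n → ℝ := fun x => ∑ e, ((cc e x / n - p ^ 2) * Real.sigmoid (h + α * (cc e x / n))
    - p * (cc e x / n)) with hQ
  set D : Config n → ℝ := fun x => ∑ e, cc e x / n - 2 * p * tot x with hD
  have e1 : (fun x : Config n => Tr x / n - p ^ 2 * tot x)
      = fun x => 1 / 3 * (YY α h p x + (Q x + p * D x)) := by
    funext x
    have a1 : YY α h p x + Q x + p * ∑ e, cc e x / n = ∑ e, ind e x * bb p e x := by
      simp only [YY, hQ, Finset.mul_sum, ← Finset.sum_add_distrib, bb, sg_ham]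
      exact Finset.sum_congr rfl fun e _ => by ring
    have a2 : ∑ e, ind e x * bb p e x = 3 * (Tr x / n) - p ^ 2 * tot x := by
      have : ∀ e : Edge n, ind e x * bb p e x = ind e x * cc e x / n - p ^ 2 * ind e x := by
        intro e; rw [bb]; ring
      simp only [this, Finset.sum_sub_distrib, ← Finset.sum_div, ← Finset.mul_sum, sum_ind_cc]
      rw [tot]; ring
    simp only [hD]
    linear_combination (-1 / 3) * (a1.trans a2)
  rw [e1, vr_mul]
  have b1 := vr_add_le H (YY α h p) (fun x => Q x + p * D x)
  have b2 := vr_add_le H Q (fun x => p * D x)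
  rw [vr_mul] at b2
  have b3 := (vr_le_sq H (YY α h p)).trans h1
  have b4 : p ^ 2 * vr H D ≤ ε / 2 * n ^ 2 :=
    (mul_le_of_le_one_left (vr_nonneg _ _) (by have := J.pos; have := J.lt_one; nlinarith)).trans h2
  have b5 : vr H Q ≤ ε / 2 * n ^ 2 := h3
  have : 0 ≤ ε * (n : ℝ) ^ 2 := by positivity
  nlinarith

end Lin

/-! ### The characteristic function of the edge count -/

section CF
variable {α h p : ℝ}

/-- `ee θ = e^{iθ}`. -/
def ee (θ : ℝ) : ℂ := Complex.exp (θ * Complex.I)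

lemma norm_ee (θ : ℝ) : ‖ee θ‖ = 1 := Complex.norm_exp_ofReal_mul_I θ
lemma ee_add (a b : ℝ) : ee (a + b) = ee a * ee b := by
  rw [ee, ee, ee, ← Complex.exp_add]; push_cast; ring_nf
lemma ee_zero : ee 0 = 1 := by simp [ee]
lemma ee_sub_one_le (θ : ℝ) : ‖ee θ - 1‖ ≤ |θ| := by
  have := Real.norm_exp_I_mul_ofReal_sub_one_le (x := θ)
  rwa [mul_comm, Real.norm_eq_abs] at this
lemma ee_sub_one_sub_le (θ : ℝ) : ‖ee θ - 1 - θ * Complex.I‖ ≤ 2 * θ ^ 2 := by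
  have hn : ‖(θ * Complex.I : ℂ)‖ = |θ| := by simp
  rcases le_total |θ| 1 with h1 | h1
  · have := Complex.norm_exp_sub_one_sub_id_le (x := θ * Complex.I) (by rw [hn]; exact h1)
    rw [hn, sq_abs] at this
    have h2 := sq_nonneg θ
    exact this.trans (by linarith)
  · have := norm_sub_le (ee θ - 1) (θ * Complex.I)
    rw [hn] at this
    have h2 := ee_sub_one_le θ
    have h3 : |θ| ≤ θ ^ 2 := by rw [← sq_abs]; nlinarith
    linarith

/-- The character `e^{it(E - ⟨E⟩)/n}` of the centred edge count. -/
def gg (α h : ℝ) {n : ℕ} (t : ℝ) (x : Config n) : ℂ :=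
  ee (t * ((tot x - av (ham n α h) tot) / n))

lemma norm_gg {n : ℕ} (t : ℝ) (x : Config n) : ‖gg α h t x‖ = 1 := norm_ee _

lemma tot_up {n : ℕ} (e : Edge n) (x : Config n) : tot (up e x) = tot (dn e x) + 1 := by
  have := dd_tot e x; simp only [dd] at this; linarith

lemma gg_up {n : ℕ} (t : ℝ) (e : Edge n) (x : Config n) :
    gg α h t (up e x) = gg α h t (dn e x) * ee (t / n) := by
  rw [gg, gg, ← ee_add, tot_up]; congr 1; ring

lemma dd_gg_le {n : ℕ} (t : ℝ) (e : Edge n) (x : Config n) :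
    ‖dd e (gg α h t) x‖ ≤ |t| / n := by
  have : dd e (gg α h t) x = gg α h t (dn e x) * (ee (t / n) - 1) := by
    rw [dd, gg_up]; ring
  rw [this, norm_mul, norm_gg, one_mul]
  refine (ee_sub_one_le _).trans (le_of_eq ?_)
  rw [abs_div, Nat.abs_cast]

lemma dd_gg_sub_le {n : ℕ} (t : ℝ) (e : Edge n) (x : Config n) :
    ‖dd e (gg α h t) x - (t / n : ℝ) * Complex.I * gg α h t x‖ ≤ 3 * (t / n) ^ 2 := by
  set θ := t / n with hθ
  have hup : gg α h t (up e x) = gg α h t (dn e x) * ee θ := gg_up t e x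
  have h1 : ‖dd e (gg α h t) x - θ * Complex.I * gg α h t (dn e x)‖ ≤ 2 * θ ^ 2 := by
    have : dd e (gg α h t) x - θ * Complex.I * gg α h t (dn e x)
        = gg α h t (dn e x) * (ee θ - 1 - θ * Complex.I) := by
      rw [dd, hup]; ring
    rw [this, norm_mul, norm_gg, one_mul]
    exact ee_sub_one_sub_le _
  have h2 : ‖gg α h t (dn e x) - gg α h t x‖ ≤ |θ| := by
    rcases up_or_dn e x with ⟨-, hx⟩ | ⟨-, hx⟩
    · conv_lhs => enter [1, 2]; rw [← hx]
      rw [hup]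
      have : gg α h t (dn e x) - gg α h t (dn e x) * ee θ = - (gg α h t (dn e x) * (ee θ - 1)) := by
        ring
      rw [this, norm_neg, norm_mul, norm_gg, one_mul]
      exact ee_sub_one_le _
    · rw [hx]; simp
  have h3 : dd e (gg α h t) x - θ * Complex.I * gg α h t x
      = (dd e (gg α h t) x - θ * Complex.I * gg α h t (dn e x))
        + θ * Complex.I * (gg α h t (dn e x) - gg α h t x) := by ring
  rw [h3]
  refine (norm_add_le _ _).trans ?_
  have h4 : ‖(θ * Complex.I * (gg α h t (dn e x) - gg α h t x) : ℂ)‖ ≤ θ ^ 2 := by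
    rw [norm_mul, norm_mul, Complex.norm_I, mul_one, Complex.norm_real, Real.norm_eq_abs]
    calc |θ| * ‖gg α h t (dn e x) - gg α h t x‖ ≤ |θ| * |θ| :=
          mul_le_mul_of_nonneg_left h2 (abs_nonneg _)
      _ = θ ^ 2 := by rw [← sq, sq_abs]
  linarith

lemma sg_sub_le (J : Iface α h p) {n : ℕ} (e : Edge n) (x : Config n) :
    |sg (ham n α h) e x - p| ≤ |α| / 4 * |bb p e x| := by
  rw [sg_ham]
  conv_lhs => enter [1, 2]; rw [J.crit]
  refine (sigmoid_lip _ _).trans (le_of_eq ?_)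
  have : h + α * (cc e x / n) - (h + α * p ^ 2) = α * bb p e x := by rw [bb]; ring
  rw [this, abs_mul]; ring

lemma sg_var_sub_le (J : Iface α h p) {n : ℕ} (e : Edge n) (x : Config n) :
    |sg (ham n α h) e x * (1 - sg (ham n α h) e x) - p * (1 - p)| ≤ |α| / 4 * |bb p e x| := by
  refine le_trans ?_ (sg_sub_le J e x)
  set s := sg (ham n α h) e x
  have : s * (1 - s) - p * (1 - p) = (s - p) * (1 - s - p) := by ring
  rw [this, abs_mul]
  refine mul_le_of_le_one_right (abs_nonneg _) ?_
  have h1 : 0 < s := sg_pos _ _ _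
  have h2 : s < 1 := sg_lt_one _ _ _
  have := J.pos; have := J.lt_one
  rw [abs_le]; constructor <;> linarith

/-- Replacing the conditional variance of an edge by its limit `p (1 - p)`. -/
lemma av_sg_var_smul (J : Iface α h p) {n : ℕ} (e : Edge n) (g : Config n → ℂ) {B : ℝ}
    (hg : ∀ x, ‖g x‖ ≤ B) :
    ‖av (ham n α h) (fun x => (sg (ham n α h) e x * (1 - sg (ham n α h) e x)) • g x)
      - (p * (1 - p) : ℝ) * av (ham n α h) g‖
      ≤ B * (|α| / 4) * av (ham n α h) (fun x => |bb p e x|) := by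
  rw [← av_mulc, ← av_sub, ← av_mul]
  refine norm_av_le_of _ fun x => ?_
  rw [Complex.real_smul, ← sub_mul, ← Complex.ofReal_sub, norm_mul, Complex.norm_real,
    Real.norm_eq_abs]
  calc _ ≤ (|α| / 4 * |bb p e x|) * B :=
        mul_le_mul (sg_var_sub_le J e x) (hg x) (norm_nonneg _) (by positivity)
    _ = _ := by ring

/-- For a bounded weight, `λ (E - ⟨E⟩)` may be replaced by `E - ∑ σ_e`. -/
lemma av_tot_mul (J : Iface α h p) {ε : ℝ} (hε : 0 < ε) : ∀ᶠ n : ℕ in atTop,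
    ∀ F : Config n → ℂ, (∀ x, ‖F x‖ ≤ 1) →
    ‖av (ham n α h) (fun x => ((1 - 2 * α * p ^ 2 * (1 - p)) * (tot x - av (ham n α h) tot)) • F x)
      - av (ham n α h) (fun x => (tot x - ∑ i, sg (ham n α h) i x) • F x)‖ ≤ ε * n := by
  filter_upwards [vr_R J (show 0 < ε ^ 2 by positivity)] with n h1 F hF
  set H := ham n α h with hH
  set l := 1 - 2 * α * p ^ 2 * (1 - p) with hl
  set R : Config n → ℝ := fun x => ∑ e, sg H e x - 2 * α * p ^ 2 * (1 - p) * tot x with hR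
  have g0 := glauber_sum H (fun _ : Config n => (1 : ℝ))
  simp only [dd, sub_self, smul_eq_mul, mul_zero, mul_one, av_const, Finset.sum_const_zero] at g0
  have hEG : ∀ x : Config n, tot x - ∑ i, sg H i x = l * tot x - R x := by
    intro x; simp only [hR, hl]; ring
  have g1 : av H R = l * av H tot := by
    rw [av_congr H hEG, av_sub, av_mul] at g0; linarith
  rw [← av_sub]
  refine (norm_av_le_of (g := fun x => |R x - av H R|) _ fun x => ?_).trans ?_
  · rw [← sub_smul, norm_smul, Real.norm_eq_abs, hEG x]
    have : l * (tot x - av H tot) - (l * tot x - R x) = R x - av H R := by rw [g1]; ring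
    rw [this]
    exact mul_le_of_le_one_right (abs_nonneg _) (hF x)
  · refine (av_abs_le_sqrt H fun x => R x - av H R).trans ?_
    rw [← vr_eq]
    refine (Real.sqrt_le_sqrt h1).trans (le_of_eq ?_)
    rw [← mul_pow, Real.sqrt_sq (by positivity)]

lemma hasDerivAt_gg {n : ℕ} (t : ℝ) (x : Config n) : HasDerivAt (fun t : ℝ => gg α h t x)
    (((tot x - av (ham n α h) tot) / n : ℝ) * Complex.I * gg α h t x) t := by
  set c := (tot x - av (ham n α h) tot) / n
  have h1 : HasDerivAt (fun t : ℝ => ((t * c : ℝ) : ℂ) * Complex.I) ((c : ℂ) * Complex.I) t := by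
    have := ((hasDerivAt_id t).mul_const c).ofReal_comp.mul_const Complex.I
    simpa using this
  have := h1.cexp
  rw [mul_comm] at this
  exact this

lemma hasDerivAt_av_gg {n : ℕ} (t : ℝ) :
    HasDerivAt (fun t : ℝ => av (ham n α h) (gg α h t))
      (av (ham n α h) (fun x => (((tot x - av (ham n α h) tot) / n : ℝ) * Complex.I
        * gg α h t x))) t := by
  simp only [av]
  exact (HasDerivAt.fun_sum fun x _ => (hasDerivAt_gg t x).const_smul _).const_smul _

/-- The characteristic function of the edge count nearly satisfies `φ' = - p (1 - p) / (2 λ) t φ`. -/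
lemma ode_bound (J : Iface α h p) {ε : ℝ} (hε : 0 < ε) : ∀ᶠ n : ℕ in atTop, ∀ t : ℝ,
    ‖av (ham n α h) (fun x => (((tot x - av (ham n α h) tot) / n : ℝ) * Complex.I * gg α h t x))
      + (p * (1 - p) / (2 * (1 - 2 * α * p ^ 2 * (1 - p))) * t : ℝ) * av (ham n α h) (gg α h t)‖
      ≤ ε * (1 + |t| + t ^ 2) := by
  set l := 1 - 2 * α * p ^ 2 * (1 - p) with hl
  have hl0 : 0 < l := J.lam
  have hp0 := J.pos
  have hp1 := J.lt_one
  set δ := 4 * l * ε / (|α| + 1) with hδ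
  have hα1 : 0 < |α| + 1 := by positivity
  have hδ0 : 0 < δ := by positivity
  have hαδ : |α| * δ ≤ 4 * l * ε := by
    have : |α| * δ = (|α| / (|α| + 1)) * (4 * l * ε) := by rw [hδ]; field_simp
    rw [this]
    exact mul_le_of_le_one_left (by positivity) (div_le_one_of_le₀ (by linarith) hα1.le)
  filter_upwards [av_tot_mul J (show 0 < l * ε by positivity), av_bb J hδ0, eventually_gt_atTop 0,
    (tendsto_const_div_atTop_nhds_zero_nat (2 : ℝ)).eventually_le_const
      (show (0 : ℝ) < l * ε by positivity)] with n h1 h2 hn h3 t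
  have hn' : (0 : ℝ) < n := Nat.cast_pos.mpr hn
  set H := ham n α h with hH
  set φ := av H (gg α h t) with hφ
  have hφ1 : ‖φ‖ ≤ 1 := (norm_av_le_of H fun x => (norm_gg t x).le).trans (av_const H (1 : ℝ)).le
  set A := av H (fun x => (l * (tot x - av H tot)) • gg α h t x) with hA
  have e0 : av H (fun x => (((tot x - av H tot) / n : ℝ) * Complex.I * gg α h t x))
      = (1 / (l * n) : ℝ) * Complex.I * A := by
    rw [hA, ← av_mulc]
    refine av_congr _ fun x => ?_
    rw [Complex.real_smul]
    have : (tot x - av H tot) / n = 1 / (l * n) * (l * (tot x - av H tot)) := by field_simp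
    rw [this, Complex.ofReal_mul]; ring
  have e1 := h1 (gg α h t) fun x => (norm_gg t x).le
  rw [glauber_sum] at e1
  have e2 : ∀ e : Edge n, ‖av H (fun x => (sg H e x * (1 - sg H e x)) • dd e (gg α h t) x)
      - (p * (1 - p) : ℝ) * ((t / n : ℝ) * Complex.I * φ)‖
      ≤ |t| / n * (|α| / 4) * δ + 3 * (t / n) ^ 2 := by
    intro e
    have a1 := av_sg_var_smul J e (dd e (gg α h t)) (fun x => dd_gg_le (α := α) (h := h) t e x)
    have a2 : ‖av H (dd e (gg α h t)) - (t / n : ℝ) * Complex.I * φ‖ ≤ 3 * (t / n) ^ 2 := by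
      rw [hφ, ← av_mulc, ← av_sub]
      exact (norm_av_le_of H fun x => dd_gg_sub_le t e x).trans (av_const H _).le
    have a3 : av H (fun x => (sg H e x * (1 - sg H e x)) • dd e (gg α h t) x)
      - (p * (1 - p) : ℝ) * ((t / n : ℝ) * Complex.I * φ)
      = (av H (fun x => (sg H e x * (1 - sg H e x)) • dd e (gg α h t) x)
        - (p * (1 - p) : ℝ) * av H (dd e (gg α h t)))
        + (p * (1 - p) : ℝ) * (av H (dd e (gg α h t)) - (t / n : ℝ) * Complex.I * φ) := by ring
    rw [a3]
    refine (norm_add_le _ _).trans (add_le_add (a1.trans ?_) ?_)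
    · exact mul_le_mul_of_nonneg_left (h2 e) (by positivity)
    · rw [norm_mul, Complex.norm_real, Real.norm_eq_abs]
      refine (mul_le_of_le_one_left (norm_nonneg _) ?_).trans a2
      rw [abs_le]; constructor <;> nlinarith
  have e3 : ‖∑ e : Edge n, av H (fun x => (sg H e x * (1 - sg H e x)) • dd e (gg α h t) x)
      - (p * (1 - p) * (n * t / 2) : ℝ) * Complex.I * φ‖
      ≤ n * |t| * (|α| * δ) / 8 + 3 * t ^ 2 / 2 + |t| / 2 := by
    have b1 : (p * (1 - p) * (n * t / 2) : ℝ) * Complex.I * φ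
        = (∑ e : Edge n, (p * (1 - p) : ℝ) * ((t / n : ℝ) * Complex.I * φ))
          + (p * (1 - p) * (t / 2) : ℝ) * Complex.I * φ := by
      rw [Finset.sum_const, Finset.card_univ, nsmul_eq_mul]
      have c1 := card_edge (n := n)
      have c2 : ((Fintype.card (Edge n) : ℕ) : ℂ) = ((n * (n - 1) / 2 : ℝ) : ℂ) := by
        rw [← c1]; simp
      rw [c2]
      have c3 : p * (1 - p) * (n * t / 2) = n * (n - 1) / 2 * (p * (1 - p) * (t / n))
          + p * (1 - p) * (t / 2) := by field_simp; ring
      rw [c3]; push_cast; ring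
    rw [b1, ← sub_sub, ← Finset.sum_sub_distrib]
    refine (norm_sub_le _ _).trans (add_le_add ((norm_sum_le _ _).trans
      ((Finset.sum_le_sum fun e _ => e2 e).trans ?_)) ?_)
    · rw [Finset.sum_const, Finset.card_univ, nsmul_eq_mul]
      calc _ ≤ (n : ℝ) ^ 2 / 2 * (|t| / n * (|α| / 4) * δ + 3 * (t / n) ^ 2) :=
            mul_le_mul_of_nonneg_right (card_edge_le n) (by positivity)
        _ = _ := by field_simp; ring
    · rw [norm_mul, norm_mul, Complex.norm_I, mul_one, Complex.norm_real, Real.norm_eq_abs,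
        abs_mul, abs_div, abs_two]
      have d1 : |p * (1 - p)| ≤ 1 := by rw [abs_le]; constructor <;> nlinarith
      calc |p * (1 - p)| * (|t| / 2) * ‖φ‖ ≤ 1 * (|t| / 2) * 1 := by gcongr
        _ = _ := by ring
  have e4 : av H (fun x => (((tot x - av H tot) / n : ℝ) * Complex.I * gg α h t x))
      + (p * (1 - p) / (2 * l) * t : ℝ) * φ
      = (1 / (l * n) : ℝ) * Complex.I * ((A - ∑ e : Edge n, av H
          (fun x => (sg H e x * (1 - sg H e x)) • dd e (gg α h t) x))
        + (∑ e : Edge n, av H (fun x => (sg H e x * (1 - sg H e x)) • dd e (gg α h t) x)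
      - (p * (1 - p) * (n * t / 2) : ℝ) * Complex.I * φ)) := by
    rw [e0]
    have c1 : p * (1 - p) / (2 * l) * t = 1 / (l * n) * (p * (1 - p) * (n * t / 2)) := by
      field_simp
    rw [c1, Complex.ofReal_mul (1 / (l * n))]
    linear_combination (((1 / (l * n) : ℝ) : ℂ) * (p * (1 - p) * (n * t / 2) : ℝ) * φ)
      * Complex.I_mul_I
  rw [e4, norm_mul, norm_mul, Complex.norm_I, mul_one, Complex.norm_real, Real.norm_eq_abs,
    abs_of_pos (by positivity)]
  have e5 := (norm_add_le _ _).trans (add_le_add e1 e3)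
  refine (mul_le_mul_of_nonneg_left e5 (by positivity)).trans ?_
  rw [div_le_iff₀ hn'] at h3
  rw [one_div, inv_mul_le_iff₀ (by positivity)]
  have f1 : n * |t| * (|α| * δ) / 8 ≤ n * |t| * (4 * l * ε) / 8 := by gcongr
  have f2 : 3 * t ^ 2 / 2 ≤ l * ε * n * t ^ 2 := by nlinarith [sq_nonneg t]
  have f3 : |t| / 2 ≤ l * ε * n / 4 * |t| := by nlinarith [abs_nonneg t]
  have f4 : 0 ≤ l * ε * n * |t| := by positivity
  nlinarith

/-- The central limit theorem for the edge count, in terms of characteristic functions. -/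
lemma tendsto_cf (J : Iface α h p) (t : ℝ) :
    Tendsto (fun n : ℕ => av (ham n α h) (gg α h t)) atTop
      (𝓝 (Real.exp (-(p * (1 - p) / (2 * (1 - 2 * α * p ^ 2 * (1 - p)))) * t ^ 2 / 2) : ℝ)) := by
  set c := p * (1 - p) / (2 * (1 - 2 * α * p ^ 2 * (1 - p))) with hc
  have hc0 : 0 < c := by
    have := J.pos; have := J.lt_one; have := J.lam
    have : 0 < 1 - p := by linarith
    positivity
  rw [Metric.tendsto_atTop']
  intro ε hε
  set M := Real.exp (c * t ^ 2 / 2) * (1 + |t| + t ^ 2) * (|t| + 1) with hM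
  have hM0 : 0 < M := by positivity
  obtain ⟨N, hN⟩ := eventually_atTop.mp (ode_bound J (show 0 < ε / (2 * M) by positivity))
  refine ⟨N, fun n hn => ?_⟩
  have ho := hN n hn.le
  set H := ham n α h
  set Φ : ℝ → ℂ := fun s => (Real.exp (c * s ^ 2 / 2) : ℝ) * av H (gg α h s) with hΦ
  have hd : ∀ s : ℝ, HasDerivAt Φ ((Real.exp (c * s ^ 2 / 2) : ℝ) *
      (av H (fun x => (((tot x - av H tot) / n : ℝ) * Complex.I * gg α h s x))
      + (c * s : ℝ) * av H (gg α h s))) s := by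
    intro s
    have h1 : HasDerivAt (fun s : ℝ => Real.exp (c * s ^ 2 / 2))
        (Real.exp (c * s ^ 2 / 2) * (c * s)) s := by
      have : HasDerivAt (fun s : ℝ => c * s ^ 2 / 2) (c * s) s := by
        have := ((hasDerivAt_pow 2 s).const_mul c).div_const 2
        refine this.congr_deriv ?_
        push_cast; ring
      exact this.exp
    have := h1.ofReal_comp.mul (hasDerivAt_av_gg (α := α) (h := h) (n := n) s)
    refine this.congr_deriv ?_
    push_cast; ring
  have hb : ‖Φ t - Φ 0‖ ≤ Real.exp (c * t ^ 2 / 2) * (ε / (2 * M) * (1 + |t| + t ^ 2)) * ‖t - 0‖ := by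
    refine (convex_closedBall (0 : ℝ) |t|).norm_image_sub_le_of_norm_hasDerivWithin_le
      (fun s _ => (hd s).hasDerivWithinAt) (fun s hs => ?_) (by simp) (by simp)
    rw [mem_closedBall_zero_iff, Real.norm_eq_abs] at hs
    have hs2 : s ^ 2 ≤ t ^ 2 := sq_le_sq.mpr hs
    rw [norm_mul, Complex.norm_real, Real.norm_eq_abs, abs_of_pos (Real.exp_pos _)]
    refine mul_le_mul (Real.exp_le_exp.mpr (by gcongr)) ((ho s).trans (by gcongr))
      (norm_nonneg _) (Real.exp_pos _).le
  have h0 : Φ 0 = 1 := by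
    have : (gg α h 0 : Config n → ℂ) = fun _ => 1 := by
      funext x; simp [gg, ee_zero]
    simp [hΦ, this, av_const]
  have ht : av H (gg α h t) - (Real.exp (-c * t ^ 2 / 2) : ℝ)
      = (Real.exp (-c * t ^ 2 / 2) : ℝ) * (Φ t - Φ 0) := by
    rw [h0, mul_sub, mul_one, hΦ]
    simp only
    rw [← mul_assoc, ← Complex.ofReal_mul, ← Real.exp_add]
    have : -c * t ^ 2 / 2 + c * t ^ 2 / 2 = 0 := by ring
    rw [this]; simp
  rw [dist_eq_norm, ht, norm_mul, Complex.norm_real, Real.norm_eq_abs,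
    abs_of_pos (Real.exp_pos _)]
  have he1 : Real.exp (-c * t ^ 2 / 2) ≤ 1 := Real.exp_le_one_iff.mpr (by nlinarith [sq_nonneg t])
  calc Real.exp (-c * t ^ 2 / 2) * ‖Φ t - Φ 0‖ ≤ ‖Φ t - Φ 0‖ :=
        mul_le_of_le_one_left (norm_nonneg _) he1
    _ ≤ Real.exp (c * t ^ 2 / 2) * (ε / (2 * M) * (1 + |t| + t ^ 2)) * (|t| + 1) := by
        refine hb.trans (mul_le_mul_of_nonneg_left ?_ (by positivity))
        rw [sub_zero, Real.norm_eq_abs]; linarith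
    _ = ε / (2 * M) * M := by rw [hM]; ring
    _ = ε / 2 := by field_simp
    _ < ε := by linarith

end CF

/-! ### Lower bound for the codegree fluctuations -/

section Lower
variable {α h p : ℝ}

lemma adj_up_ne {n : ℕ} {u v w : Fin n} (huv : u ≠ v) (huw : u ≠ w) (x : Config n) :
    adj (up (mkE u w huw) x) v w = adj (dn (mkE u w huw) x) v w := by
  rw [adj_up]
  have : hit (mkE u w huw) v w = 0 := by
    rw [hit_eq, if_neg huv.symm]
    split_ifs with h1 h2
    · exact absurd h2.symm huw
    · simp
    · simp
  rw [this, add_zero]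

lemma cc_le_infl {n : ℕ} (e : Edge n) (x : Config n) :
    cc e x ≤ ∑ f, infl e f * dd f (cc e) x := by
  obtain ⟨u, v, huv, rfl⟩ := exists_mkE e
  have h1 : ∀ w, adj x u w * adj x v w
      ≤ ∑ f, hit f u w * dd f (cc (mkE u v huv)) x := by
    intro w
    have hnn : ∀ f ∈ (Finset.univ : Finset (Edge n)),
        0 ≤ hit f u w * dd f (cc (mkE u v huv)) x := fun f _ =>
      mul_nonneg (hit_nonneg _ _ _) (dd_cc_nonneg _ _ _)
    by_cases huw : u = w
    · subst huw; rw [adj_self, zero_mul]; exact Finset.sum_nonneg hnn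
    refine le_trans ?_ (Finset.single_le_sum hnn (Finset.mem_univ (mkE u w huw)))
    rw [hit_mkE _ _ _ huw, if_pos rfl, one_mul, dd_cc_mkE]
    have h2 : adj x v w = adj (dn (mkE u w huw) x) v w := by
      rcases up_or_dn (mkE u w huw) x with ⟨-, hx⟩ | ⟨-, hx⟩
      · rw [← adj_up_ne huv huw, hx]
      · rw [hx]
    have h3 : adj x u w * adj x v w ≤ adj x v w :=
      mul_le_of_le_one_left (adj_nonneg _ _ _) (adj_le_one _ _ _)
    refine h3.trans ?_
    have hnn' : ∀ w' ∈ (Finset.univ : Finset (Fin n)),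
        0 ≤ hit (mkE u w huw) u w' * adj (dn (mkE u w huw) x) v w'
          + hit (mkE u w huw) v w' * adj (dn (mkE u w huw) x) u w' := fun w' _ =>
      add_nonneg (mul_nonneg (hit_nonneg _ _ _) (adj_nonneg _ _ _))
        (mul_nonneg (hit_nonneg _ _ _) (adj_nonneg _ _ _))
    refine le_trans ?_ (Finset.single_le_sum hnn' (Finset.mem_univ w))
    rw [hit_mkE _ _ _ huw, if_pos rfl, one_mul, ← h2]
    exact le_add_of_nonneg_right (mul_nonneg (hit_nonneg _ _ _) (adj_nonneg _ _ _))
  rw [cc_mkE, cod]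
  refine (Finset.sum_le_sum fun w _ => h1 w).trans ?_
  rw [Finset.sum_comm]
  refine Finset.sum_le_sum fun f _ => ?_
  rw [← Finset.sum_mul]
  refine mul_le_mul_of_nonneg_right ?_ (dd_cc_nonneg _ _ _)
  rw [infl_mkE]
  exact Finset.sum_le_sum fun w _ => le_add_of_nonneg_right (hit_nonneg _ _ _)

lemma infl_nonneg {n : ℕ} (e f : Edge n) : 0 ≤ infl e f := by
  obtain ⟨u, v, huv, rfl⟩ := exists_mkE e
  rw [infl_mkE]
  exact Finset.sum_nonneg fun w _ => add_nonneg (hit_nonneg _ _ _) (hit_nonneg _ _ _)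

/-- The conditional variance of an edge is bounded below uniformly in `n`. -/
lemma exists_sg_var (α h : ℝ) : ∃ δ : ℝ, 0 < δ ∧ ∀ (n : ℕ) (e : Edge n) (x : Config n),
    δ ≤ sg (ham n α h) e x * (1 - sg (ham n α h) e x) := by
  have hS := continuous_S α h
  obtain ⟨y, -, hy⟩ := (isCompact_Icc (a := (0 : ℝ)) (b := 1)).exists_isMinOn
    (Set.nonempty_Icc.mpr zero_le_one)
    (f := fun y => Real.sigmoid (h + α * y) * (1 - Real.sigmoid (h + α * y))) (by fun_prop)
  refine ⟨Real.sigmoid (h + α * y) * (1 - Real.sigmoid (h + α * y)),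
    mul_pos (Real.sigmoid_pos _) (by linarith [Real.sigmoid_lt_one (h + α * y)]), ?_⟩
  intro n e x
  rw [sg_ham]
  exact hy ⟨div_nonneg (cc_nonneg _ _) (Nat.cast_nonneg _),
      div_le_one_of_le₀ (cc_le _ _) (Nat.cast_nonneg _)⟩

/-- The codegree of an edge fluctuates at least on the scale `√n`, by duality with the sum of
the centred indicators of the neighbouring edges. -/
lemma exists_bb_sq (J : Iface α h p) : ∃ η : ℝ, 0 < η ∧ ∀ᶠ n : ℕ in atTop, ∀ e : Edge n,
    η / n ≤ av (ham n α h) (fun x => bb p e x ^ 2) := by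
  obtain ⟨δ, hδ, hσ⟩ := exists_sg_var α h
  have hp0 := J.pos
  set C := (2 + |α|) / 2 with hC
  have hC0 : 0 < C := by positivity
  refine ⟨(δ * (p ^ 2 / 2)) ^ 2 / C, by positivity, ?_⟩
  filter_upwards [av_bb J (show 0 < p ^ 2 / 2 by positivity), eventually_gt_atTop 0] with n h1 hn e
  have hn' : (0 : ℝ) < n := Nat.cast_pos.mpr hn
  set H := ham n α h with hH
  set Z : Config n → ℝ := fun x => ∑ f, infl e f * (ind f x - sg H f x) with hZ
  have hdual : ∀ g : Config n → ℝ, av H (fun x => g x * Z x)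
      = ∑ f, infl e f * av H (fun x => sg H f x * (1 - sg H f x) * dd f g x) := by
    intro g
    have : (fun x => g x * Z x) = fun x => ∑ f, infl e f * ((ind f x - sg H f x) * g x) := by
      funext x; simp only [hZ, Finset.mul_sum]; exact Finset.sum_congr rfl fun f _ => by ring
    rw [this, av_sum]
    refine Finset.sum_congr rfl fun f _ => ?_
    rw [av_mul, glauber_mul]
  -- second moment of `Z`
  have hdd : ∀ f x, |dd f Z x| ≤ 2 + |α| := by
    intro f x
    have e1 : dd f Z x = ∑ g, infl e g * (dd f (ind g) x - (sg H g (up f x) - sg H g (dn f x))) := by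
      simp only [dd, hZ, ← Finset.sum_sub_distrib]
      exact Finset.sum_congr rfl fun g _ => by ring
    rw [e1]
    have e2 : ∀ g, |infl e g * (dd f (ind g) x - (sg H g (up f x) - sg H g (dn f x)))|
        ≤ 2 * (if f = g then 1 else 0) + 2 * (|α| / 4) * (|dd f (cc g) x| / n) := by
      intro g
      have a1 := infl_nonneg e g
      have a2 := infl_le_two e g
      have a3 := dd_sg_ham_le (α := α) (h := h) g f x
      have a5 : |dd f (ind g) x| = if f = g then 1 else 0 := by rw [dd_ind]; split_ifs <;> simp
      have a6 := abs_sub (dd f (ind g) x) (sg H g (up f x) - sg H g (dn f x))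
      rw [a5] at a6
      rw [abs_mul, abs_of_nonneg a1]
      calc _ ≤ 2 * ((if f = g then 1 else 0) + |α| / 4 * (|dd f (cc g) x| / n)) := by
            refine mul_le_mul a2 (a6.trans (by gcongr)) (abs_nonneg _) zero_le_two
        _ = _ := by ring
    refine (Finset.abs_sum_le_sum_abs _ _).trans ((Finset.sum_le_sum fun g _ => e2 g).trans ?_)
    rw [Finset.sum_add_distrib, ← Finset.mul_sum, ← Finset.mul_sum, Finset.sum_ite_eq,
      if_pos (Finset.mem_univ _), ← Finset.sum_div]
    have h3 : (∑ e, |dd f (cc e) x|) / n ≤ 2 := by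
      rw [div_le_iff₀ hn']; exact sum_dd_cc' f x
    have := mul_le_mul_of_nonneg_left h3 (show 0 ≤ 2 * (|α| / 4) by positivity)
    linarith
  have hZ2 : av H (fun x => Z x ^ 2) ≤ C * n := by
    have : (fun x => Z x ^ 2) = fun x => Z x * Z x := by funext x; ring
    rw [this, hdual Z]
    calc _ ≤ ∑ f, infl e f * ((2 + |α|) / 4) := by
          refine Finset.sum_le_sum fun f _ => mul_le_mul_of_nonneg_left ?_ (infl_nonneg e f)
          refine av_le_const _ fun x => ?_
          refine (mul_le_mul_of_nonneg_left ((le_abs_self _).trans (hdd f x))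
            (sg_var_nonneg H f x)).trans ?_
          nlinarith [sg_var_le H f x, abs_nonneg α]
      _ = (∑ f, infl e f) * ((2 + |α|) / 4) := by rw [Finset.sum_mul]
      _ ≤ (2 * n) * ((2 + |α|) / 4) := mul_le_mul_of_nonneg_right (sum_infl e) (by positivity)
      _ = C * n := by rw [hC]; ring
  -- correlation of `Z` with the codegree
  have hcor : δ * (p ^ 2 / 2) ≤ av H (fun x => bb p e x * Z x) := by
    rw [hdual]
    have a1 : p ^ 2 / 2 * n ≤ av H (cc e) := by
      have b1 := (abs_le.mp ((abs_av_le H (bb p e)).trans (h1 e))).1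
      have b2 : av H (bb p e) = (1 / n) * av H (cc e) - p ^ 2 := by
        have : bb p e = fun x : Config n => (1 / n) * cc e x - p ^ 2 := by
          funext x; rw [bb]; ring
        rw [this, av_sub, av_mul, av_const]
      rw [b2] at b1
      have b3 : p ^ 2 / 2 ≤ (1 / n) * av H (cc e) := by linarith
      rw [one_div, inv_mul_eq_div, le_div_iff₀ hn'] at b3
      exact b3
    have a2 : av H (cc e) ≤ ∑ f, infl e f * av H (fun x => dd f (cc e) x) := by
      simp only [← av_mul]
      rw [← av_sum]
      exact av_mono _ fun x => cc_le_infl e x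
    have a3 : ∑ f, infl e f * av H (fun x => sg H f x * (1 - sg H f x) * dd f (bb p e) x)
        ≥ ∑ f, (δ / n) * (infl e f * av H (fun x => dd f (cc e) x)) := by
      refine Finset.sum_le_sum fun f _ => ?_
      have : δ / n * (infl e f * av H (fun x => dd f (cc e) x))
          = infl e f * av H (fun x => δ * (dd f (cc e) x / n)) := by
        rw [av_mul, show (fun x => dd f (cc e) x / (n : ℝ)) = fun x => (1 / (n : ℝ)) * dd f (cc e) x from
          funext fun x => by ring, av_mul]
        ring
      rw [this]
      refine mul_le_mul_of_nonneg_left (av_mono _ fun x => ?_) (infl_nonneg e f)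
      rw [dd_bb]
      exact mul_le_mul_of_nonneg_right (hσ n f x) (div_nonneg (dd_cc_nonneg _ _ _) hn'.le)
    refine le_trans ?_ a3
    rw [← Finset.mul_sum]
    calc δ * (p ^ 2 / 2) = δ / n * (p ^ 2 / 2 * n) := by field_simp
      _ ≤ _ := mul_le_mul_of_nonneg_left (a1.trans a2) (by positivity)
  have hcs := av_cs H (bb p e) Z
  have h5 : (δ * (p ^ 2 / 2)) ^ 2 ≤ av H (fun x => bb p e x ^ 2) * (C * n) := by
    refine (pow_le_pow_left₀ (by positivity) hcor 2).trans (hcs.trans ?_)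
    exact mul_le_mul_of_nonneg_left hZ2 (av_nonneg _ fun x => sq_nonneg _)
  rw [div_div, div_le_iff₀ (by positivity)]
  exact h5

end Lower

/-! ### Equidistribution of `T / n` modulo one -/

section Equi
variable {α h p : ℝ}

/-- The joint character of the centred edge count (at scale `n`) and of `T / n`. -/
def ww (α h t m : ℝ) {n : ℕ} (x : Config n) : ℂ := gg α h t x * ee (m * (Tr x / n))

lemma norm_ww (t m : ℝ) {n : ℕ} (x : Config n) : ‖ww α h t m x‖ = 1 := by
  rw [ww, norm_mul, norm_gg, norm_ee, one_mul]

lemma ww_up (t m : ℝ) {n : ℕ} (e : Edge n) (x : Config n) :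
    ww α h t m (up e x) = ww α h t m (dn e x) * (ee (m * p ^ 2) * ee (m * bb p e x + t / n)) := by
  have h1 : Tr (up e x) = Tr (dn e x) + cc e x := by rw [cc, dd]; ring
  have h2 : m * (Tr (up e x) / n) = m * (Tr (dn e x) / n) + (m * p ^ 2 + m * bb p e x) := by
    rw [h1, bb]; ring
  rw [ww, ww, gg_up, h2, ee_add, ee_add, ee_add]; ring

lemma card_edge_ge {n : ℕ} (hn : 2 ≤ n) : (n : ℝ) ^ 2 / 4 ≤ Fintype.card (Edge n) := by
  have : (2 : ℝ) ≤ n := by exact_mod_cast hn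
  rw [card_edge]; nlinarith

/-- Comparison of the Glauber response of the character with its average at one edge. -/
lemma nonres_edge (J : Iface α h p) (t m : ℝ) {n : ℕ} (e : Edge n) :
    ‖((p * (1 - p) : ℝ) * (ee (m * p ^ 2) - 1)) * av (ham n α h) (ww α h t m)
      - (1 + p * (ee (m * p ^ 2) - 1)) * av (ham n α h) (fun x =>
        (sg (ham n α h) e x * (1 - sg (ham n α h) e x)) • dd e (ww α h t m) x)‖
      ≤ 2 * ((|α| + |m|) * av (ham n α h) (fun x => |bb p e x|) + |t| / n) := by
  have hp0 := J.pos
  have hp1 := J.lt_one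
  set H := ham n α h with hH
  set w : Config n → ℂ := ww α h t m with hw
  set ζ := ee (m * p ^ 2) with hζ
  set D : Config n → ℂ := dd e w with hD
  set b := av H (fun x => |bb p e x|) with hb
  have hζ1 : ‖ζ - 1‖ ≤ 2 := (norm_sub_le _ _).trans (by rw [norm_ee, norm_one]; norm_num)
  have hDle : ∀ x, ‖D x‖ ≤ 2 := fun x =>
    (norm_sub_le _ _).trans (by rw [norm_ww, norm_ww]; norm_num)
  have hDd : ∀ x, ‖D x - (ζ - 1) * w (dn e x)‖ ≤ |m| * |bb p e x| + |t| / n := by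
    intro x
    have : D x - (ζ - 1) * w (dn e x) = w (dn e x) * (ζ * (ee (m * bb p e x + t / n) - 1)) := by
      rw [hD, dd, hw, ww_up (p := p)]; ring
    rw [this, norm_mul, norm_ww, one_mul, norm_mul, norm_ee, one_mul]
    refine (ee_sub_one_le _).trans ((abs_add_le _ _).trans (le_of_eq ?_))
    rw [abs_mul, abs_div, Nat.abs_cast]
  set a := av H (fun x => w (dn e x)) with ha
  have e1 : ‖av H D - (ζ - 1) * a‖ ≤ |m| * b + |t| / n := by
    rw [ha, ← av_mulc, ← av_sub]
    refine (norm_av_le_of _ hDd).trans (le_of_eq ?_)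
    rw [av_add, av_mul, av_const]
  have e2 := av_sg_var_smul J e D hDle
  have e3 : av H w = a + av H (fun x => sg H e x • D x) := by
    have g1 := glauber H e D
    have g2 : ∀ x, dd e D x = 0 := fun x => by rw [hD]; exact dd_dd_self _ _ _
    simp only [g2, smul_zero, av_const, sub_smul, av_sub] at g1
    rw [← sub_eq_zero.1 g1, ha, ← av_add]
    exact av_congr H fun x => eq_ind e w x
  have e4 : ‖av H (fun x => sg H e x • D x) - p * av H D‖ ≤ 2 * (|α| / 4) * b := by
    rw [← av_mulc, ← av_sub, ← av_mul]
    refine norm_av_le_of _ fun x => ?_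
    rw [Complex.real_smul, ← sub_mul, norm_mul, ← Complex.ofReal_sub, Complex.norm_real,
      Real.norm_eq_abs]
    have h1 := sg_sub_le J e x
    calc _ ≤ (|α| / 4 * |bb p e x|) * 2 :=
          mul_le_mul h1 (hDle x) (norm_nonneg _) (by positivity)
      _ = _ := by ring
  have hb0 : 0 ≤ b := av_nonneg _ fun x => abs_nonneg _
  have ht0 : 0 ≤ |t| / n := by positivity
  set S := av H (fun x => (sg H e x * (1 - sg H e x)) • D x) with hS
  set η := |m| * b + |t| / n with hη
  have hη0 : 0 ≤ η := by positivity
  -- `c₁ = p(1-p)(ζ-1)`, `c₂ = 1 + p(ζ-1)`, `⟨w⟩ ≈ c₂ a` and `S ≈ c₁ a`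
  have f1 : ‖av H w - (1 + p * (ζ - 1)) * a‖ ≤ 2 * (|α| / 4) * b + η := by
    have : av H w - (1 + p * (ζ - 1)) * a = (av H (fun x => sg H e x • D x) - p * av H D)
        + p * (av H D - (ζ - 1) * a) := by rw [e3]; ring
    rw [this]
    refine (norm_add_le _ _).trans (add_le_add e4 ?_)
    rw [norm_mul, Complex.norm_real, Real.norm_of_nonneg hp0.le]
    nlinarith [norm_nonneg (av H D - (ζ - 1) * a)]
  have hpp : p * (1 - p) ≤ 1 / 4 := by nlinarith [sq_nonneg (p - 1 / 2)]
  have hpp0 : 0 ≤ p * (1 - p) := mul_nonneg hp0.le (by linarith)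
  have f2 : ‖S - ((p * (1 - p) : ℝ) * (ζ - 1)) * a‖ ≤ 2 * (|α| / 4) * b + η := by
    have : S - ((p * (1 - p) : ℝ) * (ζ - 1)) * a = (S - (p * (1 - p) : ℝ) * av H D)
        + (p * (1 - p) : ℝ) * (av H D - (ζ - 1) * a) := by ring
    rw [this]
    refine (norm_add_le _ _).trans (add_le_add e2 ?_)
    rw [norm_mul, Complex.norm_real, Real.norm_of_nonneg hpp0]
    nlinarith [norm_nonneg (av H D - (ζ - 1) * a)]
  have hc1 : ‖((p * (1 - p) : ℝ) * (ζ - 1) : ℂ)‖ ≤ 1 := by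
    rw [norm_mul, Complex.norm_real, Real.norm_of_nonneg hpp0]
    nlinarith [norm_nonneg (ζ - 1)]
  have hc2 : ‖(1 + p * (ζ - 1) : ℂ)‖ ≤ 1 := by
    have : (1 + p * (ζ - 1) : ℂ) = ((1 - p : ℝ) : ℂ) + p * ζ := by push_cast; ring
    rw [this]
    refine (norm_add_le _ _).trans (le_of_eq ?_)
    rw [norm_mul, norm_ee, Complex.norm_real, Complex.norm_real, Real.norm_of_nonneg hp0.le,
      Real.norm_of_nonneg (by linarith)]
    ring
  have key : ((p * (1 - p) : ℝ) * (ζ - 1)) * av H w - (1 + p * (ζ - 1)) * S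
      = ((p * (1 - p) : ℝ) * (ζ - 1)) * (av H w - (1 + p * (ζ - 1)) * a)
        - (1 + p * (ζ - 1)) * (S - ((p * (1 - p) : ℝ) * (ζ - 1)) * a) := by ring
  rw [key]
  refine (norm_sub_le _ _).trans ?_
  rw [norm_mul _ (av H w - _), norm_mul _ (S - _)]
  have i1 := mul_le_mul hc1 f1 (norm_nonneg _) zero_le_one
  have i2 := mul_le_mul hc2 f2 (norm_nonneg _) zero_le_one
  have : 0 ≤ |α| * b := by positivity
  nlinarith

/-- The non-resonant case: by the Glauber identity `⟨(E - ∑ σ_e) w⟩`, which is `O(n)`, equals a sum of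
order `n²` times a nonzero multiple of `⟨w⟩`. -/
lemma nonres (J : Iface α h p) (t m : ℝ) (hζ : ee (m * p ^ 2) ≠ 1) {ε : ℝ} (hε : 0 < ε) :
    ∀ᶠ n : ℕ in atTop, ‖av (ham n α h) (ww α h t m)‖ ≤ ε := by
  obtain ⟨C, hC, hV⟩ := vr_tot J
  have hp0 := J.pos
  have hp1 := J.lt_one
  set l := 1 - 2 * α * p ^ 2 * (1 - p) with hl
  have hl0 : 0 < l := J.lam
  set ζ := ee (m * p ^ 2) with hζd
  set c := ‖((p * (1 - p) : ℝ) * (ζ - 1) : ℂ)‖ with hc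
  have hc0 : 0 < c := by
    refine norm_pos_iff.2 (mul_ne_zero ?_ (sub_ne_zero.2 hζ))
    exact_mod_cast (mul_pos hp0 (by linarith)).ne'
  set K := |α| + |m| + 1 with hK
  have hK0 : 0 < K := by positivity
  set M := l * Real.sqrt C + 1 with hM
  have hM0 : 0 < M := by positivity
  have hlim : ∀ᶠ n : ℕ in atTop, 4 * M / n + 2 * |t| / n ≤ ε * c / 2 := by
    have h1 : Tendsto (fun n : ℕ => 4 * M / (n : ℝ) + 2 * |t| / (n : ℝ)) atTop (𝓝 (0 + 0)) :=
      (tendsto_const_div_atTop_nhds_zero_nat _).add (tendsto_const_div_atTop_nhds_zero_nat _)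
    rw [add_zero] at h1
    exact (h1.eventually (gt_mem_nhds (show 0 < ε * c / 2 by positivity))).mono fun n hn => hn.le
  filter_upwards [hV, hlim, av_tot_mul J one_pos, eventually_ge_atTop 2,
    av_bb J (show 0 < ε * c / (4 * K) by positivity)] with n hV hlim h1 hn hbb
  set H := ham n α h with hH
  set w : Config n → ℂ := ww α h t m with hw
  have hn2 : (2 : ℝ) ≤ n := by exact_mod_cast hn
  have hn0 : (0 : ℝ) < n := by linarith
  set N : ℝ := ((Fintype.card (Edge n) : ℕ) : ℝ) with hN
  have hN1 : (n : ℝ) ^ 2 / 4 ≤ N := card_edge_ge hn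
  have hN0 : 0 < N := lt_of_lt_of_le (by positivity) hN1
  have s1 : ‖av H (fun x => (l * (tot x - av H tot)) • w x)‖ ≤ l * Real.sqrt C * n := by
    refine (norm_av_le_of (g := fun x => l * |tot x - av H tot|) _ fun x => ?_).trans ?_
    · rw [norm_smul, norm_ww, mul_one, Real.norm_eq_abs, abs_mul, abs_of_pos hl0]
    · rw [av_mul, mul_assoc]
      refine mul_le_mul_of_nonneg_left ?_ hl0.le
      refine (av_abs_le_sqrt H fun x => tot x - av H tot).trans ?_
      rw [← vr_eq]
      refine (Real.sqrt_le_sqrt hV).trans (le_of_eq ?_)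
      rw [Real.sqrt_mul hC.le, Real.sqrt_sq hn0.le]
  have s2 := h1 w fun x => (norm_ww t m x).le
  have s3 : ‖av H (fun x => (tot x - ∑ i, sg H i x) • w x)‖ ≤ M * n := by
    have := norm_sub_norm_le (av H (fun x => (tot x - ∑ i, sg H i x) • w x))
      (av H (fun x => (l * (tot x - av H tot)) • w x))
    rw [norm_sub_rev] at this
    rw [hM]; linarith
  rw [glauber_sum] at s3
  set S : Edge n → ℂ := fun e => av H (fun x => (sg H e x * (1 - sg H e x)) • dd e w x) with hS
  set δ := 2 * (ε * c / 4 + |t| / n) with hδ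
  have s4 : ∀ e, ‖((p * (1 - p) : ℝ) * (ζ - 1)) * av H w - (1 + p * (ζ - 1)) * S e‖ ≤ δ := by
    intro e
    refine (nonres_edge J t m e).trans ?_
    rw [hδ]
    have : (|α| + |m|) * av H (fun x => |bb p e x|) ≤ ε * c / 4 := by
      calc (|α| + |m|) * av H (fun x => |bb p e x|) ≤ K * (ε * c / (4 * K)) :=
            mul_le_mul (by rw [hK]; linarith) (hbb e) (av_nonneg _ fun x => abs_nonneg _) hK0.le
        _ = ε * c / 4 := by field_simp
    linarith
  have hc2 : ‖(1 + p * (ζ - 1) : ℂ)‖ ≤ 1 := by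
    have : (1 + p * (ζ - 1) : ℂ) = ((1 - p : ℝ) : ℂ) + p * ζ := by push_cast; ring
    rw [this]
    refine (norm_add_le _ _).trans (le_of_eq ?_)
    rw [norm_mul, norm_ee, Complex.norm_real, Complex.norm_real, Real.norm_of_nonneg hp0.le,
      Real.norm_of_nonneg (by linarith)]
    ring
  have s5 : ‖(N : ℂ) * (((p * (1 - p) : ℝ) * (ζ - 1)) * av H w)
      - (1 + p * (ζ - 1)) * ∑ e, S e‖ ≤ N * δ := by
    have : (N : ℂ) * (((p * (1 - p) : ℝ) * (ζ - 1)) * av H w)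
      - (1 + p * (ζ - 1)) * ∑ e, S e
      = ∑ e, (((p * (1 - p) : ℝ) * (ζ - 1)) * av H w - (1 + p * (ζ - 1)) * S e) := by
      rw [Finset.sum_sub_distrib, Finset.mul_sum, Finset.sum_const, Finset.card_univ,
        nsmul_eq_mul, hN, Complex.ofReal_natCast]
    rw [this]
    refine (norm_sum_le _ _).trans ((Finset.sum_le_sum fun e _ => s4 e).trans (le_of_eq ?_))
    rw [Finset.sum_const, Finset.card_univ, nsmul_eq_mul]
  have s6 : N * (c * ‖av H w‖) ≤ N * δ + M * n := by
    have h2 : ‖(N : ℂ) * (((p * (1 - p) : ℝ) * (ζ - 1)) * av H w)‖ = N * (c * ‖av H w‖) := by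
      rw [norm_mul, norm_mul, Complex.norm_real, Real.norm_of_nonneg hN0.le]
    have h3 : ‖(1 + p * (ζ - 1)) * ∑ e, S e‖ ≤ M * n := by
      rw [norm_mul]
      exact (mul_le_of_le_one_left (norm_nonneg _) hc2).trans s3
    have := norm_sub_norm_le ((N : ℂ) * (((p * (1 - p) : ℝ) * (ζ - 1)) * av H w))
      ((1 + p * (ζ - 1)) * ∑ e, S e)
    linarith
  have s7 : M * n ≤ N * (4 * M / n) := by
    calc M * n = (n : ℝ) ^ 2 / 4 * (4 * M / n) := by field_simp
      _ ≤ _ := mul_le_mul_of_nonneg_right hN1 (by positivity)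
  have s8 : c * ‖av H w‖ ≤ δ + 4 * M / n := by
    refine le_of_mul_le_mul_left ?_ hN0
    rw [mul_add]; linarith
  refine le_of_mul_le_mul_left ?_ hc0
  have : 2 * (|t| / n) = 2 * |t| / n := by ring
  rw [hδ] at s8
  linarith

/-- In the resonant case, switching an edge changes the character only through the fluctuation of the
codegree. -/
lemma dd_ww_sub_le (t m : ℝ) (hζ : ee (m * p ^ 2) = 1) {n : ℕ} (e : Edge n) (x : Config n) :
    ‖dd e (ww α h t m) x
      - (m * bb p e x + t / n : ℝ) * Complex.I * ww α h t m x‖ ≤ 3 * (m * bb p e x + t / n) ^ 2 ∧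
    ‖dd e (ww α h t m) x‖ ≤ |m * bb p e x + t / n| := by
  set θ := m * bb p e x + t / n with hθ
  set w : Config n → ℂ := ww α h t m with hw
  have hup : w (up e x) = w (dn e x) * ee θ := by
    rw [hw, ww_up (p := p), hζ, one_mul]
  have hdd : dd e w x = w (dn e x) * (ee θ - 1) := by rw [dd, hup]; ring
  refine ⟨?_, by rw [hdd, norm_mul, norm_ww, one_mul]; exact ee_sub_one_le _⟩
  have h1 : ‖dd e w x - θ * Complex.I * w (dn e x)‖ ≤ 2 * θ ^ 2 := by
    have : dd e w x - θ * Complex.I * w (dn e x) = w (dn e x) * (ee θ - 1 - θ * Complex.I) := by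
      rw [hdd]; ring
    rw [this, norm_mul, norm_ww, one_mul]
    exact ee_sub_one_sub_le _
  have h2 : ‖w (dn e x) - w x‖ ≤ |θ| := by
    rcases up_or_dn e x with ⟨-, hx⟩ | ⟨-, hx⟩
    · conv_lhs => enter [1, 2]; rw [← hx]
      rw [hup]
      have : w (dn e x) - w (dn e x) * ee θ = - (w (dn e x) * (ee θ - 1)) := by ring
      rw [this, norm_neg, norm_mul, norm_ww, one_mul]
      exact ee_sub_one_le _
    · rw [hx]; simp
  have h3 : dd e w x - θ * Complex.I * w x
      = (dd e w x - θ * Complex.I * w (dn e x)) + θ * Complex.I * (w (dn e x) - w x) := by ring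
  rw [h3]
  refine (norm_add_le _ _).trans ?_
  have h4 : ‖(θ * Complex.I * (w (dn e x) - w x) : ℂ)‖ ≤ θ ^ 2 := by
    rw [norm_mul, norm_mul, Complex.norm_I, mul_one, Complex.norm_real, Real.norm_eq_abs]
    calc |θ| * ‖w (dn e x) - w x‖ ≤ |θ| * |θ| :=
          mul_le_mul_of_nonneg_left h2 (abs_nonneg _)
      _ = θ ^ 2 := by rw [← sq, sq_abs]
  linarith

lemma res_edge (J : Iface α h p) (t m : ℝ) (hζ : ee (m * p ^ 2) = 1) {n : ℕ} (hn : 1 ≤ n)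
    (e : Edge n) (x : Config n) :
    ‖(sg (ham n α h) e x * (1 - sg (ham n α h) e x)) • dd e (fun y => bb p e y • ww α h t m y) x
      - ((p * (1 - p) * m : ℝ) * Complex.I) * (bb p e x ^ 2 • ww α h t m x)‖
      ≤ (|α| * |m| + |α| * |t| + 2 * m ^ 2 + 2 * t ^ 2 + |t|) * (|bb p e x| ^ 3 + |bb p e x| / n) := by
  have hp0 := J.pos
  have hp1 := J.lt_one
  have hn1 : (1 : ℝ) ≤ n := by exact_mod_cast hn
  have hn0 : (0 : ℝ) < n := by linarith
  set w : Config n → ℂ := ww α h t m with hw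
  set b := bb p e x with hb
  set s := sg (ham n α h) e x * (1 - sg (ham n α h) e x) with hs
  have hdd : dd e (fun y => bb p e y • w y) x = b • dd e w x := by
    simp only [dd, bb_up, bb_dn, smul_sub, hb]
  obtain ⟨h1, h2⟩ := dd_ww_sub_le (α := α) (h := h) t m hζ e x
  rw [← hb, ← hw] at h1 h2
  have h3 := sg_var_sub_le J e x
  rw [← hs, ← hb] at h3
  set θ := m * b + t / n with hθ
  rw [hdd]
  have split : s • b • dd e w x - ((p * (1 - p) * m : ℝ) * Complex.I) * (b ^ 2 • w x)
      = ((s - p * (1 - p)) * b) • dd e w x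
        + (p * (1 - p) * b) • (dd e w x - θ * Complex.I * w x)
        + (p * (1 - p) * b * (t / n) : ℝ) * Complex.I * w x := by
    simp only [Complex.real_smul, hθ]; push_cast; ring
  rw [split]
  have hpp : p * (1 - p) ≤ 1 / 4 := by nlinarith [sq_nonneg (p - 1 / 2)]
  have hpp0 : 0 ≤ p * (1 - p) := mul_nonneg hp0.le (by linarith)
  have hb1 : |b| ≤ 1 := bb_abs_le J e x
  have hb0 := abs_nonneg b
  set β := |b| with hβ
  have hβ2 : b ^ 2 = β ^ 2 := (sq_abs b).symm
  have hθa : |θ| ≤ |m| * β + |t| / n := by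
    refine (abs_add_le _ _).trans (le_of_eq ?_)
    rw [abs_mul, abs_div, Nat.abs_cast]
  have hθ2 : θ ^ 2 ≤ 2 * m ^ 2 * β ^ 2 + 2 * t ^ 2 / n := by
    have i1 : θ ^ 2 ≤ 2 * (m * b) ^ 2 + 2 * (t / n) ^ 2 := by
      rw [hθ]; nlinarith [sq_nonneg (m * b - t / n)]
    have i2 : (t / n) ^ 2 ≤ t ^ 2 / n := by
      rw [div_pow]; exact div_le_div_of_nonneg_left (sq_nonneg _) hn0 (by nlinarith)
    have i3 : (m * b) ^ 2 = m ^ 2 * β ^ 2 := by rw [mul_pow, hβ2]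
    rw [i3] at i1
    have : 2 * t ^ 2 / n = 2 * (t ^ 2 / n) := by ring
    linarith
  have n1 : ‖((s - p * (1 - p)) * b) • dd e w x‖ ≤ |α| / 4 * (|m| * β ^ 3 + |t| * (β / n)) := by
    rw [norm_smul, Real.norm_eq_abs, abs_mul]
    calc |s - p * (1 - p)| * |b| * ‖dd e w x‖
        ≤ (|α| / 4 * β * β) * (|m| * β + |t| / n) :=
          mul_le_mul (mul_le_mul_of_nonneg_right h3 hb0) (h2.trans hθa) (norm_nonneg _)
            (by positivity)
      _ = |α| / 4 * (|m| * β ^ 3 + |t| * (β / n) * β) := by ring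
      _ ≤ _ := by
          have : |t| * (β / n) * β ≤ |t| * (β / n) := mul_le_of_le_one_right (by positivity) hb1
          gcongr
  have n2 : ‖(p * (1 - p) * b) • (dd e w x - θ * Complex.I * w x)‖
      ≤ 1 / 4 * 3 * (2 * m ^ 2 * β ^ 3 + 2 * t ^ 2 * (β / n)) := by
    rw [norm_smul, Real.norm_eq_abs, abs_mul, abs_of_nonneg hpp0]
    calc p * (1 - p) * |b| * ‖dd e w x - θ * Complex.I * w x‖
        ≤ (1 / 4 * β) * (3 * (2 * m ^ 2 * β ^ 2 + 2 * t ^ 2 / n)) :=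
          mul_le_mul (mul_le_mul_of_nonneg_right hpp hb0) (h1.trans (by linarith)) (norm_nonneg _)
            (by positivity)
      _ = _ := by ring
  have n3 : ‖((p * (1 - p) * b * (t / n) : ℝ) * Complex.I * w x : ℂ)‖ ≤ 1 / 4 * |t| * (β / n) := by
    rw [norm_mul, norm_mul, Complex.norm_I, norm_ww, mul_one, mul_one, Complex.norm_real,
      Real.norm_eq_abs, abs_mul, abs_mul, abs_of_nonneg hpp0, abs_div, Nat.abs_cast]
    calc p * (1 - p) * |b| * (|t| / n) ≤ 1 / 4 * β * (|t| / n) := by gcongr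
      _ = _ := by ring
  refine (norm_add₃_le).trans ((add_le_add (add_le_add n1 n2) n3).trans ?_)
  set A := β ^ 3 with hA
  set D := β / n with hD
  have hA0 : 0 ≤ A := by positivity
  have hD0 : 0 ≤ D := by positivity
  have := mul_nonneg (mul_nonneg (abs_nonneg α) (abs_nonneg m)) hA0
  have := mul_nonneg (mul_nonneg (abs_nonneg α) (abs_nonneg m)) hD0
  have := mul_nonneg (mul_nonneg (abs_nonneg α) (abs_nonneg t)) hA0
  have := mul_nonneg (mul_nonneg (abs_nonneg α) (abs_nonneg t)) hD0
  have := mul_nonneg (sq_nonneg m) hA0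
  have := mul_nonneg (sq_nonneg m) hD0
  have := mul_nonneg (sq_nonneg t) hA0
  have := mul_nonneg (sq_nonneg t) hD0
  have := mul_nonneg (abs_nonneg t) hA0
  have := mul_nonneg (abs_nonneg t) hD0
  nlinarith

set_option maxHeartbeats 1000000 in
/-- The resonant case: testing `YY` against `w` yields `i m p (1 - p) ⟨∑ b_e² w⟩` up to an error,
where `∑ b_e²` concentrates around its mean, a quantity of order at least `n`, while `⟨|YY|⟩ = o(n)`. -/
lemma res (J : Iface α h p) (t m : ℝ) (hm : m ≠ 0) (hζ : ee (m * p ^ 2) = 1) {ε : ℝ} (hε : 0 < ε) :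
    ∀ᶠ n : ℕ in atTop, ‖av (ham n α h) (ww α h t m)‖ ≤ ε := by
  obtain ⟨η, hη, hB⟩ := exists_bb_sq J
  have hp0 := J.pos
  have hp1 := J.lt_one
  set K := |α| * |m| + |α| * |t| + 2 * m ^ 2 + 2 * t ^ 2 + |t| with hK
  have hK0 : 0 ≤ K := by positivity
  set c := p * (1 - p) * |m| with hc
  have hc0 : 0 < c := mul_pos (mul_pos hp0 (by linarith)) (abs_pos.2 hm)
  -- the final bound is `c ‖⟨w⟩‖ ≤ δ M`
  set M := K + (2 * K + 1 + c) * (4 / η) with hM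
  have hM0 : 0 < M := by positivity
  set δ := ε * c / M with hδ
  have hδ0 : 0 < δ := by positivity
  filter_upwards [hB, eventually_ge_atTop 2, av_bb J hδ0, conc_bb J hδ0,
    av_YY_sq J (show 0 < δ ^ 2 by positivity),
    clamp_cc J (fun y => (y - p ^ 2) ^ 2) (fun y => 2 * (y - p ^ 2))
      (fun y => by
        have := ((hasDerivAt_id y).sub_const (p ^ 2)).fun_pow 2
        refine this.congr_deriv ?_
        simp)
      (by fun_prop) (by simp) (show 0 < δ ^ 2 by positivity)] with n hB hn hbb hcb hYY hcl
  set H := ham n α h with hH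
  set w : Config n → ℂ := ww α h t m with hw
  have hn2 : (2 : ℝ) ≤ n := by exact_mod_cast hn
  have hn0 : (0 : ℝ) < n := by linarith
  set N : ℝ := ((Fintype.card (Edge n) : ℕ) : ℝ) with hN
  have hN1 : (n : ℝ) ^ 2 / 4 ≤ N := card_edge_ge hn
  have hN2 : N ≤ (n : ℝ) ^ 2 / 2 := card_edge_le n
  set B : Config n → ℝ := fun x => ∑ e, bb p e x ^ 2 with hBd
  set β := av H B with hβ
  have hβsum : β = ∑ e, av H (fun x => bb p e x ^ 2) := av_sum H _ _
  have hβ1 : η / 4 * n ≤ β := by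
    calc η / 4 * n = (n : ℝ) ^ 2 / 4 * (η / n) := by field_simp
      _ ≤ N * (η / n) := mul_le_mul_of_nonneg_right hN1 (by positivity)
      _ = ∑ _e : Edge n, η / n := by
          rw [Finset.sum_const, Finset.card_univ, nsmul_eq_mul]
      _ ≤ β := by rw [hβsum]; exact Finset.sum_le_sum fun e _ => hB e
  have hβ0 : 0 < β := lt_of_lt_of_le (by positivity) hβ1
  have hnβ : n ≤ 4 / η * β := by
    calc (n : ℝ) = 4 / η * (η / 4 * n) := by field_simp
      _ ≤ _ := mul_le_mul_of_nonneg_left hβ1 (by positivity)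
  -- the Glauber identity for `Y`
  have g1 : av H (fun x => YY α h p x • w x)
      = ∑ e, av H (fun x => (sg H e x * (1 - sg H e x)) • dd e (fun y => bb p e y • w y) x) := by
    rw [← Finset.sum_congr rfl fun e _ => glauber H e (fun y => bb p e y • w y), ← av_sum]
    refine av_congr H fun x => ?_
    simp only [YY, Finset.sum_smul, smul_smul, hH]
  have g2 : ((p * (1 - p) * m : ℝ) * Complex.I) * av H (fun x => B x • w x)
      = ∑ e, av H (fun x => ((p * (1 - p) * m : ℝ) * Complex.I) * (bb p e x ^ 2 • w x)) := by
    rw [← av_mulc, ← av_sum]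
    refine av_congr H fun x => ?_
    simp only [hBd, Finset.sum_smul, Finset.mul_sum]
  have hcube : ∀ e : Edge n, av H (fun x => |bb p e x| ^ 3)
      ≤ δ * av H (fun x => bb p e x ^ 2) + δ / n ^ 2 := by
    intro e
    have h1 := hcb e
    have h2 : av H (fun x => if δ < |bb p e x| then (1 : ℝ) else 0) ≤ δ / n ^ 2 := by
      rw [le_div_iff₀ (by positivity), mul_comm]; exact h1
    refine le_trans ?_ (add_le_add_right h2 _)
    rw [← av_mul, ← av_add]
    refine av_mono H fun x => ?_
    have hb1 : |bb p e x| ≤ 1 := bb_abs_le J e x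
    have hb0 := abs_nonneg (bb p e x)
    rw [← sq_abs (bb p e x)]
    split_ifs with hx
    · have : |bb p e x| ^ 3 ≤ 1 := pow_le_one₀ hb0 hb1
      have : 0 ≤ δ * |bb p e x| ^ 2 := by positivity
      linarith
    · push Not at hx
      have : |bb p e x| ^ 2 * |bb p e x| ≤ |bb p e x| ^ 2 * δ :=
        mul_le_mul_of_nonneg_left hx (by positivity)
      nlinarith
  have hedge : ∀ e : Edge n,
      ‖av H (fun x => (sg H e x * (1 - sg H e x)) • dd e (fun y => bb p e y • w y) x)
        - av H (fun x => ((p * (1 - p) * m : ℝ) * Complex.I) * (bb p e x ^ 2 • w x))‖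
      ≤ K * (δ * av H (fun x => bb p e x ^ 2) + δ / n ^ 2 + δ / n) := by
    intro e
    rw [← av_sub]
    refine (norm_av_le_of H fun x => res_edge J t m hζ (by omega) e x).trans ?_
    rw [av_mul, av_add]
    refine mul_le_mul_of_nonneg_left (add_le_add (hcube e) ?_) hK0
    have : av H (fun x => |bb p e x| / n) = (n : ℝ)⁻¹ * av H (fun x => |bb p e x|) := by
      rw [← av_mul]; exact av_congr H fun x => by ring
    rw [this, div_eq_inv_mul]
    exact mul_le_mul_of_nonneg_left (hbb e) (by positivity)
  have g3 : ‖av H (fun x => YY α h p x • w x)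
      - ((p * (1 - p) * m : ℝ) * Complex.I) * av H (fun x => B x • w x)‖
      ≤ K * (δ * β + 2 * (δ * n)) := by
    rw [g1, g2, ← Finset.sum_sub_distrib]
    refine (norm_sum_le _ _).trans ((Finset.sum_le_sum fun e _ => hedge e).trans ?_)
    rw [← Finset.mul_sum]
    refine mul_le_mul_of_nonneg_left ?_ hK0
    rw [Finset.sum_add_distrib, Finset.sum_add_distrib, ← Finset.mul_sum, ← hβsum,
      Finset.sum_const, Finset.sum_const, Finset.card_univ, nsmul_eq_mul, nsmul_eq_mul]
    have i1 : N * (δ / n ^ 2) ≤ δ * n := by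
      calc N * (δ / n ^ 2) ≤ (n : ℝ) ^ 2 / 2 * (δ / n ^ 2) :=
            mul_le_mul_of_nonneg_right hN2 (by positivity)
        _ = δ / 2 := by field_simp
        _ ≤ δ * n := by nlinarith
    have i2 : N * (δ / n) ≤ δ * n := by
      calc N * (δ / n) ≤ (n : ℝ) ^ 2 / 2 * (δ / n) :=
            mul_le_mul_of_nonneg_right hN2 (by positivity)
        _ = δ * n / 2 := by field_simp
        _ ≤ δ * n := by nlinarith [mul_pos hδ0 hn0]
    linarith
  have g4 : ‖av H (fun x => YY α h p x • w x)‖ ≤ δ * n := by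
    refine (norm_av_le_of (g := fun x => |YY α h p x|) _ fun x => ?_).trans ?_
    · rw [norm_smul, norm_ww, mul_one, Real.norm_eq_abs]
    · refine (av_abs_le_sqrt H fun x => YY α h p x).trans ?_
      refine (Real.sqrt_le_sqrt hYY).trans (le_of_eq ?_)
      rw [← mul_pow, Real.sqrt_sq (by positivity)]
  have g5 : ‖av H (fun x => B x • w x) - β • av H w‖ ≤ δ * n := by
    rw [← av_smul, ← av_sub]
    refine (norm_av_le_of (g := fun x => |B x - β|) _ fun x => ?_).trans ?_
    · rw [← sub_smul, norm_smul, norm_ww, mul_one, Real.norm_eq_abs]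
    · refine (av_abs_le_sqrt H fun x => B x - β).trans ?_
      rw [← vr_eq]
      refine (Real.sqrt_le_sqrt hcl).trans (le_of_eq ?_)
      rw [← mul_pow, Real.sqrt_sq (by positivity)]
  have g6 : c * ‖av H (fun x => B x • w x)‖ ≤ K * (δ * β + 2 * (δ * n)) + δ * n := by
    have h1 : ‖((p * (1 - p) * m : ℝ) * Complex.I) * av H (fun x => B x • w x)‖
        = c * ‖av H (fun x => B x • w x)‖ := by
      rw [norm_mul, norm_mul, Complex.norm_I, mul_one, Complex.norm_real, Real.norm_eq_abs,
        abs_mul, abs_of_pos (mul_pos hp0 (show (0:ℝ) < 1 - p by linarith))]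
    have := norm_sub_norm_le (((p * (1 - p) * m : ℝ) * Complex.I) * av H (fun x => B x • w x))
      (av H (fun x => YY α h p x • w x))
    rw [norm_sub_rev] at this
    linarith
  have g7 : β * ‖av H w‖ ≤ ‖av H (fun x => B x • w x)‖ + δ * n := by
    have h1 : ‖β • av H w‖ = β * ‖av H w‖ := by
      rw [norm_smul, Real.norm_of_nonneg hβ0.le]
    have := norm_sub_norm_le (β • av H w) (av H (fun x => B x • w x))
    rw [norm_sub_rev] at this
    linarith
  have g8 : β * (c * ‖av H w‖) ≤ β * (δ * M) := by
    have h1 : β * (c * ‖av H w‖) ≤ δ * (K * β + (2 * K + 1 + c) * n) := by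
      have := mul_le_mul_of_nonneg_left g7 hc0.le
      nlinarith
    refine h1.trans ?_
    have h2 : (2 * K + 1 + c) * n ≤ (2 * K + 1 + c) * (4 / η * β) :=
      mul_le_mul_of_nonneg_left hnβ (by positivity)
    have : δ * (K * β + (2 * K + 1 + c) * n) ≤ δ * (K * β + (2 * K + 1 + c) * (4 / η * β)) := by
      gcongr
    refine this.trans (le_of_eq ?_)
    rw [hM]; ring
  have g9 := le_of_mul_le_mul_left g8 hβ0
  have : δ * M = c * ε := by rw [hδ]; field_simp
  rw [this] at g9
  exact le_of_mul_le_mul_left g9 hc0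

lemma tendsto_ww (J : Iface α h p) (t m : ℝ) (hm : m ≠ 0) :
    Tendsto (fun n : ℕ => av (ham n α h) (ww α h t m)) atTop (𝓝 0) := by
  rw [Metric.tendsto_nhds]
  intro ε hε
  have : ∀ᶠ n : ℕ in atTop, ‖av (ham n α h) (ww α h t m)‖ ≤ ε / 2 := by
    by_cases hζ : ee (m * p ^ 2) = 1
    · exact res J t m hm hζ (half_pos hε)
    · exact nonres J t m hζ (half_pos hε)
  filter_upwards [this] with n hn
  rw [dist_zero_right]; linarith

end Equi

/-! ### The modified Hamiltonian -/

section Hat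
variable {α h p : ℝ}

lemma av_ofReal {n : ℕ} (H : Config n → ℝ) (f : Config n → ℝ) :
    av H (fun x => (f x : ℂ)) = (av H f : ℝ) := by
  simp only [av, smul_eq_mul, Complex.real_smul]
  push_cast; rfl

lemma fracTn_eq {n : ℕ} (x : Config n) : fracTn n x = Tr x / n - ⌊Tr x / n⌋₊ := by
  rw [fracTn, floorTn, Tr, Nat.floor_div_eq_div]

lemma fracTn_nonneg {n : ℕ} (x : Config n) : 0 ≤ fracTn n x := by
  rw [fracTn_eq, sub_nonneg]
  exact Nat.floor_le (div_nonneg (Nat.cast_nonneg _) (Nat.cast_nonneg _))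

lemma fracTn_lt_one {n : ℕ} (x : Config n) : fracTn n x < 1 := by
  rw [fracTn_eq, sub_lt_iff_lt_add']
  exact Nat.lt_floor_add_one _

lemma coe_fracTn {n : ℕ} (x : Config n) :
    ((Tr x / n : ℝ) : UnitAddCircle) = (fracTn n x : ℝ) := by
  rw [fracTn_eq, AddCircle.coe_sub, eq_comm, sub_eq_self, AddCircle.coe_eq_zero_iff]
  exact ⟨⌊Tr x / n⌋₊, by simp⟩

/-- Asymptotic equidistribution of `T / n` modulo one, jointly with the edge fluctuation:
Weyl's criterion together with density of trigonometric polynomials. -/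
lemma equi_circle (J : Iface α h p) (t : ℝ) (Q : C(UnitAddCircle, ℂ)) :
    Tendsto (fun n : ℕ => av (ham n α h) (fun x => Q ((Tr x / n : ℝ) : UnitAddCircle) * gg α h t x)
      - (∫ a in (0 : ℝ)..1, Q (a : UnitAddCircle)) * av (ham n α h) (gg α h t)) atTop (𝓝 0) := by
  have hitg : ∀ Q : C(UnitAddCircle, ℂ),
      IntervalIntegrable (fun a : ℝ => Q (a : UnitAddCircle)) volume 0 1 := fun Q =>
    (Q.continuous.comp (AddCircle.continuous_mk' 1)).intervalIntegrable _ _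
  have hspan : ∀ Q ∈ Submodule.span ℂ (Set.range (@fourier 1)),
      Tendsto (fun n : ℕ => av (ham n α h)
        (fun x => Q ((Tr x / n : ℝ) : UnitAddCircle) * gg α h t x)
      - (∫ a in (0 : ℝ)..1, Q (a : UnitAddCircle)) * av (ham n α h) (gg α h t)) atTop (𝓝 0) := by
    intro Q hQ
    induction hQ using Submodule.span_induction with
    | mem Q hQ =>
      obtain ⟨k, rfl⟩ := hQ
      by_cases hk : k = 0
      · subst hk; simp
      · have hm : 2 * Real.pi * k ≠ 0 :=
          mul_ne_zero (by positivity) (Int.cast_ne_zero.2 hk)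
        have hc : (2 * Real.pi * k * Complex.I : ℂ) ≠ 0 :=
          mul_ne_zero (by exact_mod_cast hm) Complex.I_ne_zero
        have hI : ∫ a in (0 : ℝ)..1, (fourier k (a : UnitAddCircle) : ℂ) = 0 := by
          have h1 : ∀ a : ℝ, (fourier k (a : UnitAddCircle) : ℂ)
              = Complex.exp ((2 * Real.pi * k * Complex.I) * a) := fun a => by
            rw [fourier_coe_apply]; congr 1; push_cast; ring
          simp only [h1]
          rw [integral_exp_mul_complex hc]
          have : Complex.exp (2 * Real.pi * k * Complex.I * ((1 : ℝ) : ℂ)) = 1 := by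
            rw [Complex.exp_eq_one_iff]; exact ⟨k, by push_cast; ring⟩
          rw [this]; simp
        rw [hI]
        simp only [zero_mul, sub_zero]
        refine (tendsto_ww J t (2 * Real.pi * k) hm).congr fun n => av_congr _ fun x => ?_
        rw [ww, mul_comm, ee, fourier_coe_apply]
        congr 2
        push_cast; ring
    | zero => simp [av_const]
    | add Q R _ _ hQ hR =>
      have := hQ.add hR
      rw [add_zero] at this
      refine this.congr fun n => ?_
      simp only [ContinuousMap.add_apply, add_mul, av_add]
      rw [intervalIntegral.integral_add (hitg Q) (hitg R)]
      ring
    | smul c Q _ hQ =>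
      have := hQ.const_mul c
      rw [mul_zero] at this
      refine this.congr fun n => ?_
      simp only [ContinuousMap.smul_apply, smul_eq_mul, mul_assoc, av_mulc,
        intervalIntegral.integral_const_mul]
      ring
  rw [Metric.tendsto_nhds]
  intro ε hε
  have hcl : Q ∈ closure (Submodule.span ℂ (Set.range (@fourier 1)) : Set C(UnitAddCircle, ℂ)) := by
    have h1 : Q ∈ (Submodule.span ℂ (Set.range (@fourier 1))).topologicalClosure := by
      rw [span_fourier_closure_eq_top]; trivial
    exact h1
  obtain ⟨R, hR, hd⟩ := Metric.mem_closure_iff.1 hcl (ε / 3) (by positivity)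
  have hRt := (Metric.tendsto_nhds.1 (hspan R hR)) (ε / 3) (by positivity)
  filter_upwards [hRt] with n hn
  rw [dist_zero_right] at hn ⊢
  have hpt : ∀ y, ‖(Q - R) y‖ ≤ ε / 3 := fun y =>
    ((Q - R).norm_coe_le_norm y).trans (by rw [← dist_eq_norm]; exact hd.le)
  set H := ham n α h with hH
  have e1 : ‖av H (fun x => (Q - R) ((Tr x / n : ℝ) : UnitAddCircle) * gg α h t x)‖ ≤ ε / 3 := by
    refine (norm_av_le_of (g := fun _ => ε / 3) _ fun x => ?_).trans (av_const H _).le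
    rw [norm_mul, norm_gg, mul_one]; exact hpt _
  have e2 : ‖∫ a in (0 : ℝ)..1, (Q - R) (a : UnitAddCircle)‖ ≤ ε / 3 := by
    have := intervalIntegral.norm_integral_le_of_norm_le_const (a := (0 : ℝ)) (b := 1)
      (f := fun a : ℝ => (Q - R) (a : UnitAddCircle)) (C := ε / 3) fun a _ => hpt _
    simpa using this
  have e3 : ‖av H (gg α h t)‖ ≤ 1 := by
    refine (norm_av_le_of (g := fun _ => 1) _ fun x => ?_).trans (av_const H _).le
    rw [norm_gg]
  have e4 : ∫ a in (0 : ℝ)..1, (Q - R) (a : UnitAddCircle)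
      = (∫ a in (0 : ℝ)..1, Q (a : UnitAddCircle)) - ∫ a in (0 : ℝ)..1, R (a : UnitAddCircle) :=
    intervalIntegral.integral_sub (hitg Q) (hitg R)
  have e5 : av H (fun x => (Q - R) ((Tr x / n : ℝ) : UnitAddCircle) * gg α h t x)
      = av H (fun x => Q ((Tr x / n : ℝ) : UnitAddCircle) * gg α h t x)
        - av H (fun x => R ((Tr x / n : ℝ) : UnitAddCircle) * gg α h t x) := by
    rw [← av_sub]; exact av_congr H fun x => by rw [ContinuousMap.sub_apply, sub_mul]
  have e6 : ‖(∫ a in (0 : ℝ)..1, (Q - R) (a : UnitAddCircle)) * av H (gg α h t)‖ ≤ ε / 3 := by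
    rw [norm_mul]
    exact (mul_le_of_le_one_right (norm_nonneg _) e3).trans e2
  have key : av H (fun x => Q ((Tr x / n : ℝ) : UnitAddCircle) * gg α h t x)
      - (∫ a in (0 : ℝ)..1, Q (a : UnitAddCircle)) * av H (gg α h t)
      = (av H (fun x => R ((Tr x / n : ℝ) : UnitAddCircle) * gg α h t x)
        - (∫ a in (0 : ℝ)..1, R (a : UnitAddCircle)) * av H (gg α h t))
        + av H (fun x => (Q - R) ((Tr x / n : ℝ) : UnitAddCircle) * gg α h t x)
        - (∫ a in (0 : ℝ)..1, (Q - R) (a : UnitAddCircle)) * av H (gg α h t) := by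
    rw [e4, e5]; ring
  rw [key]
  refine (norm_sub_le _ _).trans_lt ?_
  have := norm_add_le (av H (fun x => R ((Tr x / n : ℝ) : UnitAddCircle) * gg α h t x)
        - (∫ a in (0 : ℝ)..1, R (a : UnitAddCircle)) * av H (gg α h t))
    (av H (fun x => (Q - R) ((Tr x / n : ℝ) : UnitAddCircle) * gg α h t x))
  linarith

lemma equi_cont (J : Iface α h p) (t : ℝ) {q : ℝ → ℂ} (hq : Continuous q) (h01 : q 0 = q 1) :
    Tendsto (fun n : ℕ => av (ham n α h) (fun x => q (fracTn n x) * gg α h t x)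
      - (∫ a in (0 : ℝ)..1, q a) * av (ham n α h) (gg α h t)) atTop (𝓝 0) := by
  have hQc : Continuous (AddCircle.liftIco (1 : ℝ) 0 q) :=
    AddCircle.liftIco_zero_continuous h01 hq.continuousOn
  have := equi_circle J t ⟨_, hQc⟩
  have hI : ∫ a in (0 : ℝ)..1, AddCircle.liftIco (1 : ℝ) 0 q (a : UnitAddCircle)
      = ∫ a in (0 : ℝ)..1, q a := by
    refine intervalIntegral.integral_congr fun a ha => ?_
    rw [Set.uIcc_of_le zero_le_one] at ha
    rcases ha.2.lt_or_eq with h1 | h1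
    · exact AddCircle.liftIco_zero_coe_apply ⟨ha.1, h1⟩
    · subst h1
      rw [← h01, ← AddCircle.liftIco_zero_coe_apply (p := (1 : ℝ)) (f := q) (x := 0)
        ⟨le_rfl, one_pos⟩]
      congr 1
      have := AddCircle.coe_period (1 : ℝ)
      rw [this]; rfl
  simp only [ContinuousMap.coe_mk, hI, coe_fracTn] at this
  refine this.congr fun n => ?_
  congr 1
  refine av_congr _ fun x => ?_
  rw [AddCircle.liftIco_zero_coe_apply ⟨fracTn_nonneg x, fracTn_lt_one x⟩]

lemma gg_zero {n : ℕ} (x : Config n) : gg α h 0 x = 1 := by rw [gg, zero_mul, ee_zero]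

lemma equi_one (J : Iface α h p) {q : ℝ → ℂ} (hq : Continuous q) (h01 : q 0 = q 1) :
    Tendsto (fun n : ℕ => av (ham n α h) (fun x => q (fracTn n x))) atTop
      (𝓝 (∫ a in (0 : ℝ)..1, q a)) := by
  have := equi_cont J 0 hq h01
  simp only [gg_zero, mul_one] at this
  have h2 := this.add_const (∫ a in (0 : ℝ)..1, q a)
  simp only [zero_add] at h2
  have h3 : ∀ n : ℕ, av (ham n α h) (gg α h 0) = 1 := fun n => by
    rw [av_congr _ fun x => gg_zero x, av_const]
  simpa [h3] using h2

lemma norm_av_gg_le {n : ℕ} (H : Config n → ℝ) (t : ℝ) : ‖av H (gg α h t)‖ ≤ 1 := by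
  refine (norm_av_le_of (g := fun _ => 1) _ fun x => ?_).trans (av_const H _).le
  rw [norm_gg]

lemma decor_cont (J : Iface α h p) (t : ℝ) {q : ℝ → ℂ} (hq : Continuous q) (h01 : q 0 = q 1) :
    Tendsto (fun n : ℕ => av (ham n α h) (fun x => q (fracTn n x) * gg α h t x)
      - av (ham n α h) (fun x => q (fracTn n x)) * av (ham n α h) (gg α h t)) atTop (𝓝 0) := by
  have h1 := equi_cont J t hq h01
  have h2 := (equi_one J hq h01).sub_const (∫ a in (0 : ℝ)..1, q a)
  rw [sub_self] at h2
  have h3 : Tendsto (fun n : ℕ => (av (ham n α h) (fun x => q (fracTn n x))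
      - ∫ a in (0 : ℝ)..1, q a) * av (ham n α h) (gg α h t)) atTop (𝓝 0) := by
    refine squeeze_zero_norm (fun n => ?_) (tendsto_norm_zero.comp h2)
    rw [norm_mul]
    exact mul_le_of_le_one_right (norm_nonneg _) (norm_av_gg_le _ _)
  have h4 := h1.sub h3
  rw [sub_zero] at h4
  exact h4.congr fun n => by ring

/-- The weight `e^{-α{T/n}}` decorrelates from the edge fluctuation. It is a discontinuous function
on the circle; adding a multiple of `y^m` makes it continuous, and `y^m ≤ y^m + (1-y)^m` has
average tending to `2/(m+1)`. -/
lemma decor_weight (J : Iface α h p) (t : ℝ) :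
    Tendsto (fun n : ℕ => av (ham n α h) (fun x => Real.exp (-α * fracTn n x) • gg α h t x)
      - (av (ham n α h) (fun x => Real.exp (-α * fracTn n x)) : ℝ) * av (ham n α h) (gg α h t))
      atTop (𝓝 0) := by
  rw [Metric.tendsto_nhds]
  intro ε hε
  set κ := 1 - Real.exp (-α) with hκ
  obtain ⟨m, hm⟩ := exists_nat_gt (16 * (|κ| + 1) / ε)
  have hm0 : (0 : ℝ) < m := lt_of_le_of_lt (by positivity) hm
  have hm1 : m ≠ 0 := by rintro rfl; simp at hm0
  have hsmall : (|κ| + 1) * (2 * (2 / (m + 1))) < ε / 4 := by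
    have h1 : 16 * (|κ| + 1) < ε * m := by
      rw [div_lt_iff₀ hε] at hm; linarith
    rw [mul_div_assoc', mul_div_assoc', div_lt_iff₀ (by positivity)]
    linarith
  set τ : ℝ → ℝ := fun y => y ^ m + (1 - y) ^ m with hτ
  have hIτ : ∫ a in (0 : ℝ)..1, ((τ a : ℝ) : ℂ) = (2 / (m + 1) : ℝ) := by
    rw [intervalIntegral.integral_ofReal]
    congr 1
    simp only [hτ]
    rw [intervalIntegral.integral_add (Continuous.intervalIntegrable (by fun_prop) _ _)
      (Continuous.intervalIntegrable (by fun_prop) _ _),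
      intervalIntegral.integral_comp_sub_left (fun y => y ^ m) (1 : ℝ)]
    simp [integral_pow]
    ring
  have h1 := equi_one J (q := fun y => ((τ y : ℝ) : ℂ)) (by simp only [hτ]; fun_prop)
    (by simp [hτ, hm1])
  rw [hIτ] at h1
  have h2 := decor_cont J t (q := fun y => ((Real.exp (-α * y) + κ * y ^ m : ℝ) : ℂ))
    (by fun_prop) (by simp [hκ, hm1])
  have h1' := (Metric.tendsto_nhds.1 h1) (ε / (8 * (|κ| + 1))) (by positivity)
  have h2' := (Metric.tendsto_nhds.1 h2) (ε / 4) (by positivity)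
  filter_upwards [h1', h2'] with n hn1 hn2
  set H := ham n α h with hH
  rw [av_ofReal, dist_eq_norm, ← Complex.ofReal_sub, Complex.norm_real, Real.norm_eq_abs] at hn1
  have hτ1 : av H (fun x => τ (fracTn n x)) ≤ 2 / (m + 1) + ε / (8 * (|κ| + 1)) := by
    linarith [(abs_lt.1 hn1).2]
  have hy : av H (fun x => fracTn n x ^ m) ≤ 2 / (m + 1) + ε / (8 * (|κ| + 1)) := by
    refine (av_mono H fun x => ?_).trans hτ1
    have := fracTn_lt_one x
    simp only [hτ]
    have : 0 ≤ (1 - fracTn n x) ^ m := pow_nonneg (by linarith) _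
    linarith
  have hy0 : ∀ x : Config n, 0 ≤ fracTn n x ^ m := fun x => pow_nonneg (fracTn_nonneg x) _
  have b1 : ‖av H (fun x => ((fracTn n x ^ m : ℝ) : ℂ) * gg α h t x)‖
      ≤ av H (fun x => fracTn n x ^ m) := norm_av_le_of H fun x => by
    rw [norm_mul, norm_gg, mul_one, Complex.norm_real, Real.norm_of_nonneg (hy0 x)]
  have b2 : ‖(av H (fun x => fracTn n x ^ m) : ℝ) * av H (gg α h t)‖
      ≤ av H (fun x => fracTn n x ^ m) := by
    rw [norm_mul, Complex.norm_real, Real.norm_of_nonneg (av_nonneg H hy0)]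
    exact mul_le_of_le_one_right (av_nonneg H hy0) (norm_av_gg_le _ _)
  rw [dist_zero_right] at hn2 ⊢
  rw [av_ofReal] at hn2
  have e1 : av H (fun x => ((Real.exp (-α * fracTn n x) + κ * fracTn n x ^ m : ℝ) : ℂ) * gg α h t x)
      = av H (fun x => Real.exp (-α * fracTn n x) • gg α h t x)
        + κ * av H (fun x => ((fracTn n x ^ m : ℝ) : ℂ) * gg α h t x) := by
    rw [← av_mulc, ← av_add]
    refine av_congr H fun x => ?_
    rw [Complex.real_smul]; push_cast; ring
  have e2 : av H (fun x => Real.exp (-α * fracTn n x) + κ * fracTn n x ^ m)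
      = av H (fun x => Real.exp (-α * fracTn n x)) + κ * av H (fun x => fracTn n x ^ m) := by
    rw [av_add, av_mul]
  have key : av H (fun x => Real.exp (-α * fracTn n x) • gg α h t x)
      - (av H (fun x => Real.exp (-α * fracTn n x)) : ℝ) * av H (gg α h t)
      = (av H (fun x => ((Real.exp (-α * fracTn n x) + κ * fracTn n x ^ m : ℝ) : ℂ) * gg α h t x)
        - (av H (fun x => Real.exp (-α * fracTn n x) + κ * fracTn n x ^ m) : ℝ)
          * av H (gg α h t))
        - κ * (av H (fun x => ((fracTn n x ^ m : ℝ) : ℂ) * gg α h t x)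
          - (av H (fun x => fracTn n x ^ m) : ℝ) * av H (gg α h t)) := by
    rw [e1, e2]; push_cast; ring
  rw [key]
  refine (norm_sub_le _ _).trans_lt ?_
  have b3 : ‖(κ : ℂ) * (av H (fun x => ((fracTn n x ^ m : ℝ) : ℂ) * gg α h t x)
          - (av H (fun x => fracTn n x ^ m) : ℝ) * av H (gg α h t))‖
      ≤ (|κ| + 1) * (2 * (2 / (m + 1) + ε / (8 * (|κ| + 1)))) := by
    rw [norm_mul, Complex.norm_real, Real.norm_eq_abs]
    refine mul_le_mul (by linarith) ((norm_sub_le _ _).trans (by linarith)) (norm_nonneg _)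
      (by positivity)
  have b4 : (|κ| + 1) * (2 * (2 / (m + 1) + ε / (8 * (|κ| + 1))))
      = (|κ| + 1) * (2 * (2 / (m + 1))) + ε / 4 := by
    field_simp; ring
  linarith

lemma hamHat_eq {n : ℕ} : hamHat n α h = fun x => ham n α h x + -α * fracTn n x := by
  funext x; rw [hamHat, ham, fracTn]; ring

lemma weight_bounds {n : ℕ} (x : Config n) : Real.exp (-|α|) ≤ Real.exp (-α * fracTn n x) ∧
    Real.exp (-α * fracTn n x) ≤ Real.exp |α| := by
  have h0 := fracTn_nonneg x
  have h1 := (fracTn_lt_one x).le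
  have h2 : |(-α) * fracTn n x| ≤ |α| := by
    rw [abs_mul, abs_neg, abs_of_nonneg h0]
    exact mul_le_of_le_one_right (abs_nonneg _) h1
  exact ⟨Real.exp_le_exp.2 (abs_le.1 h2).1, Real.exp_le_exp.2 (abs_le.1 h2).2⟩

/-- The density of the modified Gibbs measure with respect to the original one is bounded. -/
lemma av_hat_le {n : ℕ} {f : Config n → ℝ} (hf : ∀ x, 0 ≤ f x) :
    av (hamHat n α h) f ≤ Real.exp (2 * |α|) * av (ham n α h) f := by
  rw [hamHat_eq, av_tilt, smul_eq_mul]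
  have h1 : Real.exp (-|α|) ≤ av (ham n α h) (fun x => Real.exp (-α * fracTn n x)) :=
    const_le_av _ fun x => (weight_bounds x).1
  have h2 : av (ham n α h) (fun x => Real.exp (-α * fracTn n x) • f x)
      ≤ Real.exp |α| * av (ham n α h) f := by
    rw [← av_mul]
    exact av_mono _ fun x => mul_le_mul_of_nonneg_right (weight_bounds x).2 (hf x)
  have h3 : (av (ham n α h) (fun x => Real.exp (-α * fracTn n x)))⁻¹ ≤ Real.exp |α| := by
    rw [← neg_neg |α|, Real.exp_neg (-|α|)]
    exact inv_anti₀ (Real.exp_pos _) h1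
  calc _ ≤ Real.exp |α| * (Real.exp |α| * av (ham n α h) f) :=
        mul_le_mul h3 h2 (av_nonneg _ fun x => smul_nonneg (Real.exp_pos _).le (hf x))
          (Real.exp_pos _).le
    _ = _ := by rw [← mul_assoc, ← Real.exp_add]; ring_nf

/-- The edge count has the same Gaussian limit under the modified Gibbs measure. -/
lemma tendsto_cf_hat (J : Iface α h p) (t : ℝ) :
    Tendsto (fun n : ℕ => av (hamHat n α h) (gg α h t)) atTop
      (𝓝 (Real.exp (-(p * (1 - p) / (2 * (1 - 2 * α * p ^ 2 * (1 - p)))) * t ^ 2 / 2) : ℝ)) := by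
  have h1 := decor_weight J t
  have h2 : Tendsto (fun n : ℕ => av (hamHat n α h) (gg α h t) - av (ham n α h) (gg α h t))
      atTop (𝓝 0) := by
    have h3 := (tendsto_norm_zero.comp h1).const_mul (Real.exp |α|)
    rw [mul_zero] at h3
    refine squeeze_zero_norm (fun n => ?_) h3
    set c := av (ham n α h) (fun x => Real.exp (-α * fracTn n x)) with hc
    have hc1 : Real.exp (-|α|) ≤ c := const_le_av _ fun x => (weight_bounds x).1
    have hc0 : 0 < c := lt_of_lt_of_le (Real.exp_pos _) hc1
    have e1 : av (hamHat n α h) (gg α h t) - av (ham n α h) (gg α h t)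
        = c⁻¹ • (av (ham n α h) (fun x => Real.exp (-α * fracTn n x) • gg α h t x)
          - (c : ℂ) * av (ham n α h) (gg α h t)) := by
      rw [hamHat_eq, av_tilt, ← hc, smul_sub, ← Complex.real_smul, smul_smul,
        inv_mul_cancel₀ hc0.ne', one_smul]
    rw [e1, norm_smul, Real.norm_of_nonneg (inv_nonneg.2 hc0.le)]
    refine mul_le_mul_of_nonneg_right ?_ (norm_nonneg _)
    rw [← neg_neg |α|, Real.exp_neg (-|α|)]
    exact inv_anti₀ (Real.exp_pos _) hc1
  have := h2.add (tendsto_cf J t)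
  rw [zero_add] at this
  exact this.congr fun n => by ring

end Hat

/-! ### Convergence in distribution -/

section Final
variable {α h p : ℝ}

lemma expHat_eq {n : ℕ} (f : Config n → ℝ) : expHat n α h f = av (hamHat n α h) f := by
  rw [expHat, av, div_eq_inv_mul, Zhat, pf, smul_eq_mul]
  congr 1
  exact Finset.sum_congr rfl fun x _ => by rw [smul_eq_mul, mul_comm]

/-- The centred edge count at scale `n`. -/
def XX (α h : ℝ) {n : ℕ} (x : Config n) : ℝ := (tot x - av (ham n α h) tot) / n

/-- The part of `T / n` that is not explained by the edge count, centred. -/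
def rho (α h p : ℝ) {n : ℕ} (x : Config n) : ℝ :=
  (Tr x / n - p ^ 2 * tot x) - av (ham n α h) (fun y => Tr y / n - p ^ 2 * tot y)

/-- The imaginary part of the characteristic function at a small `t` is `t ⟨X⟩` up to `O(t²)`. -/
lemma tendsto_av_XX (J : Iface α h p) :
    Tendsto (fun n : ℕ => av (hamHat n α h) (XX α h)) atTop (𝓝 0) := by
  obtain ⟨C, hC, hV⟩ := vr_tot J
  set K := Real.exp (2 * |α|) * C with hK
  have hK0 : 0 < K := by positivity
  rw [Metric.tendsto_nhds]
  intro ε hε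
  set t := ε / (8 * K) with ht
  have ht0 : 0 < t := by positivity
  have hcf := (Complex.continuous_im.tendsto _).comp (tendsto_cf_hat J t)
  rw [Complex.ofReal_im] at hcf
  have hcf' := (Metric.tendsto_nhds.1 hcf) (t * (ε / 2)) (by positivity)
  filter_upwards [hV, hcf', eventually_gt_atTop 0] with n hV hn hn0
  have hn0' : (0 : ℝ) < n := Nat.cast_pos.2 hn0
  rw [dist_zero_right, Real.norm_eq_abs] at hn ⊢
  set A := hamHat n α h with hA
  simp only [Function.comp_apply] at hn
  have hX2 : av A (fun x => XX α h x ^ 2) ≤ K := by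
    refine (av_hat_le fun x => sq_nonneg _).trans ?_
    rw [hK]
    refine mul_le_mul_of_nonneg_left ?_ (Real.exp_pos _).le
    have : ∀ x : Config n, XX α h x ^ 2 = ((n : ℝ) ^ 2)⁻¹ * (tot x - av (ham n α h) tot) ^ 2 :=
      fun x => by rw [XX]; field_simp
    rw [av_congr _ this, av_mul, ← vr_eq, inv_mul_le_iff₀ (by positivity)]
    linarith
  have e1 : ‖av A (fun x => gg α h t x - 1 - (t * XX α h x : ℝ) * Complex.I)‖ ≤ 2 * t ^ 2 * K := by
    refine (norm_av_le_of (g := fun x => 2 * t ^ 2 * XX α h x ^ 2) _ fun x => ?_).trans ?_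
    · refine (ee_sub_one_sub_le (t * XX α h x)).trans (le_of_eq ?_)
      ring
    · rw [av_mul]; exact mul_le_mul_of_nonneg_left hX2 (by positivity)
  have e2 : av A (fun x => gg α h t x - 1 - (t * XX α h x : ℝ) * Complex.I)
      = av A (gg α h t) - 1 - (t * av A (XX α h) : ℝ) * Complex.I := by
    rw [av_sub, av_sub, av_const, av_congr A fun x => mul_comm _ Complex.I, av_mulc, av_ofReal,
      av_mul, mul_comm]
  rw [e2] at e1
  have e3 := (Complex.abs_im_le_norm _).trans e1
  simp only [Complex.sub_im, Complex.one_im, sub_zero, Complex.mul_im, Complex.ofReal_re,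
    Complex.I_im, mul_one, Complex.ofReal_im, Complex.I_re, mul_zero, add_zero] at e3
  have e4 : |t * av A (XX α h)| < t * (ε / 2) + 2 * t ^ 2 * K := by
    have := abs_sub_abs_le_abs_sub (t * av A (XX α h)) (av A (gg α h t)).im
    rw [abs_sub_comm] at this
    linarith
  rw [abs_mul, abs_of_pos ht0] at e4
  have e5 : t * (ε / 2) + 2 * t ^ 2 * K = t * (ε * (3 / 4)) := by
    rw [ht]; field_simp; ring
  rw [e5] at e4
  have := lt_of_mul_lt_mul_left e4 ht0.le
  linarith

lemma av_hat_rho (J : Iface α h p) {ε : ℝ} (hε : 0 < ε) : ∀ᶠ n : ℕ in atTop,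
    av (hamHat n α h) (fun x => |rho α h p x|) ≤ ε * n := by
  set E := Real.exp (2 * |α|) with hE
  have hE0 : 0 < E := Real.exp_pos _
  filter_upwards [vr_tri J (show 0 < (ε / E) ^ 2 by positivity)] with n hn
  refine (av_hat_le fun x => abs_nonneg _).trans ?_
  rw [← hE]
  have h1 : av (ham n α h) (fun x => |rho α h p x|) ≤ ε / E * n := by
    refine (av_abs_le_sqrt _ fun x => rho α h p x).trans ?_
    simp only [rho]
    rw [← vr_eq]
    refine (Real.sqrt_le_sqrt hn).trans (le_of_eq ?_)
    rw [← mul_pow, Real.sqrt_sq (by positivity)]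
  calc E * av (ham n α h) (fun x => |rho α h p x|) ≤ E * (ε / E * n) :=
        mul_le_mul_of_nonneg_left h1 hE0.le
    _ = ε * n := by field_simp

/-- `W_n` is a multiple of the recentred edge fluctuation plus a negligible remainder. -/
lemma Wre_eq {n : ℕ} (hn : 0 < n) (x : Config n) : Wre n α h x
    = Real.sqrt 6 * p ^ 2 * XX α h x - Real.sqrt 6 * (p ^ 2 * av (hamHat n α h) (XX α h))
      + Real.sqrt 6 * ((rho α h p x - av (hamHat n α h) (rho α h p)) / n) := by
  have hn' : (n : ℝ) ≠ 0 := Nat.cast_ne_zero.2 hn.ne'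
  set A := hamHat n α h with hA
  set c := av (ham n α h) tot with hc
  set d := av (ham n α h) (fun y => Tr y / n - p ^ 2 * tot y) with hd
  have h1 : ∀ y : Config n, (triangleCount n y : ℝ) / n
      = p ^ 2 * n * XX α h y + (rho α h p y + (d + p ^ 2 * c)) := fun y => by
    rw [rho, XX, ← hc, ← hd, Tr]; field_simp; ring
  rw [Wre, expHat_eq, av_congr A h1, h1 x, av_add, av_add, av_const, av_mul]
  field_simp
  ring

lemma ee_sub_le (a b : ℝ) : ‖ee a - ee b‖ ≤ |a - b| := by
  have : ee a - ee b = ee b * (ee (a - b) - 1) := by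
    rw [mul_sub, ← ee_add, mul_one]; congr 2; ring
  rw [this, norm_mul, norm_ee, one_mul]; exact ee_sub_one_le _

/-- Pointwise convergence of the characteristic functions. -/
lemma tendsto_cf_Wre (J : Iface α h p) (s : ℝ) :
    Tendsto (fun n : ℕ => av (hamHat n α h) (fun x => ee (s * Wre n α h x))) atTop
      (𝓝 (Real.exp (-(p * (1 - p) / (2 * (1 - 2 * α * p ^ 2 * (1 - p))))
        * (s * (Real.sqrt 6 * p ^ 2)) ^ 2 / 2) : ℝ)) := by
  have h1 := tendsto_cf_hat J (s * (Real.sqrt 6 * p ^ 2))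
  have h2 : Tendsto (fun n : ℕ => av (hamHat n α h) (fun x => ee (s * Wre n α h x))
      - av (hamHat n α h) (gg α h (s * (Real.sqrt 6 * p ^ 2)))) atTop (𝓝 0) := by
    rw [Metric.tendsto_nhds]
    intro ε hε
    set M := |s| * Real.sqrt 6 * (p ^ 2 + 2) + 1 with hM
    have hM0 : 0 < M := by positivity
    have hX := (Metric.tendsto_nhds.1 (tendsto_av_XX J)) (ε / M) (by positivity)
    filter_upwards [hX, av_hat_rho J (show 0 < ε / M by positivity), eventually_gt_atTop 0]
      with n hX hr hn
    have hn0 : (0 : ℝ) < n := Nat.cast_pos.2 hn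
    set A := hamHat n α h with hA
    rw [dist_zero_right, Real.norm_eq_abs] at hX
    rw [dist_zero_right, ← av_sub]
    set r := av A (fun x => |rho α h p x|) with hrd
    have hpt : ∀ x : Config n, ‖ee (s * Wre n α h x) - gg α h (s * (Real.sqrt 6 * p ^ 2)) x‖
        ≤ |s| * Real.sqrt 6 * (p ^ 2 * |av A (XX α h)| + r / n)
          + |s| * Real.sqrt 6 / n * |rho α h p x| := by
      intro x
      refine (ee_sub_le _ _).trans ?_
      have e1 : s * Wre n α h x - s * (Real.sqrt 6 * p ^ 2) * ((tot x - av (ham n α h) tot) / n)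
          = (s * Real.sqrt 6) * (-(p ^ 2 * av A (XX α h))
            + (-(av A (rho α h p) / n) + rho α h p x / n)) := by
        rw [Wre_eq (p := p) hn, ← hA, XX]; ring
      rw [e1, abs_mul, abs_mul, abs_of_nonneg (Real.sqrt_nonneg 6)]
      have e2 : |-(p ^ 2 * av A (XX α h)) + (-(av A (rho α h p) / n) + rho α h p x / n)|
          ≤ p ^ 2 * |av A (XX α h)| + r / n + |rho α h p x| / n := by
        refine (abs_add_le _ _).trans ?_
        have := abs_add_le (-(av A (rho α h p) / n)) (rho α h p x / n)
        rw [abs_neg, abs_div, abs_div, Nat.abs_cast] at this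
        rw [abs_neg, abs_mul, abs_of_nonneg (sq_nonneg p)]
        have h3 : |av A (rho α h p)| / n ≤ r / n :=
          div_le_div_of_nonneg_right (abs_av_le A _) hn0.le
        linarith
      calc |s| * Real.sqrt 6 * _ ≤ |s| * Real.sqrt 6 * _ :=
            mul_le_mul_of_nonneg_left e2 (by positivity)
        _ = _ := by ring
    refine (norm_av_le_of A hpt).trans_lt ?_
    rw [av_add, av_const, av_mul, ← hrd]
    have hrn : r / n ≤ ε / M := by rw [div_le_iff₀ hn0]; exact hr
    calc |s| * Real.sqrt 6 * (p ^ 2 * |av A (XX α h)| + r / n) + |s| * Real.sqrt 6 / n * r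
        = |s| * Real.sqrt 6 * (p ^ 2 * |av A (XX α h)| + 2 * (r / n)) := by ring
      _ ≤ |s| * Real.sqrt 6 * (p ^ 2 * (ε / M) + 2 * (ε / M)) := by gcongr
      _ = (M - 1) * (ε / M) := by rw [hM]; ring
      _ < M * (ε / M) := mul_lt_mul_of_pos_right (by linarith) (by positivity)
      _ = ε := by field_simp
  have := h2.add h1
  rw [zero_add] at this
  exact this.congr fun n => by ring

/-- The law of `W_n` under the modified Gibbs measure. -/
def lawW (n : ℕ) (α h : ℝ) : Measure ℝ :=
  ∑ x : Config n, ENNReal.ofReal ((pf (hamHat n α h))⁻¹ * Real.exp (hamHat n α h x)) •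
    Measure.dirac (Wre n α h x)

lemma integral_lawW {G : Type*} [NormedAddCommGroup G] [NormedSpace ℝ G] [CompleteSpace G] (n : ℕ)
    (f : ℝ → G) :
    ∫ y, f y ∂(lawW n α h) = av (hamHat n α h) (fun x => f (Wre n α h x)) := by
  have hpos : ∀ x, 0 ≤ (pf (hamHat n α h))⁻¹ * Real.exp (hamHat n α h x) := fun x =>
    mul_nonneg (inv_nonneg.2 (pf_pos _).le) (Real.exp_pos _).le
  rw [lawW, integral_finsetSum_measure fun x _ =>
    (integrable_dirac (by simp)).smul_measure ENNReal.ofReal_ne_top, av, Finset.smul_sum]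
  refine Finset.sum_congr rfl fun x _ => ?_
  rw [integral_smul_measure, integral_dirac, ENNReal.toReal_ofReal (hpos x), smul_smul]

instance isProb_lawW (n : ℕ) : IsProbabilityMeasure (lawW n α h) := by
  constructor
  have hpos : ∀ x, 0 ≤ (pf (hamHat n α h))⁻¹ * Real.exp (hamHat n α h x) := fun x =>
    mul_nonneg (inv_nonneg.2 (pf_pos _).le) (Real.exp_pos _).le
  simp only [lawW, Measure.coe_finsetSum, Finset.sum_apply, Measure.smul_apply, measure_univ,
    smul_eq_mul, mul_one]
  rw [← ENNReal.ofReal_sum_of_nonneg fun x _ => hpos x, ← Finset.mul_sum]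
  change ENNReal.ofReal ((pf (hamHat n α h))⁻¹ * pf (hamHat n α h)) = 1
  rw [inv_mul_cancel₀ (pf_pos _).ne', ENNReal.ofReal_one]

/-- Lévy's continuity theorem, with the limiting variance expressed through `D = ∂_α u*`. -/
lemma clt (J : Iface α h p) {D : ℝ} (hD : (1 - 2 * α * p ^ 2 * (1 - p)) * D = p ^ 3 * (1 - p))
    (f : BoundedContinuousFunction ℝ ℝ) :
    Tendsto (fun n : ℕ => expHat n α h (fun x => f (Wre n α h x))) atTop
      (𝓝 (∫ y, f y ∂(gaussianReal 0 (Real.toNNReal (3 * p ^ 2 * D))))) := by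
  have hp0 := J.pos
  have hp1 := J.lt_one
  have hl := J.lam
  set l := 1 - 2 * α * p ^ 2 * (1 - p) with hld
  have hDe : D = p ^ 3 * (1 - p) / l := by rw [eq_div_iff hl.ne']; linarith
  have hv0 : 0 ≤ 3 * p ^ 2 * D := by
    rw [hDe]
    have : 0 < 1 - p := by linarith
    positivity
  set v := Real.toNNReal (3 * p ^ 2 * D) with hv
  let μ : ℕ → ProbabilityMeasure ℝ := fun n => ⟨lawW n α h, isProb_lawW n⟩
  let ν : ProbabilityMeasure ℝ := ⟨gaussianReal 0 v, inferInstance⟩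
  have key : Tendsto μ atTop (𝓝 ν) := by
    rw [ProbabilityMeasure.tendsto_iff_tendsto_charFun]
    intro s
    have h1 := tendsto_cf_Wre J s
    have h2 : charFun (ν : Measure ℝ) s = (Real.exp (-(p * (1 - p) / (2 * l))
        * (s * (Real.sqrt 6 * p ^ 2)) ^ 2 / 2) : ℝ) := by
      change charFun (gaussianReal 0 v) s = _
      rw [charFun_gaussianReal, Complex.ofReal_exp]
      congr 1
      have h6 : Real.sqrt 6 ^ 2 = 6 := Real.sq_sqrt (by norm_num)
      have h3 : -(p * (1 - p) / (2 * l)) * (s * (Real.sqrt 6 * p ^ 2)) ^ 2 / 2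
          = -((v : ℝ) * s ^ 2 / 2) := by
        rw [hv, Real.coe_toNNReal _ hv0, hDe, mul_pow, mul_pow, h6]
        field_simp
        ring
      rw [h3]; push_cast; simp
    rw [h2]
    refine h1.congr fun n => ?_
    change _ = charFun (lawW n α h) s
    rw [charFun_apply_real, integral_lawW]
    refine av_congr _ fun x => ?_
    rw [ee]; congr 1; push_cast; ring
  have h2 := (ProbabilityMeasure.tendsto_iff_forall_integral_tendsto.1 key) f
  refine h2.congr fun n => ?_
  change ∫ y, f y ∂(lawW n α h) = _
  rw [integral_lawW, expHat_eq]

end Final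

end TriCLT

theorem triangle_CLT
    (α h : ℝ) (hα : α > -2)
    (U : Set (ℝ × ℝ)) (hUopen : IsOpen U) (hmemU : (α, h) ∈ U)
    (ustar : ℝ × ℝ → ℝ) (hC1 : ContDiffOn ℝ 1 ustar U)
    (hrange : ∀ p ∈ U, ustar p ∈ Set.Ioo (0 : ℝ) 1)
    (hmax : ∀ p ∈ U, ∀ u ∈ Set.Icc (0 : ℝ) 1, phiET p.1 p.2 u ≤ phiET p.1 p.2 (ustar p))
    (huniq : ∀ p ∈ U, ∀ u ∈ Set.Icc (0 : ℝ) 1,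
      (∀ w ∈ Set.Icc (0 : ℝ) 1, phiET p.1 p.2 w ≤ phiET p.1 p.2 u) → u = ustar p)
    (hanal : AnalyticOnNhd ℝ (fun p : ℝ × ℝ => freeEnergy p.1 p.2) U) :
    ∀ f : BoundedContinuousFunction ℝ ℝ,
      Tendsto (fun n : ℕ => expHat n α h (fun x => f (Wre n α h x))) atTop
        (𝓝 (∫ y, f y ∂ gaussianReal 0
          (Real.toNNReal (3 * ustar (α, h) ^ 2 * deriv (fun a => ustar (a, h)) α)))) := by
  intro f
  obtain ⟨hcr, -, hD⟩ := TriCLT.crit_facts hUopen hmemU hC1 hrange hmax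
  have hr := hrange _ hmemU
  have J : TriCLT.Iface α h (ustar (α, h)) := by
    rcases le_or_gt 0 α with h0 | h0
    · exact TriCLT.iface_nonneg h0 hUopen hmemU hC1 hrange hmax
    · exact TriCLT.iface_neg hα h0 hr.1 hr.2 hcr
  exact TriCLT.clt J hD f
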